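/- Let $K$ be an algebraically closed field and let $\Gamma$ be a finite tree with a cyclic ordering of the edges around every vertex (a Brauer tree of multiplicity one). The vertices of its Brauer quiver $Q$ are the edges of $\Gamma$; for every edge $i$ and every end point $v$ of $i$ there is an arrow $i\to j$, where $j$ is the successor of $i$ in the cyclic ordering around $v$ (a loop if $v$ has valency one). So $Q$ is a union of oriented cycles, one for each vertex of $\Gamma$, and each vertex of $Q$ lies on two of them. Let $A=KQ/I$ be the basic Brauer tree algebra, where $I$ is generated by the products of two consecutive arrows from different cycles and, for each vertex $x$ of $Q$, by the difference of the two closed paths at $x$ that run once around the two cycles through $x$. Modules are left modules, and in $KQ$ the product $ab$ means first $a$, then $b$. An $A$-cycle is a maximal ordered set of nonrepeating arrows of $Q$ such that the product in $A$ of any two neighbouring arrows is nonzero. Let $T=(P_0\xrightarrow{f}P_1)$, with $P_0=\bigoplus_{i\in I}Ae_i$ in degree $0$ and $P_1=\bigoplus_{j\in J}Ae_j$ in degree $1$ for sets $I,J$ of vertices of $Q$, be an indecomposable partial tilting complex (that is, $\mathrm{Hom}_{D^b(A)}(T,T[k])=0$ for all $k\ne0$) that is the minimal projective presentation of an indecomposable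 non-projective module which is not isomorphic to $P/\mathrm{soc}(P)$ for any indecomposable projective module $P$. The diagram of $T$ is the following part of $Q$: the vertices in $I\cup J$, called marked, together with, for all $i\in I$, $j\in J$ such that the component $Ae_i\to Ae_j$ of $f$ is nonzero, all arrows and vertices of the path from $i$ to $j$ inside the oriented cycle of $Q$ containing both. For two such complexes $T_i,T_j$ the restriction of $T_i$ with respect to $T_j$ is the intersection of the diagram of $T_i$ with the union of those $A$-cycles that contain at least one marked vertex of $T_j$. Let $T_i$ and $T_j$ be two such complexes. Assume that the intersection of their diagrams (the common vertices and common arrows) has exactly one connected component, that it contains more than one vertex, and that one end point of it is a sink and the other one is a source (an end point is a vertex incident to exactly one arrow of the intersection). Then $$\mathrm{Hom}_{D^b(A)}(T_i,T_j[-1])=0=\mathrm{Hom}_{D^b(A)}(T_j,T_i[-1])$$ if and only if the restriction of $T_i$ with respect to $T_j$ is contained in the restriction of $T_j$ with respect to $T_i$, or vice versa. -/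

import Mathlib

open CategoryTheory CategoryTheory.Limits

universe u v w

/-- A Brauer tree (of multiplicity one) on the vertex set `V`: a tree together with a cyclic
ordering of the edges around every vertex.  A dart `d` is an edge `d.edge` seen from its
end point `d.fst`; `next d` is the edge following `d.edge` in the cyclic ordering around `d.fst`. -/
structure BrauerTree (V : Type v) where
  graph : SimpleGraph V
  isTree : graph.IsTree
  next : Equiv.Perm graph.Dart
  next_fst : ∀ d, (next d).fst = d.fst
  next_sameCycle : ∀ d d' : graph.Dart, d.fst = d'.fst → next.SameCycle d d'

namespace BrauerTree

variable {V : Type v} (Γ : BrauerTree V)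

/-- The edges of `Γ`, which are the vertices of the Brauer quiver. -/
abbrev Edge : Type v := Γ.graph.edgeSet

/-- The arrows of the Brauer quiver: every dart `d` gives the arrow from `d.edge` to
`(next d).edge`.  (At an end vertex of the tree this is a loop.) -/
abbrev Arrow : Type v := Γ.graph.Dart

/-- The source of an arrow of the Brauer quiver. -/
def src (d : Γ.Arrow) : Γ.Edge := ⟨d.edge, d.edge_mem⟩

/-- The target of an arrow of the Brauer quiver. -/
def tgt (d : Γ.Arrow) : Γ.Edge := Γ.src (Γ.next d)

noncomputable instance [Fintype V] : Fintype Γ.Edge := Fintype.ofFinite _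

/-! ### The algebra -/

/-- Generators of the path algebra of the Brauer quiver: trivial paths and arrows. -/
inductive Gen : Type v
  | idem (x : Γ.Edge) : Gen
  | arrow (d : Γ.Arrow) : Gen

variable (K : Type u) [Field K]

/-- The trivial path at `x`, in the free algebra. -/
def freeIdem (x : Γ.Edge) : FreeAlgebra K Γ.Gen := FreeAlgebra.ι K (Gen.idem x)

/-- The arrow `d`, in the free algebra. -/
def freeArrow (d : Γ.Arrow) : FreeAlgebra K Γ.Gen := FreeAlgebra.ι K (Gen.arrow d)

/-- The closed path starting with the arrow `d` and running once through the oriented cycle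
of the quiver that contains `d`. -/
noncomputable def freeCycle (d : Γ.Arrow) : FreeAlgebra K Γ.Gen :=
  ((List.range (Function.minimalPeriod Γ.next d)).map
    fun k => Γ.freeArrow K (Γ.next^[k] d)).prod

/-- The defining relations of the Brauer tree algebra.  The first five families are those of
the path algebra of the quiver (a product `a * b` means first `a`, then `b`); the last two are
the Brauer relations: the product of two consecutive arrows of different cycles is zero, and the
two cycles through a vertex of the quiver are equal.  The two arrows starting at a given vertex
of the quiver are `d` and `d.symm`. -/
inductive Rel [Fintype V] : FreeAlgebra K Γ.Gen → FreeAlgebra K Γ.Gen → Prop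
  | idem_mul_self (x : Γ.Edge) : Rel (Γ.freeIdem K x * Γ.freeIdem K x) (Γ.freeIdem K x)
  | idem_mul_idem (x y : Γ.Edge) (h : x ≠ y) : Rel (Γ.freeIdem K x * Γ.freeIdem K y) 0
  | sum_idem : Rel (∑ x : Γ.Edge, Γ.freeIdem K x) 1
  | src_mul (d : Γ.Arrow) : Rel (Γ.freeIdem K (Γ.src d) * Γ.freeArrow K d) (Γ.freeArrow K d)
  | mul_tgt (d : Γ.Arrow) : Rel (Γ.freeArrow K d * Γ.freeIdem K (Γ.tgt d)) (Γ.freeArrow K d)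
  | arrow_mul_arrow (d : Γ.Arrow) :
      Rel (Γ.freeArrow K d * Γ.freeArrow K (Γ.next d).symm) 0
  | cycle_eq (d : Γ.Arrow) : Rel (Γ.freeCycle K d) (Γ.freeCycle K d.symm)

variable [Fintype V]

/-- The basic Brauer tree algebra `A` of `Γ` over `K`, with multiplicity one. -/
def Alg : Type (max u v) := RingQuot (Γ.Rel K)

noncomputable instance : Ring (Γ.Alg K) := inferInstanceAs (Ring (RingQuot (Γ.Rel K)))

noncomputable instance : Algebra K (Γ.Alg K) := inferInstanceAs (Algebra K (RingQuot (Γ.Rel K)))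

/-- The quotient map onto `A`. -/
noncomputable def toAlg : FreeAlgebra K Γ.Gen →ₐ[K] Γ.Alg K := RingQuot.mkAlgHom K (Γ.Rel K)

/-- The primitive idempotent of `A` at a vertex of the quiver. -/
noncomputable def idem (x : Γ.Edge) : Γ.Alg K := Γ.toAlg K (Γ.freeIdem K x)

/-- The class of an arrow in `A`. -/
noncomputable def arrow (d : Γ.Arrow) : Γ.Alg K := Γ.toAlg K (Γ.freeArrow K d)

/-- The indecomposable projective left module `A e_x`. -/
noncomputable abbrev proj (x : Γ.Edge) : Submodule (Γ.Alg K) (Γ.Alg K) :=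
  Submodule.span (Γ.Alg K) {Γ.idem K x}

/-- A nonempty ordered set of nonrepeating arrows such that the product of any two
neighbouring arrows is nonzero in `A`. -/
def IsArrowChain (l : List Γ.Arrow) : Prop :=
  l ≠ [] ∧ l.Nodup ∧ l.IsChain fun d d' => Γ.arrow K d * Γ.arrow K d' ≠ 0

/-- An `A`-cycle: a maximal ordered set of nonrepeating arrows such that the product of any two
neighbouring arrows is nonzero. -/
def IsACycle (l : List Γ.Arrow) : Prop :=
  Γ.IsArrowChain K l ∧ ∀ l', Γ.IsArrowChain K l' → l <:+: l' → l' = l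

/-! ### Subquivers -/

/-- A set of vertices and a set of arrows of the Brauer quiver. -/
@[ext] structure Part where
  verts : Set Γ.Edge
  arrows : Set Γ.Arrow

namespace Part

variable {Γ}

/-- `D` is contained in `D'`. -/
def Contained (D D' : Γ.Part) : Prop := D.verts ⊆ D'.verts ∧ D.arrows ⊆ D'.arrows

/-- The intersection of `D` and `D'`. -/
def inter (D D' : Γ.Part) : Γ.Part := ⟨D.verts ∩ D'.verts, D.arrows ∩ D'.arrows⟩

/-- `D` has exactly one connected component: it is nonempty and any two of its vertices are
joined by an unoriented path of arrows of `D`. -/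
def Connected (D : Γ.Part) : Prop :=
  D.verts.Nonempty ∧ ∀ x ∈ D.verts, ∀ y ∈ D.verts,
    Relation.EqvGen (fun x y => ∃ d ∈ D.arrows, Γ.src d = x ∧ Γ.tgt d = y) x y

/-- `x` is an end point of `D` (it is incident to exactly one arrow of `D`) and a sink. -/
def IsSinkEnd (D : Γ.Part) (x : Γ.Edge) : Prop :=
  ∃ d ∈ D.arrows, Γ.tgt d = x ∧ ∀ d' ∈ D.arrows, Γ.src d' = x ∨ Γ.tgt d' = x → d' = d

/-- `x` is an end point of `D` (it is incident to exactly one arrow of `D`) and a source. -/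
def IsSourceEnd (D : Γ.Part) (x : Γ.Edge) : Prop :=
  ∃ d ∈ D.arrows, Γ.src d = x ∧ ∀ d' ∈ D.arrows, Γ.src d' = x ∨ Γ.tgt d' = x → d' = d

end Part

/-- The arrow `d` lies on the path of the quiver from `x` to `y`, that is, on the path that
starts at `x`, stays in one oriented cycle of the quiver and stops when it first reaches `y`.
For `x ≠ y` there is at most one such path, since `Γ` is a tree. -/
def OnPath (x y : Γ.Edge) (d : Γ.Arrow) : Prop :=
  ∃ (d₀ : Γ.Arrow) (r : ℕ), Γ.src d₀ = x ∧ Γ.src (Γ.next^[r] d₀) = y ∧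
    (∀ k < r, Γ.src (Γ.next^[k] d₀) ≠ y) ∧ ∃ k < r, d = Γ.next^[k] d₀

end BrauerTree

/-! ### Modules -/

/-- The socle of a module: the sum of its simple submodules. -/
def moduleSocle (R : Type u) (M : Type v) [Ring R] [AddCommGroup M] [Module R M] :
    Submodule R M :=
  sSup {N | IsSimpleModule R N}

/-- A submodule `N` of `M` is superfluous if `N + L = M` only for `L = M`. -/
def Submodule.IsSuperfluous {R : Type u} {M : Type v} [Ring R] [AddCommGroup M] [Module R M]
    (N : Submodule R M) : Prop :=
  ∀ L : Submodule R M, N ⊔ L = ⊤ → L = ⊤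

/-! ### Two-term complexes and their diagrams -/

/-- A two-term complex `P₀ → P₁` of projective modules over the Brauer tree algebra of `Γ`, where
`P₀ = ⨁_{i ∈ I} A e_i` and `P₁ = ⨁_{j ∈ J} A e_j` for sets `I`, `J` of vertices of the quiver. -/
structure TwoTermComplex {V : Type v} [Fintype V] (Γ : BrauerTree V) (K : Type u) [Field K] where
  I : Finset Γ.Edge
  J : Finset Γ.Edge
  f : (∀ i : I, Γ.proj K i) →ₗ[Γ.Alg K] (∀ j : J, Γ.proj K j)

namespace TwoTermComplex

variable {V : Type v} [Fintype V] {Γ : BrauerTree V} {K : Type u} [Field K]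

/-- The cochain complex with `P₀` in degree `0` and `P₁` in degree `1`. -/
noncomputable def complex (T : TwoTermComplex Γ K) :
    CochainComplex (ModuleCat.{max u v} (Γ.Alg K)) ℤ :=
  HomologicalComplex.double (ModuleCat.ofHom T.f)
    (show (ComplexShape.up ℤ).Rel 0 1 from rfl)

/-- The complex as an object of the derived category. -/
noncomputable def obj (T : TwoTermComplex Γ K)
    [HasDerivedCategory.{w} (ModuleCat.{max u v} (Γ.Alg K))] :
    DerivedCategory (ModuleCat.{max u v} (Γ.Alg K)) :=
  DerivedCategory.Q.obj T.complex

/-- `Hom(S, T[k]) = 0` in the derived category. -/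
def HomZero (S T : TwoTermComplex Γ K) (k : ℤ)
    [HasDerivedCategory.{w} (ModuleCat.{max u v} (Γ.Alg K))] : Prop :=
  ∀ g : S.obj ⟶ T.obj⟦k⟧, g = 0

/-- `T` is an indecomposable partial tilting complex. -/
def IsIndecPartialTilting (T : TwoTermComplex Γ K)
    [HasDerivedCategory.{w} (ModuleCat.{max u v} (Γ.Alg K))] : Prop :=
  Indecomposable T.obj ∧ ∀ k : ℤ, k ≠ 0 → T.HomZero T k

/-- The module presented by `T`, namely the cokernel of `P₀ → P₁`. -/
abbrev Cok (T : TwoTermComplex Γ K) : Type (max u v) :=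
  (∀ j : T.J, Γ.proj K j) ⧸ LinearMap.range T.f

/-- `T` is the minimal projective presentation of its cokernel `M`: both `P₁ → M` and
`P₀ → Im f = Ker (P₁ → M)` are projective covers. -/
def IsMinimal (T : TwoTermComplex Γ K) : Prop :=
  (LinearMap.range T.f).IsSuperfluous ∧ (LinearMap.ker T.f).IsSuperfluous

/-- `T` is the minimal projective presentation of an indecomposable non-projective module which
is not isomorphic to `P / soc P` for any indecomposable projective module `P`. -/
def IsPresentation (T : TwoTermComplex Γ K) : Prop :=
  T.IsMinimal ∧
  Indecomposable (ModuleCat.of (Γ.Alg K) T.Cok) ∧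
  ¬ Module.Projective (Γ.Alg K) T.Cok ∧
  ∀ P : ModuleCat.{max u v} (Γ.Alg K), Indecomposable P → Module.Projective (Γ.Alg K) P →
    IsEmpty (T.Cok ≃ₗ[Γ.Alg K] (P ⧸ moduleSocle (Γ.Alg K) P))

open scoped Classical in
/-- The component `A e_i → A e_j` of the differential. -/
noncomputable def comp (T : TwoTermComplex Γ K) (i : T.I) (j : T.J) :
    Γ.proj K i →ₗ[Γ.Alg K] Γ.proj K j :=
  LinearMap.proj j ∘ₗ T.f ∘ₗ LinearMap.single (Γ.Alg K) (fun i : T.I => Γ.proj K i) i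

/-- The marked vertices of the diagram of `T`. -/
def marked (T : TwoTermComplex Γ K) : Set Γ.Edge := {x | x ∈ T.I ∨ x ∈ T.J}

/-- The arrows of the diagram of `T`: those on the path from `i ∈ I` to `j ∈ J`, whenever the
differential has a nonzero component from `A e_i` to `A e_j`. -/
def diagramArrows (T : TwoTermComplex Γ K) : Set Γ.Arrow :=
  {d | ∃ (i : T.I) (j : T.J), T.comp i j ≠ 0 ∧ Γ.OnPath i j d}

/-- The diagram of `T` on the quiver of `A`. -/
def diagram (T : TwoTermComplex Γ K) : Γ.Part where
  verts := T.marked ∪ {x | ∃ d ∈ T.diagramArrows, Γ.src d = x ∨ Γ.tgt d = x}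
  arrows := T.diagramArrows

/-- The restriction of `S` with respect to `T`: the intersection of the diagram of `S` with the
union of the `A`-cycles that contain at least one marked vertex of `T`. -/
def restriction (S T : TwoTermComplex Γ K) : Γ.Part where
  verts := {x | x ∈ S.diagram.verts ∧ ∃ l, Γ.IsACycle K l ∧
    (∃ d ∈ l, Γ.src d ∈ T.marked) ∧ ∃ d ∈ l, Γ.src d = x}
  arrows := {a | a ∈ S.diagram.arrows ∧ ∃ l, Γ.IsACycle K l ∧
    (∃ d ∈ l, Γ.src d ∈ T.marked) ∧ a ∈ l}

end TwoTermComplex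

/-!
A morphism from `S` to `T` shifted by `-1` is a matrix over the algebra which is annihilated by both
differentials. Partial tilting and indecomposability of the cokernel force the marked edges of a
complex to be the consecutive edges of a path in the tree, alternately sinks and sources, with a
nonzero component of the differential at every turn.

For two such paths, vanishing is decided at the vertices of the tree common to both. At such a
vertex a morphism is obstructed when the arc of `T` is placed suitably with respect to that of `S`
in the cyclic order. An obstructed vertex makes an entry vanish, and this propagates along the
common edges to the whole matrix; if no vertex is obstructed, then there are more solutions at the
vertices than conditions at the common edges, hence a nonzero morphism. Containment of the
restrictions is a condition of the same kind, also read off vertex by vertex. Where the diagrams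
agree nothing is contributed, so only the two ends of the intersection matter; and at a sink end
and a source end the two comparisons are opposite.
-/

/-! ### Morphisms between two-term complexes of projective objects -/

namespace TwoTerm

open CochainComplex.HomComplex

variable {C : Type u} [Category.{v} C] [Abelian C]

lemma homZero_iff_mem_coboundaries [HasDerivedCategory.{w} C] (X Y : CochainComplex C ℤ)
    [X.IsKProjective] (k : ℤ) :
    (∀ g : DerivedCategory.Q.obj X ⟶ (DerivedCategory.Q.obj Y)⟦k⟧, g = 0) ↔
      ∀ z : Cocycle X Y k, z ∈ coboundaries X Y k := by
  let e := Iso.homCongr ((DerivedCategory.quotientCompQhIso C).app X)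
    ((DerivedCategory.quotientCompQhIso C).app (Y⟦k⟧) ≪≫
      (DerivedCategory.Q.commShiftIso k).app Y)
  have he : Function.Bijective fun z : CohomologyClass X Y k ↦
      e (DerivedCategory.Qh.map z.toHom) :=
    e.bijective.comp ((CochainComplex.IsKProjective.Qh_map_bijective X _).comp
      (CohomologyClass.toHom_bijective X Y k))
  have he₀ : e (DerivedCategory.Qh.map (0 : CohomologyClass X Y k).toHom) = 0 := by
    simp [e, Iso.homCongr]
  refine he.surjective.forall.trans <| CohomologyClass.mk_surjective.forall.trans <|
    forall_congr' fun z ↦ ?_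
  rw [← CohomologyClass.mk_eq_zero_iff, ← he₀]
  exact he.injective.eq_iff

/-- The two-term cochain complex in degrees `0` and `1`. -/
noncomputable abbrev cx {X₀ X₁ : C} (f : X₀ ⟶ X₁) : CochainComplex C ℤ :=
  HomologicalComplex.double f (show (ComplexShape.up ℤ).Rel 0 1 from rfl)

variable {X₀ X₁ Y₀ Y₁ : C} (f : X₀ ⟶ X₁) (g : Y₀ ⟶ Y₁)

lemma isZero_cx_X {n : ℤ} (h₀ : n ≠ 0) (h₁ : n ≠ 1) : IsZero ((cx f).X n) :=
  HomologicalComplex.isZero_double_X f _ n h₀ h₁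

instance isKProjective_cx [Projective X₀] [Projective X₁] : (cx f).IsKProjective := by
  have : (cx f).IsStrictlyLE 1 := by
    rw [CochainComplex.isStrictlyLE_iff]
    exact fun i hi ↦ isZero_cx_X f (by lia) (by lia)
  have hproj (n : ℤ) : Projective ((cx f).X n) := by
    by_cases h₀ : n = 0
    · subst h₀
      exact Projective.of_iso (HomologicalComplex.doubleXIso₀ f _).symm inferInstance
    by_cases h₁ : n = 1
    · subst h₁
      exact Projective.of_iso (HomologicalComplex.doubleXIso₁ f _ (by lia)).symm inferInstance
    · exact Projective.of_iso (isZero_cx_X f h₀ h₁).isoZero.symm inferInstance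
  exact CochainComplex.isKProjective_of_projective _ 1

/-- The isomorphism of the term of degree `0` of `cx f` with `X₀`. -/
noncomputable abbrev iso₀ : (cx f).X 0 ≅ X₀ := HomologicalComplex.doubleXIso₀ f _

/-- The isomorphism of the term of degree `1` of `cx f` with `X₁`. -/
noncomputable abbrev iso₁ : (cx f).X 1 ≅ X₁ := HomologicalComplex.doubleXIso₁ f _ (by lia)

lemma cx_d : (cx f).d 0 1 = (iso₀ f).hom ≫ f ≫ (iso₁ f).inv :=
  HomologicalComplex.double_d f _ (by lia)

lemma cochain_neg_one_ext {z z' : Cochain (cx f) (cx g) (-1)}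
    (h : z.v 1 0 (by lia) = z'.v 1 0 (by lia)) : z = z' := by
  ext p q hpq
  by_cases hp : p = 1
  · obtain rfl := hp
    obtain rfl : q = 0 := by lia
    exact h
  by_cases hp₀ : p = 0
  · exact (isZero_cx_X g (by lia) (by lia)).eq_of_tgt _ _
  · exact (isZero_cx_X f hp₀ hp).eq_of_src _ _

lemma cochain_neg_two_eq_zero (z : Cochain (cx f) (cx g) (-2)) : z = 0 := by
  ext p q hpq
  by_cases hp : p = 0 ∨ p = 1
  · exact (isZero_cx_X g (by lia) (by lia)).eq_of_tgt _ _
  · exact (isZero_cx_X f (by lia) (by lia)).eq_of_src _ _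

lemma cochain_zero_ext {z z' : Cochain (cx f) (cx g) 0}
    (h₀ : z.v 0 0 (by lia) = z'.v 0 0 (by lia)) (h₁ : z.v 1 1 (by lia) = z'.v 1 1 (by lia)) :
    z = z' := by
  ext p
  by_cases hp₀ : p = 0
  · exact hp₀ ▸ h₀
  by_cases hp₁ : p = 1
  · exact hp₁ ▸ h₁
  · exact (isZero_cx_X f hp₀ hp₁).eq_of_src _ _

lemma δ_neg_one_eq_zero_iff (z : Cochain (cx f) (cx g) (-1)) :
    δ (-1) 0 z = 0 ↔
      (cx f).d 0 1 ≫ z.v 1 0 (by lia) = 0 ∧ z.v 1 0 (by lia) ≫ (cx g).d 0 1 = 0 := by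
  have h₀ : (δ (-1) 0 z).v 0 0 (by lia) = (cx f).d 0 1 ≫ z.v 1 0 (by lia) := by
    rw [δ_v (-1) 0 (by lia) z 0 0 (by lia) (-1) 1 (by lia) (by lia),
      (isZero_cx_X g (by lia) (by lia)).eq_of_tgt (z.v 0 (-1) _) 0]
    simp
  have h₁ : (δ (-1) 0 z).v 1 1 (by lia) = z.v 1 0 (by lia) ≫ (cx g).d 0 1 := by
    rw [δ_v (-1) 0 (by lia) z 1 1 (by lia) 0 2 (by lia) (by lia),
      (isZero_cx_X f (by lia) (by lia)).eq_of_src (z.v 2 1 _) 0]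
    simp
  rw [← h₀, ← h₁]
  exact ⟨fun h ↦ by simp [h], fun h ↦ cochain_zero_ext f g (by simp [h.1]) (by simp [h.2])⟩

lemma homZero_neg_one_iff [HasDerivedCategory.{w} C] [Projective X₀] [Projective X₁] :
    (∀ h : DerivedCategory.Q.obj (cx f) ⟶ (DerivedCategory.Q.obj (cx g))⟦(-1 : ℤ)⟧, h = 0) ↔
      ∀ φ : X₁ ⟶ Y₀, φ ≫ g = 0 → f ≫ φ = 0 → φ = 0 := by
  rw [homZero_iff_mem_coboundaries]
  constructor
  · intro h φ hφg hfφ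
    let z : Cochain (cx f) (cx g) (-1) :=
      Cochain.single ((iso₁ f).hom ≫ φ ≫ (iso₀ g).inv) (-1)
    have hz : z.v 1 0 (by lia) = (iso₁ f).hom ≫ φ ≫ (iso₀ g).inv := Cochain.single_v _ _ _
    have hδ : δ (-1) 0 z = 0 := by
      rw [δ_neg_one_eq_zero_iff, hz, cx_d, cx_d]
      simp [reassoc_of% hφg, reassoc_of% hfφ]
    obtain ⟨w, hw⟩ := (mem_coboundaries_iff _ (-2) (by lia)).1 (h (.mk z 0 (by lia) hδ))
    have hz₀ : z = 0 := by simpa [cochain_neg_two_eq_zero f g w] using hw.symm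
    simpa [hz₀] using hz.symm
  · intro h z
    have hz : (z : Cochain (cx f) (cx g) (-1)) = 0 := by
      refine cochain_neg_one_ext f g ?_
      obtain ⟨hf, hg⟩ := (δ_neg_one_eq_zero_iff f g _).1 (z.δ_eq_zero 0)
      have hφ := h ((iso₁ f).inv ≫ z.1.v 1 0 (by lia) ≫ (iso₀ g).hom)
        (by rw [← cancel_epi (iso₁ f).hom, ← cancel_mono (iso₁ g).inv]; simpa [cx_d] using hg)
        (by rw [← cancel_epi (iso₀ f).hom, ← cancel_mono (iso₀ g).inv]; simpa [cx_d] using hf)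
      simpa using hφ
    rw [show z = 0 from Cocycle.ext hz]
    exact zero_mem _

lemma exists_homotopy_of_homZero_one [HasDerivedCategory.{w} C] [Projective X₀] [Projective X₁]
    (h : ∀ h : DerivedCategory.Q.obj (cx f) ⟶ (DerivedCategory.Q.obj (cx f))⟦(1 : ℤ)⟧, h = 0)
    (φ : X₀ ⟶ X₁) : ∃ (h₀ : X₀ ⟶ X₀) (h₁ : X₁ ⟶ X₁), φ = h₀ ≫ f + f ≫ h₁ := by
  rw [homZero_iff_mem_coboundaries] at h
  let z : Cochain (cx f) (cx f) 1 := Cochain.single ((iso₀ f).hom ≫ φ ≫ (iso₁ f).inv) 1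
  have hz : z.v 0 1 (by lia) = (iso₀ f).hom ≫ φ ≫ (iso₁ f).inv := Cochain.single_v _ _ _
  have hδ : δ 1 2 z = 0 := by
    ext p q hpq
    by_cases hp : p = 0 ∨ p = 1
    · exact (isZero_cx_X f (by lia) (by lia)).eq_of_tgt _ _
    · exact (isZero_cx_X f (by lia) (by lia)).eq_of_src _ _
  obtain ⟨w, hw⟩ := (mem_coboundaries_iff _ 0 (by lia)).1 (h (.mk z 2 (by lia) hδ))
  have hv : (δ 0 1 w).v 0 1 (by lia) = (iso₀ f).hom ≫ φ ≫ (iso₁ f).inv := hw ▸ hz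
  rw [δ_zero_cochain_v, cx_d] at hv
  refine ⟨(iso₀ f).inv ≫ w.v 0 0 (by lia) ≫ (iso₀ f).hom,
    -((iso₁ f).inv ≫ w.v 1 1 (by lia) ≫ (iso₁ f).hom), ?_⟩
  rw [← cancel_epi (iso₀ f).hom, ← cancel_mono (iso₁ f).inv, Category.assoc, ← hv]
  simp [sub_eq_add_neg]

end TwoTerm
/-! ### The cyclic orderings -/

namespace BrauerTree

variable {V : Type v} (Γ : BrauerTree V)

lemma iterate_next_fst (d : Γ.Arrow) (k : ℕ) : (Γ.next^[k] d).fst = d.fst := by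
  induction k with
  | zero => rfl
  | succ k ih => rw [Function.iterate_succ_apply', Γ.next_fst, ih]

lemma src_eq_src_iff {a b : Γ.Arrow} : Γ.src a = Γ.src b ↔ a = b ∨ a = b.symm := by
  rw [src, src, Subtype.mk.injEq, SimpleGraph.dart_edge_eq_iff]

lemma src_symm (a : Γ.Arrow) : Γ.src a.symm = Γ.src a :=
  Γ.src_eq_src_iff.2 (.inr rfl)

lemma eq_of_src_eq {a b : Γ.Arrow} (h : Γ.src a = Γ.src b) (h' : a.fst = b.fst) : a = b := by
  rcases Γ.src_eq_src_iff.1 h with h | rfl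
  · exact h
  · exact absurd h'.symm b.fst_ne_snd

lemma symm_fst_ne (a : Γ.Arrow) : a.symm.fst ≠ a.fst := fun h ↦ a.fst_ne_snd h.symm

lemma ne_symm (a : Γ.Arrow) : a ≠ a.symm := fun h ↦ Γ.symm_fst_ne a (by rw [← h])

lemma exists_src_eq (x : Γ.Edge) : ∃ d : Γ.Arrow, Γ.src d = x := by
  obtain ⟨x, hx⟩ := x
  induction x using Sym2.ind with
  | _ a b => exact ⟨⟨(a, b), hx⟩, rfl⟩

/-- The vertex `v` of the tree is an end point of the edge `x`. -/
def Inc (v : V) (x : Γ.Edge) : Prop := v ∈ x.1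

lemma inc_iff {v : V} {x : Γ.Edge} : Γ.Inc v x ↔ ∃ d : Γ.Arrow, d.fst = v ∧ Γ.src d = x := by
  constructor
  · intro h
    obtain ⟨d, rfl⟩ := Γ.exists_src_eq x
    rcases Sym2.mem_iff.1 (show v ∈ s(d.fst, d.snd) from h) with h | h
    · exact ⟨d, h.symm, rfl⟩
    · exact ⟨d.symm, h.symm, Γ.src_symm d⟩
  · rintro ⟨d, rfl, rfl⟩
    exact Sym2.mem_mk_left _ _

lemma inc_fst (d : Γ.Arrow) : Γ.Inc d.fst (Γ.src d) := Γ.inc_iff.2 ⟨d, rfl, rfl⟩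

lemma inc_tgt (d : Γ.Arrow) : Γ.Inc d.fst (Γ.tgt d) :=
  Γ.inc_iff.2 ⟨Γ.next d, Γ.next_fst d, rfl⟩

lemma inc_src_iff {d : Γ.Arrow} {v : V} : Γ.Inc v (Γ.src d) ↔ v = d.fst ∨ v = d.snd :=
  Sym2.mem_iff

/-- The number of arrows of the oriented cycle through `d`. -/
noncomputable def per (d : Γ.Arrow) : ℕ := Function.minimalPeriod Γ.next d

lemma iterate_per (d : Γ.Arrow) : Γ.next^[Γ.per d] d = d := Function.iterate_minimalPeriod

variable [Finite V]

instance : Finite Γ.Arrow :=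
  Finite.of_injective (fun d : Γ.Arrow ↦ d.toProd) fun _ _ ↦ SimpleGraph.Dart.ext _ _

lemma per_pos (d : Γ.Arrow) : 0 < Γ.per d :=
  Function.minimalPeriod_pos_of_mem_periodicPts
    (Function.Injective.mem_periodicPts Γ.next.injective d)

lemma exists_iterate_eq {a b : Γ.Arrow} (h : a.fst = b.fst) :
    ∃ k < Γ.per a, Γ.next^[k] a = b := by
  obtain ⟨k, hk⟩ := (Γ.next_sameCycle a b h).exists_nat_pow_eq
  refine ⟨k % Γ.per a, Nat.mod_lt _ (Γ.per_pos a), ?_⟩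
  rw [per, Function.iterate_mod_minimalPeriod_eq, ← hk, Equiv.Perm.iterate_eq_pow]

lemma per_eq {a b : Γ.Arrow} (h : a.fst = b.fst) : Γ.per a = Γ.per b := by
  obtain ⟨k, _, rfl⟩ := Γ.exists_iterate_eq h
  exact (Function.minimalPeriod_apply_iterate
    (Function.Injective.mem_periodicPts Γ.next.injective a) k).symm

/-- The number of steps from `a` to `b` along the oriented cycle of the quiver. -/
noncomputable def gap (a b : Γ.Arrow) : ℕ := sInf {k | Γ.next^[k] a = b}

lemma iterate_gap {a b : Γ.Arrow} (h : a.fst = b.fst) : Γ.next^[Γ.gap a b] a = b := by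
  obtain ⟨k, _, hk⟩ := Γ.exists_iterate_eq h
  exact Nat.sInf_mem (s := {k | Γ.next^[k] a = b}) ⟨k, hk⟩

lemma gap_lt_per {a b : Γ.Arrow} (h : a.fst = b.fst) : Γ.gap a b < Γ.per a := by
  obtain ⟨k, hk, hk'⟩ := Γ.exists_iterate_eq h
  exact lt_of_le_of_lt (Nat.sInf_le hk') hk

lemma gap_iterate (a : Γ.Arrow) (k : ℕ) : Γ.gap a (Γ.next^[k] a) = k % Γ.per a := by
  have h : a.fst = (Γ.next^[k] a).fst := (Γ.iterate_next_fst a k).symm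
  refine (Function.iterate_eq_iterate_iff_of_lt_minimalPeriod
    (Γ.gap_lt_per h) (Nat.mod_lt _ (Γ.per_pos a))).1 ?_
  rw [Γ.iterate_gap h]
  exact (Function.iterate_mod_minimalPeriod_eq).symm

lemma gap_self (a : Γ.Arrow) : Γ.gap a a = 0 := by
  simpa using Γ.gap_iterate a 0

lemma gap_eq_zero {a b : Γ.Arrow} (h : a.fst = b.fst) : Γ.gap a b = 0 ↔ a = b := by
  constructor
  · intro h0
    simpa [h0] using Γ.iterate_gap h
  · rintro rfl
    exact Γ.gap_self a

lemma gap_inj {a b c : Γ.Arrow} (hb : a.fst = b.fst) (hc : a.fst = c.fst)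
    (h : Γ.gap a b = Γ.gap a c) : b = c := by
  rw [← Γ.iterate_gap hb, ← Γ.iterate_gap hc, h]

lemma gap_add_gap {a b c : Γ.Arrow} (hab : a.fst = b.fst) (hbc : b.fst = c.fst) :
    Γ.gap a b + Γ.gap b c = Γ.gap a c ∨ Γ.gap a b + Γ.gap b c = Γ.gap a c + Γ.per a := by
  have hac : Γ.gap a c = (Γ.gap a b + Γ.gap b c) % Γ.per a := by
    rw [← Γ.gap_iterate, add_comm, Function.iterate_add_apply, Γ.iterate_gap hab,
      Γ.iterate_gap hbc]
  have hlt := Γ.gap_lt_per hab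
  have hlt' := Γ.per_eq hab ▸ Γ.gap_lt_per hbc
  rw [hac]
  by_cases h : Γ.gap a b + Γ.gap b c < Γ.per a
  · exact .inl (Nat.mod_eq_of_lt h).symm
  · rw [Nat.mod_eq_sub_mod (by omega), Nat.mod_eq_of_lt (by omega)]
    omega

lemma gap_add_gap_self {a b : Γ.Arrow} (hab : a.fst = b.fst) (hne : a ≠ b) :
    Γ.gap a b + Γ.gap b a = Γ.per a := by
  have h := Γ.gap_add_gap hab hab.symm
  have h0 := (Γ.gap_eq_zero hab).not.2 hne
  rw [Γ.gap_self] at h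
  omega

lemma gap_next_eq_mod {a d : Γ.Arrow} (h : a.fst = d.fst) :
    Γ.gap a (Γ.next d) = (Γ.gap a d + 1) % Γ.per a := by
  rw [← Γ.gap_iterate, Function.iterate_succ_apply', Γ.iterate_gap h]

lemma gap_next {a d : Γ.Arrow} (h : a.fst = d.fst) (hne : Γ.next d ≠ a) :
    Γ.gap a (Γ.next d) = Γ.gap a d + 1 := by
  have hmod := Γ.gap_next_eq_mod h
  rcases Nat.lt_or_eq_of_le (Nat.succ_le_of_lt (Γ.gap_lt_per h)) with hlt | heq
  · rw [hmod, Nat.mod_eq_of_lt hlt]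
  · rw [← heq, Nat.mod_self, Γ.gap_eq_zero (by rw [Γ.next_fst, h])] at hmod
    exact absurd hmod.symm hne

lemma gap_of_next_eq {a d : Γ.Arrow} (h : Γ.next d = a) : Γ.gap a d + 1 = Γ.per a := by
  have hf : a.fst = d.fst := by rw [← h, Γ.next_fst]
  have hmod := Γ.gap_next_eq_mod hf
  rw [h, Γ.gap_self] at hmod
  exact le_antisymm (Γ.gap_lt_per hf)
    (Nat.le_of_dvd (Nat.succ_pos _) (Nat.dvd_of_mod_eq_zero hmod.symm))

/-- The arrows of the oriented cycle through `d`, listed from `d` on. -/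
noncomputable def cycle (d : Γ.Arrow) : List Γ.Arrow := List.iterate Γ.next d (Γ.per d)

lemma mem_cycle_iff {d d' : Γ.Arrow} : d' ∈ Γ.cycle d ↔ d'.fst = d.fst := by
  rw [cycle, List.mem_iterate]
  constructor
  · rintro ⟨k, -, rfl⟩
    exact Γ.iterate_next_fst d k
  · intro h
    obtain ⟨k, hk, rfl⟩ := Γ.exists_iterate_eq h.symm
    exact ⟨k, hk, rfl⟩

end BrauerTree
/-! ### The Brauer tree algebra -/

namespace BrauerTree

variable {V : Type v} (Γ : BrauerTree V) (K : Type u) [Field K]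

section Runs

variable [Fintype V]

lemma toAlg_rel {a b : FreeAlgebra K Γ.Gen} (h : Γ.Rel K a b) : Γ.toAlg K a = Γ.toAlg K b :=
  RingQuot.mkAlgHom_rel K h

lemma idem_mul_self (x : Γ.Edge) : Γ.idem K x * Γ.idem K x = Γ.idem K x := by
  simpa [idem] using Γ.toAlg_rel K (Rel.idem_mul_self x)

lemma idem_mul_idem {x y : Γ.Edge} (h : x ≠ y) : Γ.idem K x * Γ.idem K y = 0 := by
  simpa [idem] using Γ.toAlg_rel K (Rel.idem_mul_idem x y h)

lemma sum_idem : ∑ x : Γ.Edge, Γ.idem K x = 1 := by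
  simpa [idem] using Γ.toAlg_rel K (Rel.sum_idem)

lemma idem_mul_arrow (d : Γ.Arrow) : Γ.idem K (Γ.src d) * Γ.arrow K d = Γ.arrow K d := by
  simpa [idem, arrow] using Γ.toAlg_rel K (Rel.src_mul d)

lemma arrow_mul_idem (d : Γ.Arrow) : Γ.arrow K d * Γ.idem K (Γ.tgt d) = Γ.arrow K d := by
  simpa [idem, arrow] using Γ.toAlg_rel K (Rel.mul_tgt d)

lemma arrow_mul_arrow_symm (d : Γ.Arrow) : Γ.arrow K d * Γ.arrow K (Γ.next d).symm = 0 := by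
  simpa [idem, arrow] using Γ.toAlg_rel K (Rel.arrow_mul_arrow d)

lemma arrow_mul_arrow_eq_zero {d d' : Γ.Arrow} (h : d' ≠ Γ.next d) :
    Γ.arrow K d * Γ.arrow K d' = 0 := by
  by_cases h1 : Γ.tgt d = Γ.src d'
  · rcases Γ.src_eq_src_iff.1 h1.symm with h2 | h2
    · exact absurd h2 h
    · rw [h2, Γ.arrow_mul_arrow_symm]
  · rw [← Γ.arrow_mul_idem, ← Γ.idem_mul_arrow K d', mul_assoc, ← mul_assoc (Γ.idem K _),
      Γ.idem_mul_idem K h1, zero_mul, mul_zero]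

/-- The path of length `k` starting with the arrow `d`, inside one oriented cycle. -/
noncomputable def run (d : Γ.Arrow) : ℕ → Γ.Alg K
  | 0 => Γ.idem K (Γ.src d)
  | k + 1 => run d k * Γ.arrow K (Γ.next^[k] d)

@[simp] lemma run_zero (d : Γ.Arrow) : Γ.run K d 0 = Γ.idem K (Γ.src d) := rfl

lemma run_succ (d : Γ.Arrow) (k : ℕ) :
    Γ.run K d (k + 1) = Γ.run K d k * Γ.arrow K (Γ.next^[k] d) := rfl

lemma run_one (d : Γ.Arrow) : Γ.run K d 1 = Γ.arrow K d := Γ.idem_mul_arrow K d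

lemma idem_mul_run (d : Γ.Arrow) (k : ℕ) : Γ.idem K (Γ.src d) * Γ.run K d k = Γ.run K d k := by
  induction k with
  | zero => exact Γ.idem_mul_self K _
  | succ k ih => rw [run_succ, ← mul_assoc, ih]

lemma run_mul_idem (d : Γ.Arrow) (k : ℕ) :
    Γ.run K d k * Γ.idem K (Γ.src (Γ.next^[k] d)) = Γ.run K d k := by
  cases k with
  | zero => exact Γ.idem_mul_self K _
  | succ k =>
    rw [run_succ, mul_assoc, Function.iterate_succ_apply']
    exact congrArg _ (Γ.arrow_mul_idem K _)

lemma run_add (d : Γ.Arrow) (k l : ℕ) :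
    Γ.run K d (k + l) = Γ.run K d k * Γ.run K (Γ.next^[k] d) l := by
  induction l with
  | zero => rw [run_zero, run_mul_idem, add_zero]
  | succ l ih =>
    rw [← add_assoc, run_succ, ih, run_succ, mul_assoc, ← Function.iterate_add_apply, add_comm l k]

lemma run_eq_idem_mul_prod (d : Γ.Arrow) (k : ℕ) : Γ.run K d k =
    Γ.idem K (Γ.src d) * ((List.range k).map fun l ↦ Γ.arrow K (Γ.next^[l] d)).prod := by
  induction k with
  | zero => simp
  | succ k ih => rw [run_succ, ih, List.range_succ]; simp [mul_assoc]

lemma toAlg_freeCycle (d : Γ.Arrow) : Γ.toAlg K (Γ.freeCycle K d) = Γ.run K d (Γ.per d) := by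
  rw [run_eq_idem_mul_prod, freeCycle, map_list_prod, List.map_map]
  change ((List.range (Γ.per d)).map fun l ↦ Γ.arrow K (Γ.next^[l] d)).prod = _
  obtain ⟨k, hk⟩ := Nat.exists_eq_succ_of_ne_zero (Γ.per_pos d).ne'
  rw [hk, List.range_succ_eq_map, List.map_cons, List.prod_cons, ← mul_assoc]
  congr 1
  exact (Γ.idem_mul_arrow K d).symm

lemma run_per_symm (d : Γ.Arrow) :
    Γ.run K d.symm (Γ.per d.symm) = Γ.run K d (Γ.per d) := by
  rw [← toAlg_freeCycle, ← toAlg_freeCycle]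
  exact (Γ.toAlg_rel K (Rel.cycle_eq d)).symm

lemma run_mul_arrow_eq_zero {d d' : Γ.Arrow} {k : ℕ} (hk : 0 < k) (h : d' ≠ Γ.next^[k] d) :
    Γ.run K d k * Γ.arrow K d' = 0 := by
  obtain ⟨k, rfl⟩ := Nat.exists_eq_succ_of_ne_zero hk.ne'
  rw [run_succ, mul_assoc, Γ.arrow_mul_arrow_eq_zero K, mul_zero]
  rwa [Function.iterate_succ_apply'] at h

lemma run_eq_zero {d : Γ.Arrow} {k : ℕ} (h : Γ.per d < k) : Γ.run K d k = 0 := by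
  obtain ⟨l, rfl⟩ := Nat.exists_eq_add_of_lt h
  rw [add_right_comm, run_add, run_succ, Γ.iterate_per, ← run_per_symm,
    Γ.run_mul_arrow_eq_zero K (Γ.per_pos _), zero_mul]
  rw [Γ.iterate_per]
  exact Γ.ne_symm d

lemma run_mul_run_eq_zero {a b : Γ.Arrow} {k l : ℕ} (hk : 0 < k) (hl : 0 < l)
    (h : b ≠ Γ.next^[k] a) : Γ.run K a k * Γ.run K b l = 0 := by
  obtain ⟨l, rfl⟩ := Nat.exists_eq_succ_of_ne_zero hl.ne'
  rw [Nat.succ_eq_add_one, add_comm, run_add, run_one, ← mul_assoc,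
    Γ.run_mul_arrow_eq_zero K hk h, zero_mul]

end Runs

section Model

variable (d₀ : Γ.Arrow)

/-- A vector space containing the right module `e_x A` for `x = Γ.src d₀`: the top of `e_x A` is
spanned by `some d₀`, its socle by `none`, and a proper initial segment of one of the two cycles
through `x` that arrives at the source of `d` corresponds to `some d`. -/
abbrev Model : Type (max u v) := Option Γ.Arrow →₀ K

open Classical in
/-- The basis vector of the model that is reached by a path arriving at the source of `d`. -/
noncomputable def arrive (d : Γ.Arrow) : Γ.Model K :=
  Finsupp.single (if d = d₀ ∨ d = d₀.symm then none else some d) 1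

open Classical in
/-- The index of the basis vector on which the arrow `d` acts nontrivially: the top is left along
`d₀` as well as along `d₀.symm`. -/
noncomputable def depart (d : Γ.Arrow) : Γ.Arrow := if d = d₀.symm then d₀ else d

/-- The vertex of the quiver at which a basis vector of the model sits. -/
noncomputable def place (s : Option Γ.Arrow) : Γ.Edge := Γ.src (s.getD d₀)

/-- The arrow `d` belongs to one of the two cycles through the source of `d₀`. -/
def IsAdjacent (d : Γ.Arrow) : Prop := d.fst = d₀.fst ∨ d.fst = d₀.snd

open Classical in
/-- The action of an arrow on the model. -/
noncomputable def actArrow (d : Γ.Arrow) : Module.End K (Γ.Model K) :=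
  Finsupp.linearCombination K fun s ↦
    if s = some (Γ.depart d₀ d) ∧ Γ.IsAdjacent d₀ d then Γ.arrive K d₀ (Γ.next d) else 0

open Classical in
/-- The action of a trivial path on the model. -/
noncomputable def actIdem (x : Γ.Edge) : Module.End K (Γ.Model K) :=
  Finsupp.linearCombination K fun s ↦ if Γ.place d₀ s = x then Finsupp.single s 1 else 0

variable {d₀}

lemma depart_of_eq_or_eq {d : Γ.Arrow} (h : d = d₀ ∨ d = d₀.symm) : Γ.depart d₀ d = d₀ := by
  rcases h with rfl | rfl <;> simp [depart]

lemma depart_of_ne {d : Γ.Arrow} (h : d ≠ d₀.symm) : Γ.depart d₀ d = d := if_neg h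

lemma place_depart (d : Γ.Arrow) : Γ.place d₀ (some (Γ.depart d₀ d)) = Γ.src d := by
  by_cases h : d = d₀.symm
  · rw [Γ.depart_of_eq_or_eq (.inr h), h, src_symm]; rfl
  · rw [Γ.depart_of_ne h]; rfl

lemma arrive_of_eq_or_eq {d : Γ.Arrow} (h : d = d₀ ∨ d = d₀.symm) :
    Γ.arrive K d₀ d = Finsupp.single none 1 := by
  rw [arrive, if_pos h]

lemma arrive_of_ne {d : Γ.Arrow} (h : ¬ (d = d₀ ∨ d = d₀.symm)) :
    Γ.arrive K d₀ d = Finsupp.single (some d) 1 := by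
  rw [arrive, if_neg h]

open Classical in
lemma actIdem_single (x : Γ.Edge) (s : Option Γ.Arrow) : Γ.actIdem K d₀ x (Finsupp.single s 1) =
    if Γ.place d₀ s = x then Finsupp.single s 1 else 0 := by
  simp [actIdem]

lemma actArrow_single {d : Γ.Arrow} (h : Γ.IsAdjacent d₀ d) :
    Γ.actArrow K d₀ d (Finsupp.single (some (Γ.depart d₀ d)) 1) = Γ.arrive K d₀ (Γ.next d) := by
  simp [actArrow, h]

lemma actArrow_single_eq_zero {d : Γ.Arrow} {s : Option Γ.Arrow}
    (h : ¬ (s = some (Γ.depart d₀ d) ∧ Γ.IsAdjacent d₀ d)) :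
    Γ.actArrow K d₀ d (Finsupp.single s 1) = 0 := by
  simp [actArrow, h]

lemma actIdem_arrive (d : Γ.Arrow) :
    Γ.actIdem K d₀ (Γ.src d) (Γ.arrive K d₀ d) = Γ.arrive K d₀ d := by
  by_cases h : d = d₀ ∨ d = d₀.symm
  · have hsrc : Γ.place d₀ none = Γ.src d :=
      Γ.src_eq_src_iff.2 (by rcases h with rfl | rfl <;> simp)
    rw [Γ.arrive_of_eq_or_eq K h, actIdem_single, if_pos hsrc]
  · rw [Γ.arrive_of_ne K h, actIdem_single, if_pos (show Γ.place d₀ (some d) = Γ.src d from rfl)]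

lemma actArrow_arrive_eq_zero {d d' : Γ.Arrow} (h : d' ≠ d) :
    Γ.actArrow K d₀ d' (Γ.arrive K d₀ d) = 0 := by
  by_cases hd : d = d₀ ∨ d = d₀.symm
  · rw [Γ.arrive_of_eq_or_eq K hd]
    exact Γ.actArrow_single_eq_zero K (by simp)
  · rw [Γ.arrive_of_ne K hd]
    refine Γ.actArrow_single_eq_zero K fun hd' ↦ ?_
    by_cases h' : d' = d₀.symm
    · rw [Γ.depart_of_eq_or_eq (.inr h'), Option.some.injEq] at hd'
      exact hd (.inl hd'.1)
    · rw [Γ.depart_of_ne h', Option.some.injEq] at hd'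
      exact h hd'.1.symm

lemma actIdem_mul_actIdem (x y : Γ.Edge) (h : x ≠ y) :
    Γ.actIdem K d₀ y * Γ.actIdem K d₀ x = 0 := by
  ext s : 2
  by_cases hs : Γ.place d₀ s = x <;> simp [actIdem_single, hs, h]

lemma actIdem_mul_self (x : Γ.Edge) :
    Γ.actIdem K d₀ x * Γ.actIdem K d₀ x = Γ.actIdem K d₀ x := by
  ext s : 2
  by_cases hs : Γ.place d₀ s = x <;> simp [actIdem_single, hs]

lemma sum_actIdem [Fintype V] : ∑ x : Γ.Edge, Γ.actIdem K d₀ x = 1 := by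
  ext s : 2
  simp [actIdem_single]

lemma actArrow_mul_actIdem (d : Γ.Arrow) :
    Γ.actArrow K d₀ d * Γ.actIdem K d₀ (Γ.src d) = Γ.actArrow K d₀ d := by
  ext s : 2
  by_cases hs : Γ.place d₀ s = Γ.src d
  · simp [actIdem_single, hs]
  · have hd : ¬ (s = some (Γ.depart d₀ d) ∧ Γ.IsAdjacent d₀ d) := by
      rintro ⟨rfl, -⟩
      exact hs (Γ.place_depart d)
    simp [actIdem_single, hs, Γ.actArrow_single_eq_zero K hd]

lemma actIdem_mul_actArrow (d : Γ.Arrow) :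
    Γ.actIdem K d₀ (Γ.tgt d) * Γ.actArrow K d₀ d = Γ.actArrow K d₀ d := by
  ext s : 2
  by_cases hs : s = some (Γ.depart d₀ d) ∧ Γ.IsAdjacent d₀ d
  · obtain ⟨rfl, hd⟩ := hs
    simp [Γ.actArrow_single K hd, tgt, actIdem_arrive]
  · simp [Γ.actArrow_single_eq_zero K hs]

lemma actArrow_mul_actArrow (d : Γ.Arrow) :
    Γ.actArrow K d₀ (Γ.next d).symm * Γ.actArrow K d₀ d = 0 := by
  ext s : 2
  by_cases hs : s = some (Γ.depart d₀ d) ∧ Γ.IsAdjacent d₀ d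
  · obtain ⟨rfl, hd⟩ := hs
    simp [Γ.actArrow_single K hd, Γ.actArrow_arrive_eq_zero K (Γ.ne_symm (Γ.next d)).symm]
  · simp [Γ.actArrow_single_eq_zero K hs]

variable (d₀)

/-- The action on the model of the path of length `k` starting with `d`. -/
noncomputable def actRun (d : Γ.Arrow) : ℕ → Module.End K (Γ.Model K)
  | 0 => 1
  | k + 1 => Γ.actArrow K d₀ (Γ.next^[k] d) * actRun d k

variable {d₀}

lemma actRun_eq_zero_of_le (d : Γ.Arrow) {k l : ℕ} (hkl : k ≤ l) {m : Γ.Model K}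
    (h : Γ.actRun K d₀ d k m = 0) : Γ.actRun K d₀ d l m = 0 := by
  induction l, hkl using Nat.le_induction with
  | base => exact h
  | succ l _ ih => simp [actRun, ih]

lemma actRun_single_eq_zero {d : Γ.Arrow} {k : ℕ} (hk : 0 < k) {s : Option Γ.Arrow}
    (h : ¬ (s = some (Γ.depart d₀ d) ∧ Γ.IsAdjacent d₀ d)) :
    Γ.actRun K d₀ d k (Finsupp.single s 1) = 0 := by
  refine Γ.actRun_eq_zero_of_le K d (Nat.succ_le_of_lt hk) ?_
  simp [actRun, Γ.actArrow_single_eq_zero K h]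

lemma actRun_depart {d : Γ.Arrow} (hd : Γ.IsAdjacent d₀ d) (k : ℕ)
    (h : ∀ l, 0 < l → l ≤ k → ¬ (Γ.next^[l] d = d₀ ∨ Γ.next^[l] d = d₀.symm)) :
    Γ.actRun K d₀ d (k + 1) (Finsupp.single (some (Γ.depart d₀ d)) 1) =
      Γ.arrive K d₀ (Γ.next^[k + 1] d) := by
  induction k with
  | zero => simp [actRun, Γ.actArrow_single K hd]
  | succ k ih =>
    have hk := h (k + 1) (by omega) le_rfl
    have hadj : Γ.IsAdjacent d₀ (Γ.next^[k + 1] d) := by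
      rwa [IsAdjacent, Γ.iterate_next_fst]
    rw [actRun, Module.End.mul_apply, ih fun l hl hlk ↦ h l hl (by omega), Γ.arrive_of_ne K hk,
      Function.iterate_succ_apply' Γ.next (k + 1), ← Γ.actArrow_single K hadj,
      Γ.depart_of_ne (not_or.1 hk).2]

lemma actRun_depart_of_first_arrival {d : Γ.Arrow} (hd : Γ.IsAdjacent d₀ d) {k : ℕ} (hk : 0 < k)
    (hkd : Γ.next^[k] d = d₀ ∨ Γ.next^[k] d = d₀.symm)
    (h : ∀ l, 0 < l → l < k → Γ.next^[l] d ≠ Γ.next^[k] d) :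
    Γ.actRun K d₀ d k (Finsupp.single (some (Γ.depart d₀ d)) 1) = Finsupp.single none 1 := by
  obtain ⟨k, rfl⟩ := Nat.exists_eq_succ_of_ne_zero hk.ne'
  rw [Γ.actRun_depart K hd, Γ.arrive_of_eq_or_eq K hkd]
  intro l hl hlk hld
  refine h l hl (by omega) (Γ.eq_of_src_eq ?_ (by simp only [iterate_next_fst]))
  rw [Γ.src_eq_src_iff]
  rcases hkd with hkd | hkd <;> rcases hld with hld | hld <;> simp [hkd, hld]

lemma actRun_per_of_eq_or_eq [Finite V] {d : Γ.Arrow} (h : d = d₀ ∨ d = d₀.symm) :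
    Γ.actRun K d₀ d (Γ.per d) (Finsupp.single (some d₀) 1) = Finsupp.single none 1 := by
  have hadj : Γ.IsAdjacent d₀ d := by
    rcases h with rfl | rfl
    exacts [.inl rfl, .inr rfl]
  rw [← Γ.actRun_depart_of_first_arrival K hadj (Γ.per_pos d) (by rwa [Γ.iterate_per]),
    Γ.depart_of_eq_or_eq h]
  intro l hl hlt
  rw [Γ.iterate_per]
  exact Function.not_isPeriodicPt_of_pos_of_lt_minimalPeriod hl.ne' hlt

lemma actRun_per_of_ne [Finite V] {d : Γ.Arrow} (h : ¬ (d = d₀ ∨ d = d₀.symm))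
    (s : Option Γ.Arrow) :
    Γ.actRun K d₀ d (Γ.per d) (Finsupp.single s 1) = 0 := by
  by_cases hs : s = some (Γ.depart d₀ d) ∧ Γ.IsAdjacent d₀ d
  swap
  · exact Γ.actRun_single_eq_zero K (Γ.per_pos d) hs
  obtain ⟨rfl, hadj⟩ := hs
  obtain ⟨d₁, hd₁, hfst⟩ : ∃ d₁ : Γ.Arrow, (d₁ = d₀ ∨ d₁ = d₀.symm) ∧ d.fst = d₁.fst :=
    hadj.elim (fun hd ↦ ⟨d₀, .inl rfl, hd⟩) (fun hd ↦ ⟨d₀.symm, .inr rfl, hd⟩)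
  have hgap := Γ.iterate_gap hfst
  have hne : Γ.gap d d₁ ≠ 0 := (Γ.gap_eq_zero hfst).not.2 fun hd ↦ h (hd ▸ hd₁)
  -- The path reaches the socle at `d₁`, before it returns to `d`.
  have harrive : Γ.actRun K d₀ d (Γ.gap d d₁) (Finsupp.single (some (Γ.depart d₀ d)) 1) =
      Finsupp.single none 1 := by
    refine Γ.actRun_depart_of_first_arrival K hadj (Nat.pos_of_ne_zero hne) (by rwa [hgap])
      fun l _ hl hld ↦ ?_
    have hmod := Γ.gap_iterate d l
    rw [hld, hgap, Nat.mod_eq_of_lt (hl.trans (Γ.gap_lt_per hfst))] at hmod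
    exact hl.ne' hmod
  refine Γ.actRun_eq_zero_of_le K d (Nat.succ_le_of_lt (Γ.gap_lt_per hfst)) ?_
  rw [actRun, Module.End.mul_apply, harrive, Γ.actArrow_single_eq_zero K (by simp)]

lemma actRun_per_symm [Finite V] (d : Γ.Arrow) :
    Γ.actRun K d₀ d.symm (Γ.per d.symm) = Γ.actRun K d₀ d (Γ.per d) := by
  have hsymm : d.symm = d₀ ∨ d.symm = d₀.symm ↔ d = d₀ ∨ d = d₀.symm := by
    rw [SimpleGraph.Dart.symm_involutive.injective.eq_iff,
      SimpleGraph.Dart.symm_involutive.eq_iff, or_comm]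
  ext s : 2
  simp only [LinearMap.comp_apply, Finsupp.lsingle_apply]
  by_cases h : d = d₀ ∨ d = d₀.symm
  · by_cases hs : s = some d₀
    · rw [hs, Γ.actRun_per_of_eq_or_eq K h, Γ.actRun_per_of_eq_or_eq K (hsymm.2 h)]
    · rw [Γ.actRun_single_eq_zero K (Γ.per_pos _), Γ.actRun_single_eq_zero K (Γ.per_pos _)]
      · simp [Γ.depart_of_eq_or_eq h, hs]
      · simp [Γ.depart_of_eq_or_eq (hsymm.2 h), hs]
  · rw [Γ.actRun_per_of_ne K h, Γ.actRun_per_of_ne K (hsymm.not.2 h)]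

variable (d₀)

/-- The right action of the free algebra on the model. -/
noncomputable def actFree : FreeAlgebra K Γ.Gen →ₐ[K] (Module.End K (Γ.Model K))ᵐᵒᵖ :=
  FreeAlgebra.lift K fun
    | Gen.idem x => MulOpposite.op (Γ.actIdem K d₀ x)
    | Gen.arrow d => MulOpposite.op (Γ.actArrow K d₀ d)

lemma actFree_freeIdem (x : Γ.Edge) :
    Γ.actFree K d₀ (Γ.freeIdem K x) = MulOpposite.op (Γ.actIdem K d₀ x) := by
  simp [actFree, freeIdem]

lemma actFree_freeArrow (d : Γ.Arrow) :
    Γ.actFree K d₀ (Γ.freeArrow K d) = MulOpposite.op (Γ.actArrow K d₀ d) := by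
  simp [actFree, freeArrow]

lemma actFree_freeCycle (d : Γ.Arrow) :
    Γ.actFree K d₀ (Γ.freeCycle K d) = MulOpposite.op (Γ.actRun K d₀ d (Γ.per d)) := by
  have hprod (k : ℕ) :
      Γ.actFree K d₀ ((List.range k).map fun l ↦ Γ.freeArrow K (Γ.next^[l] d)).prod =
        MulOpposite.op (Γ.actRun K d₀ d k) := by
    induction k with
    | zero => simp [actRun]
    | succ k ih =>
      rw [List.range_succ, List.map_append, List.prod_append, map_mul, ih]
      simp [actRun, actFree_freeArrow]
  exact hprod _

variable [Fintype V]

lemma actFree_eq_of_rel {a b : FreeAlgebra K Γ.Gen} (h : Γ.Rel K a b) :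
    Γ.actFree K d₀ a = Γ.actFree K d₀ b := by
  cases h <;>
    simp only [map_mul, map_sum, map_one, map_zero, actFree_freeIdem, actFree_freeArrow,
      actFree_freeCycle, ← MulOpposite.op_mul, ← Finset.op_sum, actIdem_mul_self, sum_actIdem,
      actArrow_mul_actIdem, actIdem_mul_actArrow, actArrow_mul_actArrow, actRun_per_symm,
      MulOpposite.op_zero, MulOpposite.op_one]
  case idem_mul_idem x y h => rw [Γ.actIdem_mul_actIdem K x y h, MulOpposite.op_zero]

/-- The right action of `A` on the model. -/
noncomputable def act : Γ.Alg K →ₐ[K] (Module.End K (Γ.Model K))ᵐᵒᵖ :=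
  RingQuot.liftAlgHom K ⟨Γ.actFree K d₀, fun _ _ h ↦ Γ.actFree_eq_of_rel K d₀ h⟩

lemma act_toAlg (a : FreeAlgebra K Γ.Gen) : Γ.act K d₀ (Γ.toAlg K a) = Γ.actFree K d₀ a :=
  RingQuot.liftAlgHom_mkAlgHom_apply _ _ _ _

lemma run_per_ne_zero (d : Γ.Arrow) : Γ.run K d (Γ.per d) ≠ 0 := by
  intro h
  have hact : Γ.actRun K d d (Γ.per d) = 0 := by
    rw [← MulOpposite.op_eq_zero_iff, ← actFree_freeCycle, ← act_toAlg, toAlg_freeCycle, h,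
      map_zero]
  have htop := Γ.actRun_per_of_eq_or_eq K (.inl (Eq.refl d))
  rw [hact, LinearMap.zero_apply, eq_comm, Finsupp.single_eq_zero] at htop
  exact one_ne_zero htop

end Model

lemma run_ne_zero [Fintype V] (d : Γ.Arrow) {k : ℕ} (hk : k ≤ Γ.per d) : Γ.run K d k ≠ 0 := by
  intro h
  obtain ⟨l, hl⟩ := Nat.exists_eq_add_of_le hk
  apply Γ.run_per_ne_zero K d
  rw [hl, run_add, h, zero_mul]

end BrauerTree
/-! ### Morphisms between indecomposable projective modules -/

namespace BrauerTree

variable {V : Type v} (Γ : BrauerTree V) (K : Type u) [Field K]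

section Augmentation

variable (x : Γ.Edge)

open Classical in
/-- The augmentation of the free algebra at the vertex `x` of the quiver: every generator other
than `e_x` goes to zero. -/
noncomputable def freeAugmentation : FreeAlgebra K Γ.Gen →ₐ[K] K :=
  FreeAlgebra.lift K fun
    | Gen.idem y => if y = x then 1 else 0
    | Gen.arrow _ => 0

open Classical in
lemma freeAugmentation_freeIdem (y : Γ.Edge) :
    Γ.freeAugmentation K x (Γ.freeIdem K y) = if y = x then 1 else 0 := by
  simp [freeAugmentation, freeIdem]

lemma freeAugmentation_freeArrow (d : Γ.Arrow) :
    Γ.freeAugmentation K x (Γ.freeArrow K d) = 0 := by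
  simp [freeAugmentation, freeArrow]

lemma freeAugmentation_freeCycle [Finite V] (d : Γ.Arrow) :
    Γ.freeAugmentation K x (Γ.freeCycle K d) = 0 := by
  rw [freeCycle, map_list_prod, List.map_map]
  refine List.prod_eq_zero (List.mem_map.2 ⟨0, List.mem_range.2 (Γ.per_pos d), ?_⟩)
  exact Γ.freeAugmentation_freeArrow K x _

variable [Fintype V]

lemma freeAugmentation_eq_of_rel {a b : FreeAlgebra K Γ.Gen} (h : Γ.Rel K a b) :
    Γ.freeAugmentation K x a = Γ.freeAugmentation K x b := by
  induction h with
  | idem_mul_self y => simp [freeAugmentation_freeIdem]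
  | idem_mul_idem y z h =>
    have : ¬ (z = x ∧ y = x) := fun ⟨hz, hy⟩ ↦ h (hy.trans hz.symm)
    simpa [freeAugmentation_freeIdem] using this
  | sum_idem => simp [freeAugmentation_freeIdem]
  | src_mul d => simp [freeAugmentation_freeArrow]
  | mul_tgt d => simp [freeAugmentation_freeArrow]
  | arrow_mul_arrow d => simp [freeAugmentation_freeArrow]
  | cycle_eq d => rw [freeAugmentation_freeCycle, freeAugmentation_freeCycle]

/-- The augmentation of the Brauer tree algebra at the vertex `x` of the quiver, that is, the
action of the algebra on the simple module at `x`. -/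
noncomputable def augmentation : Γ.Alg K →ₐ[K] K :=
  RingQuot.liftAlgHom K ⟨Γ.freeAugmentation K x, fun _ _ h ↦ Γ.freeAugmentation_eq_of_rel K x h⟩

open Classical in
lemma augmentation_idem (y : Γ.Edge) :
    Γ.augmentation K x (Γ.idem K y) = if y = x then 1 else 0 := by
  rw [← freeAugmentation_freeIdem]
  exact RingQuot.liftAlgHom_mkAlgHom_apply _ _ _ _

lemma augmentation_idem_self : Γ.augmentation K x (Γ.idem K x) = 1 := by
  simp [augmentation_idem]

lemma idem_ne_zero : Γ.idem K x ≠ 0 := fun h ↦ by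
  have := Γ.augmentation_idem_self K x
  rw [h, map_zero] at this
  exact zero_ne_one this

lemma augmentation_idem_of_ne {y : Γ.Edge} (h : y ≠ x) :
    Γ.augmentation K x (Γ.idem K y) = 0 := by
  simp [augmentation_idem, h]

end Augmentation

variable [Fintype V]

/-- The linear span of the paths that stay in one oriented cycle of the quiver. -/
noncomputable def runSpan : Submodule K (Γ.Alg K) := Submodule.span K {z | ∃ d k, Γ.run K d k = z}

lemma run_mem_runSpan (d : Γ.Arrow) (k : ℕ) : Γ.run K d k ∈ Γ.runSpan K :=
  Submodule.subset_span ⟨d, k, rfl⟩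

lemma run_mul_idem_mem_runSpan (d : Γ.Arrow) (k : ℕ) (x : Γ.Edge) :
    Γ.run K d k * Γ.idem K x ∈ Γ.runSpan K := by
  by_cases h : Γ.src (Γ.next^[k] d) = x
  · rw [← h, run_mul_idem]
    exact Γ.run_mem_runSpan K d k
  · rw [← run_mul_idem, mul_assoc, Γ.idem_mul_idem K h, mul_zero]
    exact zero_mem _

lemma run_mul_arrow_mem_runSpan (d : Γ.Arrow) (k : ℕ) (d' : Γ.Arrow) :
    Γ.run K d k * Γ.arrow K d' ∈ Γ.runSpan K := by
  by_cases hnext : d' = Γ.next^[k] d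
  · rw [hnext, ← run_succ]
    exact Γ.run_mem_runSpan K d _
  · rcases Nat.eq_zero_or_pos k with rfl | hk
    · rw [run_zero]
      by_cases hsrc : Γ.src d = Γ.src d'
      · rw [hsrc]
        exact Γ.run_mem_runSpan K d' 1
      · rw [← Γ.idem_mul_arrow K d', ← mul_assoc, Γ.idem_mul_idem K hsrc, zero_mul]
        exact zero_mem _
    · rw [Γ.run_mul_arrow_eq_zero K hk hnext]
      exact zero_mem _

lemma mul_toAlg_mem_runSpan (a : FreeAlgebra K Γ.Gen) {z : Γ.Alg K} (hz : z ∈ Γ.runSpan K) :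
    z * Γ.toAlg K a ∈ Γ.runSpan K := by
  induction a using FreeAlgebra.induction generalizing z with
  | grade0 r =>
    rw [AlgHom.commutes, ← Algebra.commutes, ← Algebra.smul_def]
    exact Submodule.smul_mem _ r hz
  | grade1 g =>
    have hle : Γ.runSpan K ≤
        (Γ.runSpan K).comap (LinearMap.mulRight K (Γ.toAlg K (FreeAlgebra.ι K g))) := by
      refine Submodule.span_le.2 ?_
      rintro _ ⟨d, k, rfl⟩
      cases g with
      | idem x => exact Γ.run_mul_idem_mem_runSpan K d k x
      | arrow d' => exact Γ.run_mul_arrow_mem_runSpan K d k d'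
    exact hle hz
  | mul a b ha hb => rw [map_mul, ← mul_assoc]; exact hb (ha hz)
  | add a b ha hb => rw [map_add, mul_add]; exact add_mem (ha hz) (hb hz)

lemma runSpan_eq_top : Γ.runSpan K = ⊤ := by
  rw [Submodule.eq_top_iff']
  intro z
  obtain ⟨a, rfl⟩ := RingQuot.mkAlgHom_surjective K (Γ.Rel K) z
  have hone : (1 : Γ.Alg K) ∈ Γ.runSpan K := by
    rw [← Γ.sum_idem K]
    refine sum_mem fun x _ ↦ ?_
    obtain ⟨d, rfl⟩ := Γ.exists_src_eq x
    exact Γ.run_mem_runSpan K d 0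
  simpa only [one_mul] using! Γ.mul_toAlg_mem_runSpan K a hone

/-- `z ∈ e_x A e_y`, that is, right multiplication by `z` is a morphism `A e_x → A e_y`. -/
def IsHom (x y : Γ.Edge) (z : Γ.Alg K) : Prop :=
  Γ.idem K x * z = z ∧ z * Γ.idem K y = z

/-- The paths from `x` to `y` that stay in one oriented cycle and run around it at most once. -/
def runsBetween (x y : Γ.Edge) : Set (Γ.Alg K) :=
  {z | ∃ d k, Γ.src d = x ∧ Γ.src (Γ.next^[k] d) = y ∧ k ≤ Γ.per d ∧ Γ.run K d k = z}

variable {K}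

lemma isHom_idem (x : Γ.Edge) : Γ.IsHom K x x (Γ.idem K x) :=
  ⟨Γ.idem_mul_self K x, Γ.idem_mul_self K x⟩

lemma isHom_zero (x y : Γ.Edge) : Γ.IsHom K x y 0 := ⟨mul_zero _, zero_mul _⟩

lemma IsHom.add {Γ : BrauerTree V} {x y : Γ.Edge} {z z' : Γ.Alg K} (h : Γ.IsHom K x y z)
    (h' : Γ.IsHom K x y z') : Γ.IsHom K x y (z + z') :=
  ⟨by rw [mul_add, h.1, h'.1], by rw [add_mul, h.2, h'.2]⟩

lemma IsHom.smul {Γ : BrauerTree V} {x y : Γ.Edge} {z : Γ.Alg K} (h : Γ.IsHom K x y z) (c : K) :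
    Γ.IsHom K x y (c • z) :=
  ⟨by rw [mul_smul_comm, h.1], by rw [smul_mul_assoc, h.2]⟩

lemma IsHom.mem_span_runsBetween {Γ : BrauerTree V} {x y : Γ.Edge} {z : Γ.Alg K}
    (h : Γ.IsHom K x y z) : z ∈ Submodule.span K (Γ.runsBetween K x y) := by
  have hle : Γ.runSpan K ≤ (Submodule.span K (Γ.runsBetween K x y)).comap
      (LinearMap.mulLeft K (Γ.idem K x) ∘ₗ LinearMap.mulRight K (Γ.idem K y)) := by
    refine Submodule.span_le.2 ?_
    rintro _ ⟨d, k, rfl⟩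
    change Γ.idem K x * (Γ.run K d k * Γ.idem K y) ∈ Submodule.span K (Γ.runsBetween K x y)
    by_cases hx : x = Γ.src d
    · by_cases hy : Γ.src (Γ.next^[k] d) = y
      · rw [← hy, run_mul_idem, hx, idem_mul_run]
        rcases le_or_gt k (Γ.per d) with hk | hk
        · exact Submodule.subset_span ⟨d, k, rfl, rfl, hk, rfl⟩
        · rw [Γ.run_eq_zero K hk]
          exact zero_mem _
      · rw [← run_mul_idem, mul_assoc, Γ.idem_mul_idem K hy, mul_zero, mul_zero]
        exact zero_mem _
    · rw [← idem_mul_run, ← mul_assoc, ← mul_assoc, Γ.idem_mul_idem K hx, zero_mul, zero_mul]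
      exact zero_mem _
  have hz : z ∈ Γ.runSpan K := Γ.runSpan_eq_top K ▸ Submodule.mem_top
  have hmem : Γ.idem K x * (z * Γ.idem K y) ∈ Submodule.span K (Γ.runsBetween K x y) := hle hz
  rwa [h.2, h.1] at hmem

variable (K) in
/-- The shortest path from `a` to `b` inside one oriented cycle. -/
noncomputable def path (a b : Γ.Arrow) : Γ.Alg K := Γ.run K a (Γ.gap a b)

lemma isHom_path {a b : Γ.Arrow} (h : a.fst = b.fst) :
    Γ.IsHom K (Γ.src a) (Γ.src b) (Γ.path K a b) := by
  refine ⟨Γ.idem_mul_run K _ _, ?_⟩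
  have hrun := Γ.run_mul_idem K a (Γ.gap a b)
  rwa [Γ.iterate_gap h] at hrun

lemma path_ne_zero {a b : Γ.Arrow} (h : a.fst = b.fst) : Γ.path K a b ≠ 0 :=
  Γ.run_ne_zero K a (Γ.gap_lt_per h).le

lemma runsBetween_subset {a b : Γ.Arrow} (hf : a.fst = b.fst) (hne : a ≠ b) :
    Γ.runsBetween K (Γ.src a) (Γ.src b) ⊆ {Γ.path K a b} := by
  rintro _ ⟨d, k, ha, hb, hk, rfl⟩
  rcases Γ.src_eq_src_iff.1 ha with rfl | rfl
  · obtain rfl : Γ.next^[k] d = b := Γ.eq_of_src_eq hb (by rw [Γ.iterate_next_fst, hf])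
    have hlt : k < Γ.per d := hk.lt_of_ne fun h ↦ hne (by rw [h, Γ.iterate_per])
    rw [Set.mem_singleton_iff, path, Γ.gap_iterate, Nat.mod_eq_of_lt hlt]
  · have hinc := Γ.inc_fst (Γ.next^[k] a.symm)
    rw [hb, Γ.iterate_next_fst, Γ.inc_src_iff, ← hf] at hinc
    rcases hinc with h | h
    · exact absurd h (Γ.symm_fst_ne a)
    · exact absurd (SimpleGraph.Dart.ext _ _ (Prod.ext hf h)) hne

lemma isHom_eq_smul {a b : Γ.Arrow} (hf : a.fst = b.fst) (hne : a ≠ b) {z : Γ.Alg K}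
    (h : Γ.IsHom K (Γ.src a) (Γ.src b) z) : ∃ c : K, z = c • Γ.path K a b := by
  obtain ⟨c, hc⟩ := Submodule.mem_span_singleton.1
    (Submodule.span_mono (Γ.runsBetween_subset hf hne) h.mem_span_runsBetween)
  exact ⟨c, hc.symm⟩

lemma exists_darts_of_isHom_ne_zero {x y : Γ.Edge} {z : Γ.Alg K} (h : Γ.IsHom K x y z)
    (hz : z ≠ 0) : ∃ a b : Γ.Arrow, a.fst = b.fst ∧ Γ.src a = x ∧ Γ.src b = y := by
  by_contra hcon
  have hempty : Γ.runsBetween K x y = ∅ := by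
    rw [Set.eq_empty_iff_forall_notMem]
    rintro _ ⟨d, k, hx, hy, -⟩
    exact hcon ⟨d, Γ.next^[k] d, (Γ.iterate_next_fst d k).symm, hx, hy⟩
  have hmem := h.mem_span_runsBetween
  rw [hempty, Submodule.span_empty, Submodule.mem_bot] at hmem
  exact hz hmem

lemma path_mul_path {a b c : Γ.Arrow} (h : a.fst = b.fst) :
    Γ.path K a b * Γ.path K b c = Γ.run K a (Γ.gap a b + Γ.gap b c) := by
  rw [run_add, Γ.iterate_gap h]; rfl

lemma path_mul_path_of_le {a b c : Γ.Arrow} (h : a.fst = b.fst) (h' : b.fst = c.fst)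
    (hle : Γ.gap a b + Γ.gap b c < Γ.per a) : Γ.path K a b * Γ.path K b c = Γ.path K a c := by
  rw [Γ.path_mul_path h, path]
  rcases Γ.gap_add_gap h h' with h1 | h1
  · rw [h1]
  · omega

lemma path_mul_path_eq_zero {a b c : Γ.Arrow} (h : a.fst = b.fst) (h' : b.fst = c.fst)
    (hac : a ≠ c) (hle : Γ.per a ≤ Γ.gap a b + Γ.gap b c) :
    Γ.path K a b * Γ.path K b c = 0 := by
  rw [Γ.path_mul_path h]
  apply Γ.run_eq_zero K
  have h0 := (Γ.gap_eq_zero (h.trans h')).not.2 hac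
  have := Γ.gap_lt_per (h.trans h')
  rcases Γ.gap_add_gap h h' with hg | hg <;> omega

lemma path_mul_path_self {a b : Γ.Arrow} (h : a.fst = b.fst) (hne : a ≠ b) :
    Γ.path K a b * Γ.path K b a = Γ.run K a (Γ.per a) := by
  rw [Γ.path_mul_path h, Γ.gap_add_gap_self h hne]

lemma path_mul_path_of_ne {a b c d : Γ.Arrow} (hab : a.fst = b.fst) (hcd : c.fst = d.fst)
    (h1 : a ≠ b) (h2 : c ≠ d) (hbc : c ≠ b) : Γ.path K a b * Γ.path K c d = 0 := by
  apply Γ.run_mul_run_eq_zero K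
  · exact Nat.pos_of_ne_zero ((Γ.gap_eq_zero hab).not.2 h1)
  · exact Nat.pos_of_ne_zero ((Γ.gap_eq_zero hcd).not.2 h2)
  · rwa [Γ.iterate_gap hab]

lemma exists_darts_of_mul_ne_zero {x y w : Γ.Edge} {z z' : Γ.Alg K} (hxy : x ≠ y) (hyw : y ≠ w)
    (h : Γ.IsHom K x y z) (h' : Γ.IsHom K y w z') (hne : z * z' ≠ 0) :
    ∃ a b c : Γ.Arrow, a.fst = b.fst ∧ b.fst = c.fst ∧ Γ.src a = x ∧ Γ.src b = y ∧ Γ.src c = w := by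
  obtain ⟨a, b, hab, rfl, rfl⟩ := Γ.exists_darts_of_isHom_ne_zero h (left_ne_zero_of_mul hne)
  obtain ⟨b', c, hbc, hb', rfl⟩ := Γ.exists_darts_of_isHom_ne_zero h' (right_ne_zero_of_mul hne)
  by_cases hb : b' = b
  · subst hb
    exact ⟨a, b', c, hab, hbc, rfl, rfl, rfl⟩
  · have hab' : a ≠ b := fun h ↦ hxy (by rw [h])
    have hbc' : b' ≠ c := fun h ↦ hyw (by rw [← h, hb'])
    obtain ⟨s, rfl⟩ := Γ.isHom_eq_smul hab hab' h
    rw [← hb'] at h'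
    obtain ⟨t, rfl⟩ := Γ.isHom_eq_smul hbc hbc' h'
    refine absurd ?_ hne
    rw [smul_mul_smul_comm, Γ.path_mul_path_of_ne hab hbc hab' hbc' hb, smul_zero]

/-! ### The `A`-cycles -/

lemma arrow_mul_arrow_ne_zero_iff {d d' : Γ.Arrow} :
    Γ.arrow K d * Γ.arrow K d' ≠ 0 ↔ d' = Γ.next d ∧ d' ≠ d := by
  have hrun : Γ.run K d 2 = Γ.arrow K d * Γ.arrow K (Γ.next d) := by
    rw [run_succ, run_one]
    rfl
  have hper : Γ.per d = 1 ↔ Γ.next d = d := Function.minimalPeriod_eq_one_iff_isFixedPt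
  constructor
  · intro h
    obtain rfl : d' = Γ.next d := by
      by_contra hne
      exact h (Γ.arrow_mul_arrow_eq_zero K hne)
    refine ⟨rfl, fun hd ↦ h ?_⟩
    rw [← hrun]
    exact Γ.run_eq_zero K (by rw [hper.2 hd]; exact one_lt_two)
  · rintro ⟨rfl, h⟩
    rw [← hrun]
    have hpos := Γ.per_pos d
    have hne : Γ.per d ≠ 1 := hper.not.2 h
    exact Γ.run_ne_zero K d (by omega)

lemma IsArrowChain.fst_eq {Γ : BrauerTree V} {l : List Γ.Arrow} (h : Γ.IsArrowChain K l)
    {d d' : Γ.Arrow} (hd : d ∈ l) (hd' : d' ∈ l) : d.fst = d'.fst := by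
  have hchain : l.IsChain fun d d' : Γ.Arrow ↦ d.fst = d'.fst := h.2.2.imp fun d d' hne ↦ by
    rw [(Γ.arrow_mul_arrow_ne_zero_iff.1 hne).1, Γ.next_fst]
  have : IsTrans Γ.Arrow fun d d' ↦ d.fst = d'.fst := ⟨fun _ _ _ ↦ Eq.trans⟩
  have : Std.Symm fun d d' : Γ.Arrow ↦ d.fst = d'.fst := ⟨fun _ _ ↦ Eq.symm⟩
  exact List.Pairwise.forall_of_forall (R := fun d d' : Γ.Arrow ↦ d.fst = d'.fst)
    (fun _ _ ↦ rfl) hchain.pairwise hd hd'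

lemma IsACycle.fst_eq {Γ : BrauerTree V} {l : List Γ.Arrow} (h : Γ.IsACycle K l) {d d' : Γ.Arrow}
    (hd : d ∈ l) (hd' : d' ∈ l) : d.fst = d'.fst :=
  h.1.fst_eq hd hd'

lemma isArrowChain_cycle (d : Γ.Arrow) : Γ.IsArrowChain K (Γ.cycle d) := by
  have hinj {k l : ℕ} (hk : k < Γ.per d) (hl : l < Γ.per d)
      (h : Γ.next^[k] d = Γ.next^[l] d) : k = l :=
    (Function.iterate_eq_iterate_iff_of_lt_minimalPeriod hk hl).1 h
  refine ⟨List.ne_nil_of_mem (Γ.mem_cycle_iff.2 rfl), ?_, ?_⟩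
  · rw [cycle, ← List.range_map_iterate]
    exact (List.nodup_map_iff_inj_on List.nodup_range).2 fun k hk l hl ↦
      hinj (List.mem_range.1 hk) (List.mem_range.1 hl)
  · rw [List.isChain_iff_getElem]
    intro k hk
    rw [cycle, List.length_iterate] at hk
    simp only [cycle, List.getElem_iterate]
    rw [Γ.arrow_mul_arrow_ne_zero_iff]
    exact ⟨Function.iterate_succ_apply' _ _ _,
      fun h ↦ k.succ_ne_self (hinj hk (k.lt_succ_self.trans hk) h)⟩

lemma isACycle_cycle (d : Γ.Arrow) : Γ.IsACycle K (Γ.cycle d) := by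
  refine ⟨Γ.isArrowChain_cycle d, fun l hl hinf ↦ ?_⟩
  have hd : d ∈ l := hinf.subset (Γ.mem_cycle_iff.2 rfl)
  have hsub : l ⊆ Γ.cycle d := fun d' hd' ↦ Γ.mem_cycle_iff.2 (hl.fst_eq hd' hd)
  exact (hinf.sublist.eq_of_length_le (hl.2.1.subperm hsub).length_le).symm

end BrauerTree
/-! ### Matrices of linear maps between projective modules -/

namespace BrauerTree

variable {V : Type v} [Fintype V] (Γ : BrauerTree V) (K : Type u) [Field K]

/-- The direct sum of the modules `A e_x` for `x ∈ I`. -/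
abbrev Sum (I : Finset Γ.Edge) : Type (max u v) := ∀ i : I, Γ.proj K i

variable {K}

lemma mem_proj_iff {x : Γ.Edge} {z : Γ.Alg K} : z ∈ Γ.proj K x ↔ z * Γ.idem K x = z := by
  rw [Submodule.mem_span_singleton]
  constructor
  · rintro ⟨a, rfl⟩
    rw [smul_eq_mul, mul_assoc, idem_mul_self]
  · intro h
    exact ⟨z, h⟩

lemma coe_mul_idem {x : Γ.Edge} (z : Γ.proj K x) : (z : Γ.Alg K) * Γ.idem K x = z :=
  Γ.mem_proj_iff.1 z.2

/-- The generator `e_x` of the module `A e_x`. -/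
noncomputable def gen (x : Γ.Edge) : Γ.proj K x :=
  ⟨Γ.idem K x, Submodule.mem_span_singleton_self _⟩

lemma coe_smul_gen {x : Γ.Edge} (z : Γ.proj K x) : (z : Γ.Alg K) • Γ.gen x = z :=
  Subtype.ext (Γ.coe_mul_idem z)

instance (I : Finset Γ.Edge) : Module.Projective (Γ.Alg K) (Γ.Sum K I) := by
  let i : Γ.Sum K I →ₗ[Γ.Alg K] (I → Γ.Alg K) :=
    { toFun := fun u j ↦ u j
      map_add' := fun _ _ ↦ rfl
      map_smul' := fun _ _ ↦ rfl }
  let s : (I → Γ.Alg K) →ₗ[Γ.Alg K] Γ.Sum K I :=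
    { toFun := fun w j ↦ ⟨w j * Γ.idem K j, Γ.mem_proj_iff.2 (by rw [mul_assoc, idem_mul_self])⟩
      map_add' := fun a b ↦ by ext j; simp [add_mul]
      map_smul' := fun a b ↦ by ext j; simp [mul_assoc] }
  refine Module.Projective.of_split i s ?_
  ext u j
  exact Γ.coe_mul_idem (u j)

/-- `M` is the matrix of a linear map from `⨁_{x ∈ I} A e_x` to `⨁_{y ∈ J} A e_y`.  Matrices of
all sizes are indexed by all vertices of the quiver and are extended by zero. -/
structure IsMatrix (I J : Finset Γ.Edge) (M : Matrix Γ.Edge Γ.Edge (Γ.Alg K)) : Prop where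
  isHom : ∀ x y, Γ.IsHom K x y (M x y)
  mem : ∀ x y, M x y ≠ 0 → x ∈ I ∧ y ∈ J

variable {Γ}

lemma IsMatrix.apply_eq_zero {I J : Finset Γ.Edge} {M : Matrix Γ.Edge Γ.Edge (Γ.Alg K)}
    (hM : Γ.IsMatrix I J M) {x y : Γ.Edge} (h : ¬ (x ∈ I ∧ y ∈ J)) : M x y = 0 :=
  not_imp_comm.1 (hM.mem x y) h

lemma IsMatrix.add {I J : Finset Γ.Edge} {M N : Matrix Γ.Edge Γ.Edge (Γ.Alg K)}
    (hM : Γ.IsMatrix I J M) (hN : Γ.IsMatrix I J N) : Γ.IsMatrix I J (M + N) where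
  isHom x y := (hM.isHom x y).add (hN.isHom x y)
  mem x y h := by
    by_contra hxy
    exact h (by rw [Matrix.add_apply, hM.apply_eq_zero hxy, hN.apply_eq_zero hxy, add_zero])

open Classical in
lemma isMatrix_single {I J : Finset Γ.Edge} {x y : Γ.Edge} (hx : x ∈ I) (hy : y ∈ J)
    {z : Γ.Alg K} (hz : Γ.IsHom K x y z) : Γ.IsMatrix I J (Matrix.single x y z) where
  isHom x' y' := by
    rw [Matrix.single_apply]
    split_ifs with h
    · rwa [← h.1, ← h.2]
    · exact Γ.isHom_zero x' y'
  mem x' y' h := by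
    rw [Matrix.single_apply] at h
    obtain ⟨rfl, rfl⟩ := (ite_ne_right_iff.1 h).1
    exact ⟨hx, hy⟩

open Classical in
variable (Γ K) in
/-- The diagonal matrix with the idempotents `e_x`, `x ∈ B`, on the diagonal. -/
noncomputable def idemMatrix (B : Set Γ.Edge) : Matrix Γ.Edge Γ.Edge (Γ.Alg K) :=
  Matrix.diagonal fun x ↦ if x ∈ B then Γ.idem K x else 0

lemma IsMatrix.idemMatrix_mul_apply {I J : Finset Γ.Edge} {M : Matrix Γ.Edge Γ.Edge (Γ.Alg K)}
    (hM : Γ.IsMatrix I J M) (B : Set Γ.Edge) (x y : Γ.Edge)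
    [Decidable (x ∈ B)] : (Γ.idemMatrix K B * M) x y = if x ∈ B then M x y else 0 := by
  classical
  rw [idemMatrix, Matrix.diagonal_mul, ite_mul, zero_mul, (hM.isHom x y).1]
  congr

lemma IsMatrix.mul_idemMatrix_apply {I J : Finset Γ.Edge} {M : Matrix Γ.Edge Γ.Edge (Γ.Alg K)}
    (hM : Γ.IsMatrix I J M) (B : Set Γ.Edge) (x y : Γ.Edge)
    [Decidable (y ∈ B)] : (M * Γ.idemMatrix K B) x y = if y ∈ B then M x y else 0 := by
  classical
  rw [idemMatrix, Matrix.mul_diagonal, mul_ite, mul_zero, (hM.isHom x y).2]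
  congr

lemma isMatrix_idemMatrix {I : Finset Γ.Edge} {B : Set Γ.Edge} (hB : B ⊆ I) :
    Γ.IsMatrix I I (Γ.idemMatrix K B) where
  isHom x y := by
    classical
    rw [idemMatrix, Matrix.diagonal_apply]
    split_ifs with hxy hx
    · exact hxy ▸ Γ.isHom_idem x
    · exact Γ.isHom_zero x y
    · exact Γ.isHom_zero x y
  mem x y h := by
    classical
    rw [idemMatrix, Matrix.diagonal_apply] at h
    obtain ⟨rfl, hx⟩ := ite_ne_right_iff.1 h
    replace hx := hB (ite_ne_right_iff.1 hx).1
    exact ⟨hx, hx⟩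

lemma idemMatrix_mul_self (B : Set Γ.Edge) :
    Γ.idemMatrix K B * Γ.idemMatrix K B = Γ.idemMatrix K B := by
  classical
  rw [idemMatrix, Matrix.diagonal_mul_diagonal]
  congr 1
  ext x
  split_ifs
  · exact Γ.idem_mul_self K x
  · exact mul_zero 0

lemma idemMatrix_apply_self_ne_zero_iff {B : Set Γ.Edge} {x : Γ.Edge} :
    Γ.idemMatrix K B x x ≠ 0 ↔ x ∈ B := by
  classical
  rw [idemMatrix, Matrix.diagonal_apply_eq, ite_ne_right_iff, and_iff_left (Γ.idem_ne_zero K x)]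

variable {I J L : Finset Γ.Edge}

open Classical in
/-- The matrix of a linear map, with entries in the algebra. -/
noncomputable def entry (f : Γ.Sum K I →ₗ[Γ.Alg K] Γ.Sum K J) :
    Matrix Γ.Edge Γ.Edge (Γ.Alg K) := fun x y ↦
  if h : x ∈ I ∧ y ∈ J then (f (Pi.single ⟨x, h.1⟩ (Γ.gen x)) ⟨y, h.2⟩ : Γ.Alg K) else 0

open Classical in
lemma entry_coe (f : Γ.Sum K I →ₗ[Γ.Alg K] Γ.Sum K J) (x : I) (y : J) :
    entry f x y = (f (Pi.single x (Γ.gen x)) y : Γ.Alg K) := by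
  rw [entry, dif_pos ⟨x.2, y.2⟩]

lemma entry_of_not_mem (f : Γ.Sum K I →ₗ[Γ.Alg K] Γ.Sum K J) {x y : Γ.Edge}
    (h : ¬ (x ∈ I ∧ y ∈ J)) : entry f x y = 0 := by
  rw [entry, dif_neg h]

open Classical in
lemma isMatrix_entry (f : Γ.Sum K I →ₗ[Γ.Alg K] Γ.Sum K J) : Γ.IsMatrix I J (entry f) where
  isHom x y := by
    by_cases h : x ∈ I ∧ y ∈ J
    · rw [entry_coe f ⟨x, h.1⟩ ⟨y, h.2⟩]
      refine ⟨?_, Γ.coe_mul_idem _⟩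
      have hgen : Γ.idem K x • (Pi.single (⟨x, h.1⟩ : I) (Γ.gen x) : Γ.Sum K I) =
          Pi.single (⟨x, h.1⟩ : I) (Γ.gen x) := by
        rw [← Pi.single_smul]
        exact congrArg _ (Γ.coe_smul_gen (Γ.gen x))
      conv_rhs => rw [← hgen, map_smul]
      rfl
    · rw [entry_of_not_mem f h]
      exact Γ.isHom_zero x y
  mem x y h := not_imp_comm.1 (entry_of_not_mem f) h

lemma coe_apply_eq_sum (f : Γ.Sum K I →ₗ[Γ.Alg K] Γ.Sum K J) (u : Γ.Sum K I) (y : J) :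
    (f u y : Γ.Alg K) = ∑ x : I, (u x : Γ.Alg K) * entry f x y := by
  classical
  have hu : u = ∑ x : I, (u x : Γ.Alg K) • (Pi.single x (Γ.gen x) : Γ.Sum K I) := by
    simp_rw [← Pi.single_smul, Γ.coe_smul_gen, Finset.univ_sum_single]
  conv_lhs => rw [hu, map_sum, Finset.sum_apply, AddSubmonoidClass.coe_finsetSum]
  refine Finset.sum_congr rfl fun x _ ↦ ?_
  rw [map_smul, entry_coe]
  rfl

lemma entry_injective :
    Function.Injective (entry : (Γ.Sum K I →ₗ[Γ.Alg K] Γ.Sum K J) → Matrix _ _ (Γ.Alg K)) := by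
  refine fun f g h ↦ LinearMap.ext fun u ↦ funext fun y ↦ Subtype.ext ?_
  rw [coe_apply_eq_sum, coe_apply_eq_sum, h]

lemma entry_comp (f : Γ.Sum K I →ₗ[Γ.Alg K] Γ.Sum K J) (g : Γ.Sum K J →ₗ[Γ.Alg K] Γ.Sum K L) :
    entry (g ∘ₗ f) = entry f * entry g := by
  ext x y
  have hsum : (entry f * entry g) x y = ∑ z : J, entry f x z * entry g z y := by
    rw [Matrix.mul_apply, Finset.sum_coe_sort J fun z ↦ entry f x z * entry g z y]
    refine (Finset.sum_subset (Finset.subset_univ J) fun z _ hz ↦ ?_).symm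
    rw [entry_of_not_mem f fun h ↦ hz h.2, zero_mul]
  rw [hsum]
  by_cases h : x ∈ I ∧ y ∈ L
  · rw [entry_coe (g ∘ₗ f) ⟨x, h.1⟩ ⟨y, h.2⟩, LinearMap.comp_apply, coe_apply_eq_sum]
    exact Finset.sum_congr rfl fun z _ ↦ by rw [← entry_coe f ⟨x, h.1⟩ z]
  · rw [entry_of_not_mem _ h, eq_comm]
    refine Finset.sum_eq_zero fun z _ ↦ ?_
    rcases not_and_or.1 h with h | h
    · rw [entry_of_not_mem f fun h' ↦ h h'.1, zero_mul]
    · rw [entry_of_not_mem g fun h' ↦ h h'.2, mul_zero]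

lemma entry_add (f g : Γ.Sum K I →ₗ[Γ.Alg K] Γ.Sum K J) : entry (f + g) = entry f + entry g := by
  ext x y
  rw [Matrix.add_apply]
  unfold entry
  split_ifs <;> simp

lemma entry_zero : entry (0 : Γ.Sum K I →ₗ[Γ.Alg K] Γ.Sum K J) = 0 := by
  ext x y
  unfold entry
  split_ifs <;> simp

lemma entry_one : entry (1 : Module.End (Γ.Alg K) (Γ.Sum K I)) = Γ.idemMatrix K I := by
  classical
  ext x y
  rw [idemMatrix, Matrix.diagonal_apply]
  by_cases h : x ∈ I ∧ y ∈ I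
  · rw [entry_coe _ ⟨x, h.1⟩ ⟨y, h.2⟩, Module.End.one_apply]
    split_ifs with hxy hx
    · subst hxy
      rw [Pi.single_eq_same]
      rfl
    · exact absurd h.1 hx
    · rw [Pi.single_eq_of_ne fun h' ↦ hxy (congrArg Subtype.val h').symm]
      rfl
  · rw [entry_of_not_mem _ h]
    split_ifs with hxy hx
    · exact absurd ⟨hx, hxy ▸ hx⟩ h
    · rfl
    · rfl

lemma IsMatrix.exists_entry_eq {M : Matrix Γ.Edge Γ.Edge (Γ.Alg K)} (hM : Γ.IsMatrix I J M) :
    ∃ f : Γ.Sum K I →ₗ[Γ.Alg K] Γ.Sum K J, entry f = M := by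
  classical
  refine ⟨{ toFun := fun u y ↦ ⟨∑ x : I, (u x : Γ.Alg K) * M x y, Submodule.sum_mem _ fun x _ ↦
              Γ.mem_proj_iff.2 (by rw [mul_assoc, (hM.isHom x y).2])⟩
            map_add' := fun a b ↦ by ext y; simp [add_mul, Finset.sum_add_distrib]
            map_smul' := fun a b ↦ by ext y; simp [mul_assoc, Finset.mul_sum] }, ?_⟩
  ext x y
  by_cases h : x ∈ I ∧ y ∈ J
  swap
  · rw [entry_of_not_mem _ h, hM.apply_eq_zero h]
  rw [entry_coe _ ⟨x, h.1⟩ ⟨y, h.2⟩]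
  change ∑ z : I, ((Pi.single (⟨x, h.1⟩ : I) (Γ.gen x) : Γ.Sum K I) z : Γ.Alg K) * M z y = M x y
  rw [Finset.sum_eq_single_of_mem (⟨x, h.1⟩ : I) (Finset.mem_univ _), Pi.single_eq_same]
  · exact (hM.isHom x y).1
  · intro z _ hz
    rw [Pi.single_eq_of_ne hz, ZeroMemClass.coe_zero, zero_mul]

end BrauerTree

open BrauerTree

namespace TwoTermComplex

variable {V : Type v} [Fintype V] {Γ : BrauerTree V} {K : Type u} [Field K]

/-- The matrix of the differential of `T`. -/
noncomputable def mat (T : TwoTermComplex Γ K) : Matrix Γ.Edge Γ.Edge (Γ.Alg K) := entry T.f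

lemma isMatrix_mat (T : TwoTermComplex Γ K) : Γ.IsMatrix T.I T.J T.mat := isMatrix_entry T.f

lemma isHom_mat (T : TwoTermComplex Γ K) (x y : Γ.Edge) : Γ.IsHom K x y (T.mat x y) :=
  T.isMatrix_mat.isHom x y

lemma coe_comp_apply (T : TwoTermComplex Γ K) (i : T.I) (j : T.J) (z : Γ.proj K i) :
    (T.comp i j z : Γ.Alg K) = z * T.mat i j := by
  classical
  change (T.f (Pi.single i z) j : Γ.Alg K) = z * entry T.f i j
  rw [coe_apply_eq_sum, Finset.sum_eq_single_of_mem i (Finset.mem_univ _), Pi.single_eq_same]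
  intro x _ hx
  rw [Pi.single_eq_of_ne hx, ZeroMemClass.coe_zero, zero_mul]

lemma comp_ne_zero_iff (T : TwoTermComplex Γ K) (i : T.I) (j : T.J) :
    T.comp i j ≠ 0 ↔ T.mat i j ≠ 0 := by
  rw [not_iff_not]
  constructor
  · intro h
    have hgen := T.coe_comp_apply i j (Γ.gen i)
    rw [h] at hgen
    exact (T.isHom_mat i j).1.symm.trans hgen.symm
  · intro h
    ext z
    rw [T.coe_comp_apply, h, mul_zero]
    rfl

section Derived

variable [HasDerivedCategory.{w} (ModuleCat.{max u v} (Γ.Alg K))]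

instance projective_of_sum (I : Finset Γ.Edge) :
    Projective (ModuleCat.of (Γ.Alg K) (Γ.Sum K I)) :=
  (IsProjective.iff_projective _).1 inferInstance

lemma homZero_neg_one_iff (S T : TwoTermComplex Γ K) : S.HomZero T (-1) ↔
    ∀ φ : Γ.Sum K S.J →ₗ[Γ.Alg K] Γ.Sum K T.I, T.f ∘ₗ φ = 0 → φ ∘ₗ S.f = 0 → φ = 0 := by
  refine (TwoTerm.homZero_neg_one_iff (ModuleCat.ofHom S.f) (ModuleCat.ofHom T.f)).trans ?_
  constructor
  · intro h φ hT hS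
    exact congrArg ModuleCat.Hom.hom (h (ModuleCat.ofHom φ)
      (by rw [← ModuleCat.ofHom_comp, hT]; rfl) (by rw [← ModuleCat.ofHom_comp, hS]; rfl))
  · intro h φ hT hS
    exact ModuleCat.hom_ext
      (h φ.hom (congrArg ModuleCat.Hom.hom hT) (congrArg ModuleCat.Hom.hom hS))

lemma homZero_neg_one_iff_matrix (S T : TwoTermComplex Γ K) : S.HomZero T (-1) ↔
    ∀ M, Γ.IsMatrix S.J T.I M → M * T.mat = 0 → S.mat * M = 0 → M = 0 := by
  rw [homZero_neg_one_iff]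
  constructor
  · intro h M hM hT hS
    obtain ⟨φ, rfl⟩ := hM.exists_entry_eq
    rw [h φ (entry_injective (by rw [entry_comp, entry_zero]; exact hT))
      (entry_injective (by rw [entry_comp, entry_zero]; exact hS)), entry_zero]
  · intro h φ hT hS
    refine entry_injective ((h (entry φ) (isMatrix_entry φ) ?_ ?_).trans entry_zero.symm)
    · rw [mat, ← entry_comp, hT, entry_zero]
    · rw [mat, ← entry_comp, hS, entry_zero]

lemma exists_homotopy_matrix (T : TwoTermComplex Γ K) (h : T.HomZero T 1)
    {M : Matrix Γ.Edge Γ.Edge (Γ.Alg K)} (hM : Γ.IsMatrix T.I T.J M) :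
    ∃ H₀ H₁, Γ.IsMatrix T.I T.I H₀ ∧ Γ.IsMatrix T.J T.J H₁ ∧
      M = H₀ * T.mat + T.mat * H₁ := by
  obtain ⟨φ, rfl⟩ := hM.exists_entry_eq
  obtain ⟨h₀, h₁, hφ⟩ := TwoTerm.exists_homotopy_of_homZero_one (ModuleCat.ofHom T.f) h
    (ModuleCat.ofHom φ)
  refine ⟨entry h₀.hom, entry h₁.hom, isMatrix_entry _, isMatrix_entry _, ?_⟩
  rw [mat, ← entry_comp, ← entry_comp, ← entry_add]
  exact congrArg (fun q ↦ entry (ModuleCat.Hom.hom q)) hφ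

end Derived

end TwoTermComplex

/-! ### Idempotent endomorphisms -/

lemma eq_zero_of_range_le_of_isSuperfluous {R : Type u} {M : Type w} [Ring R]
    [AddCommGroup M] [Module R M] {N : Submodule R M} (hN : N.IsSuperfluous) {p : M →ₗ[R] M}
    (hp : IsIdempotentElem p) (h : LinearMap.range p ≤ N) : p = 0 := by
  refine LinearMap.ker_eq_top.1 (hN (LinearMap.ker p) (eq_top_iff.2 ?_))
  rw [← (LinearMap.IsIdempotentElem.isCompl hp).sup_eq_top]
  exact sup_le_sup_right h _

lemma eq_zero_or_eq_one_of_indecomposable {R : Type u} {M : Type w} [Ring R] [AddCommGroup M]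
    [Module R M] (hM : Indecomposable (ModuleCat.of R M)) {p : M →ₗ[R] M}
    (hp : IsIdempotentElem p) : p = 0 ∨ p = 1 := by
  let e := Submodule.prodEquivOfIsCompl _ _ (LinearMap.IsIdempotentElem.isCompl hp)
  have i : ModuleCat.of R M ≅ ModuleCat.of R (LinearMap.range p) ⊞
      ModuleCat.of R (LinearMap.ker p) :=
    e.symm.toModuleIso ≪≫ (ModuleCat.biprodIsoProd (ModuleCat.of R (LinearMap.range p))
      (ModuleCat.of R (LinearMap.ker p))).symm
  rcases hM.2 _ _ i with h | h <;>
    rw [ModuleCat.isZero_of_iff_subsingleton, Submodule.subsingleton_iff_eq_bot] at h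
  · exact .inl (LinearMap.range_eq_bot.1 h)
  · refine .inr (LinearMap.ext fun x ↦ LinearMap.ker_eq_bot.1 h ?_)
    exact congrArg (fun q : M →ₗ[R] M ↦ q x) hp

namespace TwoTermComplex

variable {V : Type v} [Fintype V] {Γ : BrauerTree V} {K : Type u} [Field K]

lemma IsMinimal.eq_zero_of_isIdempotentElem {T : TwoTermComplex Γ K} (hT : T.IsMinimal)
    {p₀ : Module.End (Γ.Alg K) (Γ.Sum K T.I)} {p₁ : Module.End (Γ.Alg K) (Γ.Sum K T.J)}
    (h₀ : IsIdempotentElem p₀) (h₁ : IsIdempotentElem p₁) (hc : T.f ∘ₗ p₀ = p₁ ∘ₗ T.f)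
    (hr : LinearMap.range p₁ ≤ LinearMap.range T.f) : p₀ = 0 ∧ p₁ = 0 := by
  obtain rfl := eq_zero_of_range_le_of_isSuperfluous hT.1 h₁ hr
  refine ⟨eq_zero_of_range_le_of_isSuperfluous hT.2 h₀ ?_, rfl⟩
  rw [LinearMap.zero_comp] at hc
  exact LinearMap.range_le_ker_iff.2 hc

/-- By minimality, the pair is determined by the idempotent that it induces on the cokernel. -/
lemma IsMinimal.eq_zero_or_eq_one {T : TwoTermComplex Γ K} (hT : T.IsMinimal)
    (hM : Indecomposable (ModuleCat.of (Γ.Alg K) T.Cok))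
    {p₀ : Module.End (Γ.Alg K) (Γ.Sum K T.I)} {p₁ : Module.End (Γ.Alg K) (Γ.Sum K T.J)}
    (h₀ : IsIdempotentElem p₀) (h₁ : IsIdempotentElem p₁) (hc : T.f ∘ₗ p₀ = p₁ ∘ₗ T.f) :
    (p₀ = 0 ∧ p₁ = 0) ∨ (p₀ = 1 ∧ p₁ = 1) := by
  have hle : LinearMap.range T.f ≤ (LinearMap.range T.f).comap p₁ := by
    rintro _ ⟨z, rfl⟩
    exact ⟨p₀ z, congrArg (fun q : _ →ₗ[Γ.Alg K] _ ↦ q z) hc⟩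
  let p : Module.End (Γ.Alg K) T.Cok := Submodule.mapQ _ _ p₁ hle
  have hp : IsIdempotentElem p := by
    refine LinearMap.ext fun z ↦ ?_
    obtain ⟨z, rfl⟩ := Submodule.mkQ_surjective _ z
    exact congrArg (fun q : Module.End (Γ.Alg K) _ ↦ Submodule.mkQ (LinearMap.range T.f) (q z)) h₁
  rcases eq_zero_or_eq_one_of_indecomposable hM hp with h | h
  · refine .inl (hT.eq_zero_of_isIdempotentElem h₀ h₁ hc ?_)
    rintro _ ⟨z, rfl⟩
    rw [← Submodule.Quotient.mk_eq_zero]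
    exact congrArg (fun q : Module.End (Γ.Alg K) T.Cok ↦ q (Submodule.Quotient.mk z)) h
  · have hc' : T.f ∘ₗ (1 - p₀) = (1 - p₁) ∘ₗ T.f := by
      rw [LinearMap.comp_sub, LinearMap.sub_comp, hc]
      rfl
    obtain ⟨hp₀, hp₁⟩ := hT.eq_zero_of_isIdempotentElem h₀.one_sub h₁.one_sub hc' (by
      rintro _ ⟨z, rfl⟩
      rw [LinearMap.sub_apply, Module.End.one_apply, ← Submodule.Quotient.mk_eq_zero,
        Submodule.Quotient.mk_sub, sub_eq_zero]
      exact (congrArg (fun q : Module.End (Γ.Alg K) T.Cok ↦ q (Submodule.Quotient.mk z)) h).symm)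
    exact .inr ⟨(sub_eq_zero.1 hp₀).symm, (sub_eq_zero.1 hp₁).symm⟩

lemma IsMinimal.idempotent_matrix_trivial {T : TwoTermComplex Γ K} (hT : T.IsMinimal)
    (hM : Indecomposable (ModuleCat.of (Γ.Alg K) T.Cok))
    {E₀ E₁ : Matrix Γ.Edge Γ.Edge (Γ.Alg K)} (hE₀ : Γ.IsMatrix T.I T.I E₀)
    (hE₁ : Γ.IsMatrix T.J T.J E₁) (h₀ : IsIdempotentElem E₀) (h₁ : IsIdempotentElem E₁)
    (hc : E₀ * T.mat = T.mat * E₁) :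
    (E₀ = 0 ∧ E₁ = 0) ∨ (E₀ = Γ.idemMatrix K T.I ∧ E₁ = Γ.idemMatrix K T.J) := by
  obtain ⟨p₀, rfl⟩ := hE₀.exists_entry_eq
  obtain ⟨p₁, rfl⟩ := hE₁.exists_entry_eq
  have hp₀ : IsIdempotentElem p₀ := entry_injective (by rw [Module.End.mul_eq_comp, entry_comp, h₀])
  have hp₁ : IsIdempotentElem p₁ := entry_injective (by rw [Module.End.mul_eq_comp, entry_comp, h₁])
  have hp : T.f ∘ₗ p₀ = p₁ ∘ₗ T.f := entry_injective (by rw [entry_comp, entry_comp]; exact hc)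
  rcases hT.eq_zero_or_eq_one hM hp₀ hp₁ hp with ⟨rfl, rfl⟩ | ⟨rfl, rfl⟩
  · exact .inl ⟨entry_zero, entry_zero⟩
  · exact .inr ⟨entry_one, entry_one⟩

end TwoTermComplex
/-! ### Branches of the tree at a vertex -/

namespace BrauerTree

variable {V : Type v} (Γ : BrauerTree V)

/-- The tree with the edges at `v` removed. -/
def without (v : V) : SimpleGraph V where
  Adj u w := Γ.graph.Adj u w ∧ u ≠ v ∧ w ≠ v
  symm := ⟨fun _ _ h ↦ ⟨h.1.symm, h.2.2, h.2.1⟩⟩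
  loopless := ⟨fun _ h ↦ h.1.ne rfl⟩

lemma not_reachable_without {v w : V} (hw : w ≠ v) : ¬ (Γ.without v).Reachable v w := by
  rintro ⟨p⟩
  cases p with
  | nil => exact hw rfl
  | cons h _ => exact h.2.1 rfl

/-- The edge `z` lies on the branch at `a.fst` that starts with the dart `a`. -/
def Branch (a : Γ.Arrow) (z : Γ.Edge) : Prop :=
  ∃ u, Γ.Inc u z ∧ (Γ.without a.fst).Reachable u a.snd

lemma inc_eq_of_ne {z : Γ.Edge} {u w : V} (hu : Γ.Inc u z) (hw : Γ.Inc w z) (h : u ≠ w) :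
    ∃ d : Γ.Arrow, Γ.src d = z ∧ d.fst = u ∧ d.snd = w := by
  obtain ⟨d, rfl, rfl⟩ := Γ.inc_iff.1 hu
  exact ⟨d, rfl, rfl, ((Γ.inc_src_iff.1 hw).resolve_left h.symm).symm⟩

lemma branch_iff {a : Γ.Arrow} {z : Γ.Edge} {u : V} (hu : Γ.Inc u z) (hne : u ≠ a.fst) :
    Γ.Branch a z ↔ (Γ.without a.fst).Reachable u a.snd := by
  constructor
  · rintro ⟨w, hw, hr⟩
    by_cases h : u = w
    · rwa [h]
    · have hwv : w ≠ a.fst := by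
        rintro rfl
        exact Γ.not_reachable_without a.fst_ne_snd.symm hr
      obtain ⟨d, -, rfl, rfl⟩ := Γ.inc_eq_of_ne hu hw h
      have hadj : (Γ.without a.fst).Adj d.fst d.snd := ⟨d.adj, hne, hwv⟩
      exact hadj.reachable.trans hr
  · exact fun h ↦ ⟨u, hu, h⟩

lemma branch_congr {a : Γ.Arrow} {z z' : Γ.Edge} {u : V} (hu : Γ.Inc u z) (hu' : Γ.Inc u z')
    (hne : u ≠ a.fst) : Γ.Branch a z ↔ Γ.Branch a z' := by
  rw [Γ.branch_iff hu hne, Γ.branch_iff hu' hne]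

lemma not_reachable_without_snd {a : Γ.Arrow} {w : V} (h : Γ.graph.Adj a.fst w)
    (hne : w ≠ a.snd) : ¬ (Γ.without a.fst).Reachable w a.snd := by
  classical
  rintro ⟨p⟩
  have hle : Γ.without a.fst ≤ Γ.graph := fun _ _ hadj ↦ hadj.1
  let q : Γ.graph.Walk w a.snd := p.toPath.1.mapLe hle
  have hq : q.IsPath := (SimpleGraph.Walk.isPath_mapLe hle).2 p.toPath.2
  let r : Γ.graph.Walk w a.snd := .cons h.symm (.cons a.adj .nil)
  have hr : r.IsPath := by
    simp [r, SimpleGraph.Walk.cons_isPath_iff, h.ne', hne, a.fst_ne_snd]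
  have heq := (Γ.isTree.isAcyclic.subsingleton_path _ _).elim ⟨q, hq⟩ ⟨r, hr⟩
  have hmem : a.fst ∈ q.support := by
    rw [Subtype.mk.inj heq]
    simp [r]
  rw [SimpleGraph.Walk.support_mapLe_eq_support] at hmem
  exact Γ.not_reachable_without h.ne' (p.toPath.1.takeUntil _ hmem).reachable.symm

lemma branch_src_iff {a c : Γ.Arrow} (h : c.fst = a.fst) : Γ.Branch a (Γ.src c) ↔ c = a := by
  have hadj : Γ.graph.Adj a.fst c.snd := h ▸ c.adj
  rw [Γ.branch_iff (Γ.inc_src_iff.2 (.inr rfl)) hadj.ne']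
  constructor
  · exact fun hr ↦ SimpleGraph.Dart.ext _ _ (Prod.ext h
      (not_imp_comm.1 (Γ.not_reachable_without_snd hadj) (not_not_intro hr)))
  · rintro rfl
    exact SimpleGraph.Reachable.refl _

lemma darts_unique {a b a' b' : Γ.Arrow} (h : a.fst = b.fst) (hne : a ≠ b)
    (h' : a'.fst = b'.fst) (ha : Γ.src a' = Γ.src a) (hb : Γ.src b' = Γ.src b) :
    a' = a ∧ b' = b := by
  rcases Γ.src_eq_src_iff.1 ha with rfl | rfl
  · exact ⟨rfl, Γ.eq_of_src_eq hb (by rw [← h', h])⟩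
  · have hinc : Γ.Inc a.snd (Γ.src b) := by
      rw [← hb, ← show a.symm.fst = a.snd from rfl, h']
      exact Γ.inc_fst b'
    rcases Γ.inc_src_iff.1 hinc with hsnd | hsnd
    · exact absurd (h.trans hsnd.symm) a.fst_ne_snd
    · exact absurd (SimpleGraph.Dart.ext _ _ (Prod.ext h hsnd)) hne

/-- The subgraph of the tree formed by a set of edges. -/
def edgeGraph (M : Set Γ.Edge) : SimpleGraph V where
  Adj u w := ∃ d : Γ.Arrow, Γ.src d ∈ M ∧ d.fst = u ∧ d.snd = w
  symm := ⟨fun _ _ ⟨d, hd, hu, hw⟩ ↦ ⟨d.symm, by rwa [src_symm], hw, hu⟩⟩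
  loopless := ⟨fun _ ⟨d, _, hu, hw⟩ ↦ d.fst_ne_snd (hu.trans hw.symm)⟩

lemma reachable_edgeGraph {M : Set Γ.Edge} {z : Γ.Edge} (hz : z ∈ M) {s t : V} (hs : Γ.Inc s z)
    (ht : Γ.Inc t z) : (Γ.edgeGraph M).Reachable s t := by
  by_cases h : s = t
  · rw [h]
  · obtain ⟨d, rfl, rfl, rfl⟩ := Γ.inc_eq_of_ne hs ht h
    exact SimpleGraph.Adj.reachable ⟨d, hz, rfl, rfl⟩

/-- The vertices of the tree that are end points of an edge in `M`. -/
def ends (M : Set Γ.Edge) : Set V := {v | ∃ z ∈ M, Γ.Inc v z}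

/-- The sets `I` and `J` of edges form an alternating path in the tree. -/
structure IsZigzag (I J : Finset Γ.Edge) : Prop where
  disjoint : ∀ x ∈ I, x ∉ J
  unique_left : ∀ a b : Γ.Arrow, a.fst = b.fst → Γ.src a ∈ I → Γ.src b ∈ I → a = b
  unique_right : ∀ a b : Γ.Arrow, a.fst = b.fst → Γ.src a ∈ J → Γ.src b ∈ J → a = b
  reachable : ∀ u ∈ Γ.ends {x | x ∈ I ∨ x ∈ J}, ∀ w ∈ Γ.ends {x | x ∈ I ∨ x ∈ J},
    (Γ.edgeGraph {x | x ∈ I ∨ x ∈ J}).Reachable u w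

end BrauerTree

/-! ### The structure of indecomposable partial tilting complexes -/

namespace BrauerTree

variable {V : Type v} [Fintype V] (Γ : BrauerTree V) {K : Type u} [Field K]

lemma IsMatrix.augmentation_mul_apply_self {Γ : BrauerTree V} {I J : Finset Γ.Edge}
    {M : Matrix Γ.Edge Γ.Edge (Γ.Alg K)} (hM : Γ.IsMatrix I J M)
    (N : Matrix Γ.Edge Γ.Edge (Γ.Alg K)) (x : Γ.Edge) : Γ.augmentation K x ((M * N) x x) =
      Γ.augmentation K x (M x x) * Γ.augmentation K x (N x x) := by
  rw [Matrix.mul_apply, map_sum, Finset.sum_eq_single_of_mem x (Finset.mem_univ x), map_mul]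
  intro z _ hz
  rw [← (hM.isHom x z).2, map_mul, map_mul, Γ.augmentation_idem_of_ne K x hz, mul_zero, zero_mul]

end BrauerTree

namespace TwoTermComplex

variable {V : Type v} [Fintype V] {Γ : BrauerTree V} {K : Type u} [Field K]

lemma IsMinimal.augmentation_mat_eq_zero {T : TwoTermComplex Γ K} (hT : T.IsMinimal) {x : Γ.Edge}
    (hI : x ∈ T.I) (hJ : x ∈ T.J) : Γ.augmentation K x (T.mat x x) = 0 := by
  classical
  by_contra hne
  let ε := Γ.augmentation K x
  let L : Submodule (Γ.Alg K) (Γ.Sum K T.J) :=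
    { carrier := {u | ε (u ⟨x, hJ⟩ : Γ.Alg K) = 0}
      add_mem' := fun {a b} (ha : ε _ = 0) (hb : ε _ = 0) ↦ by
        change ε ((a ⟨x, hJ⟩ : Γ.Alg K) + b ⟨x, hJ⟩) = 0
        rw [map_add, ha, hb, add_zero]
      zero_mem' := map_zero ε
      smul_mem' := fun c a (ha : ε _ = 0) ↦ by
        change ε (c * (a ⟨x, hJ⟩ : Γ.Alg K)) = 0
        rw [map_mul, ha, mul_zero] }
  have htop : L = ⊤ := hT.1 L <| eq_top_iff.2 fun u _ ↦ by
    let g : Γ.Sum K T.J := T.f (Pi.single ⟨x, hI⟩ (Γ.gen x))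
    have hg : (g ⟨x, hJ⟩ : Γ.Alg K) = T.mat x x := (entry_coe T.f ⟨x, hI⟩ ⟨x, hJ⟩).symm
    let c : Γ.Alg K := algebraMap K _ (ε (u ⟨x, hJ⟩ : Γ.Alg K) / ε (T.mat x x))
    rw [← add_sub_cancel (c • g) u]
    refine Submodule.add_mem_sup (Submodule.smul_mem _ _ ⟨_, rfl⟩) ?_
    change ε (u ⟨x, hJ⟩ - c * (g ⟨x, hJ⟩ : Γ.Alg K)) = 0
    rw [map_sub, map_mul, hg, AlgHom.commutes]
    exact sub_eq_zero.2 (div_mul_cancel₀ _ hne).symm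
  have hgen : (Pi.single (⟨x, hJ⟩ : T.J) (Γ.gen x) : Γ.Sum K T.J) ∈ L := htop ▸ Submodule.mem_top
  change ε ((Pi.single (⟨x, hJ⟩ : T.J) (Γ.gen x) : Γ.Sum K T.J) ⟨x, hJ⟩ : Γ.Alg K) = 0 at hgen
  rw [Pi.single_eq_same] at hgen
  exact one_ne_zero ((Γ.augmentation_idem_self K x).symm.trans hgen)

/-- Among the marked vertices on the cycle at `a.fst`, the first one that follows `a ∈ I` is
`b ∈ J`. -/
structure IsClosestPair (T : TwoTermComplex Γ K) (a b : Γ.Arrow) : Prop where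
  fst_eq : a.fst = b.fst
  left_mem : Γ.src a ∈ T.I
  right_mem : Γ.src b ∈ T.J
  gap_lt : ∀ c : Γ.Arrow, a.fst = c.fst → Γ.src c ∈ T.marked → c ≠ a → c ≠ b →
    Γ.gap a b < Γ.gap a c

lemma IsClosestPair.mul_eq_zero {T : TwoTermComplex Γ K} {a b : Γ.Arrow}
    (h : T.IsClosestPair a b) (hne : a ≠ b) {z : Γ.Edge} (hz : z ∈ T.marked)
    (hza : z ≠ Γ.src a) (hzb : z ≠ Γ.src b) {p q : Γ.Alg K} (hp : Γ.IsHom K (Γ.src a) z p)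
    (hq : Γ.IsHom K z (Γ.src b) q) : p * q = 0 := by
  by_contra hpq
  obtain ⟨a', c, b', hac, hcb, ha', rfl, hb'⟩ :=
    Γ.exists_darts_of_mul_ne_zero hza.symm hzb hp hq hpq
  obtain ⟨rfl, rfl⟩ := Γ.darts_unique h.fst_eq hne (hac.trans hcb) ha' hb'
  have hca : a' ≠ c := fun h ↦ hza (by rw [h])
  have hcb' : c ≠ b' := fun h ↦ hzb (by rw [h])
  obtain ⟨s, rfl⟩ := Γ.isHom_eq_smul hac hca hp
  obtain ⟨t, rfl⟩ := Γ.isHom_eq_smul hcb hcb' hq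
  refine hpq ?_
  have hlt := h.gap_lt c hac hz hca.symm hcb'
  have hgap := Γ.gap_add_gap hac hcb
  rw [smul_mul_smul_comm, Γ.path_mul_path_eq_zero hac hcb hne (by omega), smul_zero]

section Rigid

variable [HasDerivedCategory.{w} (ModuleCat.{max u v} (Γ.Alg K))]

lemma disjoint_of_isMinimal (T : TwoTermComplex Γ K) (hT : T.IsMinimal) (h : T.HomZero T 1)
    {x : Γ.Edge} (hI : x ∈ T.I) : x ∉ T.J := by
  classical
  intro hJ
  obtain ⟨H₀, H₁, hH₀, -, hH⟩ :=
    T.exists_homotopy_matrix h (isMatrix_single hI hJ (Γ.isHom_idem x))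
  have hx := congrArg (Γ.augmentation K x) (congrFun (congrFun hH x) x)
  rw [Matrix.single_apply_same, Matrix.add_apply, map_add,
    hH₀.augmentation_mul_apply_self, T.isMatrix_mat.augmentation_mul_apply_self,
    hT.augmentation_mat_eq_zero hI hJ, mul_zero, zero_mul, add_zero,
    Γ.augmentation_idem_self K x] at hx
  exact one_ne_zero hx

/-- Otherwise the path from `a` to `b` would not be null-homotopic as a map from `T` to `T[1]`. -/
lemma IsClosestPair.mat_ne_zero {T : TwoTermComplex Γ K} {a b : Γ.Arrow}
    (hab : T.IsClosestPair a b) (hT : T.IsMinimal) (h : T.HomZero T 1) :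
    T.mat (Γ.src a) (Γ.src b) ≠ 0 := by
  classical
  intro hmat
  have hdisj {x : Γ.Edge} (hx : x ∈ T.I) : x ∉ T.J := T.disjoint_of_isMinimal hT h hx
  have hsne : Γ.src a ≠ Γ.src b := fun hs ↦ hdisj hab.left_mem (hs ▸ hab.right_mem)
  have hne : a ≠ b := fun hs ↦ hsne (by rw [hs])
  obtain ⟨H₀, H₁, hH₀, hH₁, hH⟩ := T.exists_homotopy_matrix h
    (isMatrix_single hab.left_mem hab.right_mem (Γ.isHom_path (K := K) hab.fst_eq))
  have hleft : (H₀ * T.mat) (Γ.src a) (Γ.src b) = 0 := by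
    rw [Matrix.mul_apply]
    refine Finset.sum_eq_zero fun z _ ↦ ?_
    by_cases hz : z ∈ T.I
    · by_cases hza : z = Γ.src a
      · rw [hza, hmat, mul_zero]
      · exact hab.mul_eq_zero hne (.inl hz) hza (fun hzb ↦ hdisj hz (hzb ▸ hab.right_mem))
          (hH₀.isHom _ _) (T.isHom_mat _ _)
    · rw [hH₀.apply_eq_zero fun hmem ↦ hz hmem.2, zero_mul]
  have hright : (T.mat * H₁) (Γ.src a) (Γ.src b) = 0 := by
    rw [Matrix.mul_apply]
    refine Finset.sum_eq_zero fun z _ ↦ ?_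
    by_cases hz : z ∈ T.J
    · by_cases hzb : z = Γ.src b
      · rw [hzb, hmat, zero_mul]
      · exact hab.mul_eq_zero hne (.inr hz) (fun hza ↦ hdisj hab.left_mem (hza ▸ hz)) hzb
          (T.isHom_mat _ _) (hH₁.isHom _ _)
    · rw [hH₁.apply_eq_zero fun hmem ↦ hz hmem.1, mul_zero]
  have hpath := congrFun (congrFun hH (Γ.src a)) (Γ.src b)
  rw [Matrix.single_apply_same, Matrix.add_apply, hleft, hright, add_zero] at hpath
  exact Γ.path_ne_zero hab.fst_eq hpath

end Rigid

lemma exists_inc_of_mat_ne_zero (T : TwoTermComplex Γ K) {x y : Γ.Edge} (h : T.mat x y ≠ 0) :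
    ∃ u, Γ.Inc u x ∧ Γ.Inc u y := by
  obtain ⟨a, b, hab, rfl, rfl⟩ := Γ.exists_darts_of_isHom_ne_zero (T.isHom_mat x y) h
  exact ⟨a.fst, Γ.inc_fst a, hab ▸ Γ.inc_fst b⟩

/-- A set of marked vertices closed under the nonzero components of the differential splits off
a direct summand. -/
lemma marked_subset_of_closed (T : TwoTermComplex Γ K) (hT : T.IsMinimal)
    (hM : Indecomposable (ModuleCat.of (Γ.Alg K) T.Cok)) {B : Set Γ.Edge}
    (hB : ∀ x y, T.mat x y ≠ 0 → (x ∈ B ↔ y ∈ B)) (hne : (T.marked ∩ B).Nonempty) :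
    T.marked ⊆ B := by
  classical
  have hcomm : Γ.idemMatrix K (T.I ∩ B) * T.mat = T.mat * Γ.idemMatrix K (T.J ∩ B) := by
    ext x y
    rw [T.isMatrix_mat.idemMatrix_mul_apply, T.isMatrix_mat.mul_idemMatrix_apply]
    by_cases h : T.mat x y = 0
    · simp only [h, ite_self]
    · obtain ⟨hx, hy⟩ := T.isMatrix_mat.mem x y h
      simp only [Set.mem_inter_iff, Finset.mem_coe, hx, hy, true_and, hB x y h]
  rcases hT.idempotent_matrix_trivial hM (isMatrix_idemMatrix Set.inter_subset_left)
    (isMatrix_idemMatrix Set.inter_subset_left) (idemMatrix_mul_self _) (idemMatrix_mul_self _)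
    hcomm with ⟨h₀, h₁⟩ | ⟨h₀, h₁⟩
  · obtain ⟨x, hx | hx, hxB⟩ := hne
    · exact absurd (congrFun (congrFun h₀ x) x) (idemMatrix_apply_self_ne_zero_iff.2 ⟨hx, hxB⟩)
    · exact absurd (congrFun (congrFun h₁ x) x) (idemMatrix_apply_self_ne_zero_iff.2 ⟨hx, hxB⟩)
  · rintro y (hy | hy)
    · exact (idemMatrix_apply_self_ne_zero_iff.1
        (h₀ ▸ idemMatrix_apply_self_ne_zero_iff (K := K).2 (Finset.mem_coe.2 hy))).2
    · exact (idemMatrix_apply_self_ne_zero_iff.1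
        (h₁ ▸ idemMatrix_apply_self_ne_zero_iff (K := K).2 (Finset.mem_coe.2 hy))).2

lemma reachable_marked (T : TwoTermComplex Γ K) (hT : T.IsMinimal)
    (hM : Indecomposable (ModuleCat.of (Γ.Alg K) T.Cok)) {s t : V} (hs : s ∈ Γ.ends T.marked)
    (ht : t ∈ Γ.ends T.marked) : (Γ.edgeGraph T.marked).Reachable s t := by
  obtain ⟨x, hx, hsx⟩ := hs
  obtain ⟨y, hy, hty⟩ := ht
  let B : Set Γ.Edge := {z | ∃ r, Γ.Inc r z ∧ (Γ.edgeGraph T.marked).Reachable s r}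
  have hB : T.marked ⊆ B := T.marked_subset_of_closed hT hM (fun z z' hzz ↦ by
    obtain ⟨hz, hz'⟩ := T.isMatrix_mat.mem z z' hzz
    obtain ⟨r, hr, hr'⟩ := T.exists_inc_of_mat_ne_zero hzz
    constructor
    · rintro ⟨q, hq, hsq⟩
      exact ⟨r, hr', hsq.trans (Γ.reachable_edgeGraph (.inl hz) hq hr)⟩
    · rintro ⟨q, hq, hsq⟩
      exact ⟨r, hr, hsq.trans (Γ.reachable_edgeGraph (.inr hz') hq hr')⟩)
    ⟨x, hx, s, hsx, .refl s⟩
  obtain ⟨r, hr, hsr⟩ := hB hy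
  exact hsr.trans (Γ.reachable_edgeGraph hy hr hty)

/-- Otherwise the marked edges in the branch at `a` would be closed under the differential. -/
lemma eq_of_same_type (T : TwoTermComplex Γ K) (hT : T.IsMinimal)
    (hM : Indecomposable (ModuleCat.of (Γ.Alg K) T.Cok)) {a b : Γ.Arrow} (hab : a.fst = b.fst)
    (ha : Γ.src a ∈ T.marked) (hb : Γ.src b ∈ T.marked)
    (hno : ∀ c d : Γ.Arrow, c.fst = a.fst → d.fst = a.fst → Γ.src c ∈ T.I → Γ.src d ∉ T.J) :
    a = b := by
  have hB : T.marked ⊆ {z | Γ.Branch a z} := T.marked_subset_of_closed hT hM (fun x y hxy ↦ by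
    obtain ⟨hx, hy⟩ := T.isMatrix_mat.mem x y hxy
    obtain ⟨t, htx, hty⟩ := T.exists_inc_of_mat_ne_zero hxy
    by_cases h : t = a.fst
    · subst h
      obtain ⟨c, hc, rfl⟩ := Γ.inc_iff.1 htx
      obtain ⟨d, hd, rfl⟩ := Γ.inc_iff.1 hty
      exact absurd hy (hno c d hc hd hx)
    · exact Γ.branch_congr htx hty h) ⟨_, ha, (Γ.branch_src_iff rfl).2 rfl⟩
  exact ((Γ.branch_src_iff hab.symm).1 (hB hb)).symm

end TwoTermComplex
/-! ### The pivot at a closest pair -/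

namespace TwoTermComplex

variable {V : Type v} {Γ : BrauerTree V} {a b : Γ.Arrow}

/-- The edges on the branches that start with the darts `a` and `b`. -/
def pivotBranch (a b : Γ.Arrow) : Set Γ.Edge := {z | Γ.Branch a z ∨ Γ.Branch b z}

lemma src_mem_pivotBranch_iff (hab : a.fst = b.fst) {c : Γ.Arrow} (hc : a.fst = c.fst) :
    Γ.src c ∈ pivotBranch a b ↔ c = a ∨ c = b :=
  or_congr (Γ.branch_src_iff hc.symm) (Γ.branch_src_iff (hc.symm.trans hab))

end TwoTermComplex

lemma isIdempotentElem_add_of_mul_eq_zero_of_mul_eq_self {R : Type*} [NonUnitalSemiring R]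
    {d n : R} (hd : IsIdempotentElem d) (hdn : d * n = 0) (hnd : n * d = n) :
    IsIdempotentElem (d + n) := by
  have hnn : n * n = 0 := by
    nth_rewrite 1 [← hnd]
    rw [mul_assoc, hdn, mul_zero]
  rw [IsIdempotentElem, add_mul, mul_add, mul_add, hd.eq, hdn, hnd, hnn, add_zero, add_zero]

lemma isIdempotentElem_add_of_mul_eq_self_of_mul_eq_zero {R : Type*} [NonUnitalSemiring R]
    {d n : R} (hd : IsIdempotentElem d) (hdn : d * n = n) (hnd : n * d = 0) :
    IsIdempotentElem (d + n) := by
  have hnn : n * n = 0 := by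
    nth_rewrite 2 [← hdn]
    rw [← mul_assoc, hnd, zero_mul]
  rw [IsIdempotentElem, add_mul, mul_add, mul_add, hd.eq, hdn, hnd, hnn, add_zero, add_zero]

namespace BrauerTree

variable {V : Type v} [Fintype V] (Γ : BrauerTree V) {K : Type u} [Field K]

lemma inc_of_mul_ne_zero {x y z : Γ.Edge} {p q : Γ.Alg K} (hp : Γ.IsHom K x y p)
    (hq : Γ.IsHom K y z q) (hpq : p * q ≠ 0) (hxy : x ≠ y) (hyz : y ≠ z) {v : V}
    (hy : Γ.Inc v y) : Γ.Inc v x ↔ Γ.Inc v z := by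
  obtain ⟨i, j, k, hij, hjk, rfl, rfl, rfl⟩ := Γ.exists_darts_of_mul_ne_zero hxy hyz hp hq hpq
  obtain ⟨j', rfl, hj'⟩ := Γ.inc_iff.1 hy
  constructor
  · intro hx
    obtain ⟨i', hi, hi'⟩ := Γ.inc_iff.1 hx
    obtain ⟨-, rfl⟩ := Γ.darts_unique hij (fun h ↦ hxy (by rw [h])) hi hi' hj'
    exact hjk ▸ Γ.inc_fst k
  · intro hz
    obtain ⟨k', hk, hk'⟩ := Γ.inc_iff.1 hz
    obtain ⟨rfl, -⟩ := Γ.darts_unique hjk (fun h ↦ hyz (by rw [h])) hk.symm hj' hk'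
    exact hij ▸ Γ.inc_fst i

lemma IsMatrix.mul_apply_eq_zero {Γ : BrauerTree V} {I J L : Finset Γ.Edge}
    {M N : Matrix Γ.Edge Γ.Edge (Γ.Alg K)} (hM : Γ.IsMatrix I J M) (hN : Γ.IsMatrix J L N)
    {x y : Γ.Edge} (h : ¬ (x ∈ I ∧ y ∈ L)) : (M * N) x y = 0 := by
  rw [Matrix.mul_apply]
  refine Finset.sum_eq_zero fun z _ ↦ ?_
  by_cases hx : x ∈ I
  · rw [hN.apply_eq_zero fun hzy ↦ h ⟨hx, hzy.2⟩, mul_zero]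
  · rw [hM.apply_eq_zero fun hxz ↦ hx hxz.1, zero_mul]

end BrauerTree

namespace TwoTermComplex

variable {V : Type v} [Fintype V] {Γ : BrauerTree V} {K : Type u} [Field K]
  {T : TwoTermComplex Γ K} {a b : Γ.Arrow}

lemma IsClosestPair.exists_mul_eq_left (hab : T.IsClosestPair a b) (hdisj : ∀ x ∈ T.I, x ∉ T.J)
    (hmat : T.mat (Γ.src a) (Γ.src b) ≠ 0) {x : Γ.Edge} (hx : Γ.Inc a.fst x)
    (hxa : x ≠ Γ.src a) : ∃ n, Γ.IsHom K x (Γ.src a) n ∧ (n ≠ 0 → x ∈ T.I) ∧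
      n * T.mat (Γ.src a) (Γ.src b) = T.mat x (Γ.src b) := by
  by_cases hxI : x ∈ T.I
  · obtain ⟨i, hi, rfl⟩ := Γ.inc_iff.1 hx
    have hne : a ≠ b := fun h ↦ hdisj _ hab.left_mem (h ▸ hab.right_mem)
    have hia : i ≠ a := fun h ↦ hxa (by rw [h])
    have hib : i ≠ b := fun h ↦ hdisj _ hxI (h ▸ hab.right_mem)
    obtain ⟨s, hs⟩ := Γ.isHom_eq_smul hab.fst_eq hne (T.isHom_mat _ _)
    obtain ⟨t, ht⟩ := Γ.isHom_eq_smul (hi.trans hab.fst_eq) hib (T.isHom_mat _ _)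
    have hs₀ : s ≠ 0 := fun h ↦ hmat (by rw [hs, h, zero_smul])
    refine ⟨(t / s) • Γ.path K i a, (Γ.isHom_path hi).smul _, fun _ ↦ hxI, ?_⟩
    have hlt := hab.gap_lt i hi.symm (.inl hxI) hia hib
    have hgap := Γ.gap_add_gap_self hi hia
    rw [hs, ht, smul_mul_smul_comm, Γ.path_mul_path_of_le hi hab.fst_eq (by omega),
      div_mul_cancel₀ _ hs₀]
  · refine ⟨0, Γ.isHom_zero _ _, fun h ↦ absurd rfl h, ?_⟩
    rw [T.isMatrix_mat.apply_eq_zero fun h ↦ hxI h.1, zero_mul]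

lemma IsClosestPair.exists_mul_eq_right (hab : T.IsClosestPair a b) (hdisj : ∀ x ∈ T.I, x ∉ T.J)
    (hmat : T.mat (Γ.src a) (Γ.src b) ≠ 0) {y : Γ.Edge} (hy : Γ.Inc a.fst y)
    (hyb : y ≠ Γ.src b) : ∃ n, Γ.IsHom K (Γ.src b) y n ∧ (n ≠ 0 → y ∈ T.J) ∧
      T.mat (Γ.src a) (Γ.src b) * n = T.mat (Γ.src a) y := by
  by_cases hyJ : y ∈ T.J
  · obtain ⟨j, hj, rfl⟩ := Γ.inc_iff.1 hy
    have hne : a ≠ b := fun h ↦ hdisj _ hab.left_mem (h ▸ hab.right_mem)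
    have hja : j ≠ a := fun h ↦ hdisj _ hab.left_mem (h ▸ hyJ)
    have hjb : j ≠ b := fun h ↦ hyb (by rw [h])
    have hbj : b.fst = j.fst := hab.fst_eq.symm.trans hj.symm
    obtain ⟨s, hs⟩ := Γ.isHom_eq_smul hab.fst_eq hne (T.isHom_mat _ _)
    obtain ⟨t, ht⟩ := Γ.isHom_eq_smul hj.symm hja.symm (T.isHom_mat _ _)
    have hs₀ : s ≠ 0 := fun h ↦ hmat (by rw [hs, h, zero_smul])
    refine ⟨(t / s) • Γ.path K b j, (Γ.isHom_path hbj).smul _, fun _ ↦ hyJ, ?_⟩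
    have hlt := hab.gap_lt j hj.symm (.inr hyJ) hja hjb
    have hgap := Γ.gap_add_gap hab.fst_eq hbj
    have hbper := Γ.gap_lt_per hbj
    have haper := Γ.gap_lt_per hj.symm
    rw [← Γ.per_eq hab.fst_eq] at hbper
    rw [hs, ht, smul_mul_smul_comm, Γ.path_mul_path_of_le hab.fst_eq hbj (by omega),
      mul_div_cancel₀ _ hs₀]
  · refine ⟨0, Γ.isHom_zero _ _, fun h ↦ absurd rfl h, ?_⟩
    rw [T.isMatrix_mat.apply_eq_zero fun h ↦ hyJ h.2, mul_zero]

/-- The row operations `N₀` and the column operations `N₁` that use the entry of the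
differential at `(a, b)` as a pivot to clear the other entries in its column and its row that
belong to the cycle at `a.fst`. -/
structure IsElimination (T : TwoTermComplex Γ K) (a b : Γ.Arrow)
    (N₀ N₁ : Matrix Γ.Edge Γ.Edge (Γ.Alg K)) : Prop where
  isMatrix_left : Γ.IsMatrix T.I T.I N₀
  isMatrix_right : Γ.IsMatrix T.J T.J N₁
  left_ne_zero : ∀ x y, N₀ x y ≠ 0 → Γ.Inc a.fst x ∧ x ≠ Γ.src a ∧ y = Γ.src a
  right_ne_zero : ∀ x y, N₁ x y ≠ 0 → Γ.Inc a.fst y ∧ y ≠ Γ.src b ∧ x = Γ.src b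
  left_mul : ∀ x, Γ.Inc a.fst x → x ≠ Γ.src a →
    N₀ x (Γ.src a) * T.mat (Γ.src a) (Γ.src b) = T.mat x (Γ.src b)
  right_mul : ∀ y, Γ.Inc a.fst y → y ≠ Γ.src b →
    T.mat (Γ.src a) (Γ.src b) * N₁ (Γ.src b) y = T.mat (Γ.src a) y

lemma IsClosestPair.exists_isElimination (hab : T.IsClosestPair a b)
    (hdisj : ∀ x ∈ T.I, x ∉ T.J) (hmat : T.mat (Γ.src a) (Γ.src b) ≠ 0) :
    ∃ N₀ N₁, T.IsElimination a b N₀ N₁ := by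
  classical
  choose n₀ hom₀ mem₀ mul₀ using fun x ↦ hab.exists_mul_eq_left (x := x) hdisj hmat
  choose n₁ hom₁ mem₁ mul₁ using fun y ↦ hab.exists_mul_eq_right hdisj hmat (y := y)
  refine ⟨fun x y ↦ if h : Γ.Inc a.fst x ∧ x ≠ Γ.src a ∧ y = Γ.src a then n₀ _ h.1 h.2.1 else 0,
    fun x y ↦ if h : Γ.Inc a.fst y ∧ y ≠ Γ.src b ∧ x = Γ.src b then n₁ _ h.1 h.2.1 else 0,
    ⟨fun x y ↦ ?_, fun x y hxy ↦ ?_⟩, ⟨fun x y ↦ ?_, fun x y hxy ↦ ?_⟩,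
    fun x y hxy ↦ ?_, fun x y hxy ↦ ?_, fun x hx hxa ↦ ?_, fun y hy hyb ↦ ?_⟩
  · split_ifs with h
    · exact h.2.2 ▸ hom₀ _ h.1 h.2.1
    · exact Γ.isHom_zero x y
  · obtain ⟨h, hn⟩ := dite_ne_right_iff.1 hxy
    exact ⟨mem₀ _ h.1 h.2.1 hn, h.2.2 ▸ hab.left_mem⟩
  · split_ifs with h
    · exact h.2.2 ▸ hom₁ _ h.1 h.2.1
    · exact Γ.isHom_zero x y
  · obtain ⟨h, hn⟩ := dite_ne_right_iff.1 hxy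
    exact ⟨h.2.2 ▸ hab.right_mem, mem₁ _ h.1 h.2.1 hn⟩
  · exact (dite_ne_right_iff.1 hxy).1
  · exact (dite_ne_right_iff.1 hxy).1
  · rw [dif_pos ⟨hx, hxa, rfl⟩, mul₀ x hx hxa]
  · rw [dif_pos ⟨hy, hyb, rfl⟩, mul₁ y hy hyb]

namespace IsElimination

variable {N₀ N₁ : Matrix Γ.Edge Γ.Edge (Γ.Alg K)}

lemma mul_mat_apply (h : T.IsElimination a b N₀ N₁) (x y : Γ.Edge) :
    (N₀ * T.mat) x y = N₀ x (Γ.src a) * T.mat (Γ.src a) y := by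
  rw [Matrix.mul_apply, Finset.sum_eq_single_of_mem _ (Finset.mem_univ (Γ.src a))]
  intro z _ hz
  rw [not_imp_comm.1 (h.left_ne_zero x z) fun h ↦ hz h.2.2, zero_mul]

lemma mat_mul_apply (h : T.IsElimination a b N₀ N₁) (x y : Γ.Edge) :
    (T.mat * N₁) x y = T.mat x (Γ.src b) * N₁ (Γ.src b) y := by
  rw [Matrix.mul_apply, Finset.sum_eq_single_of_mem _ (Finset.mem_univ (Γ.src b))]
  intro z _ hz
  rw [not_imp_comm.1 (h.right_ne_zero z y) fun h ↦ hz h.2.2, mul_zero]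

lemma left_apply_self (h : T.IsElimination a b N₀ N₁) (y : Γ.Edge) : N₀ (Γ.src a) y = 0 :=
  not_imp_comm.1 (h.left_ne_zero _ y) fun h ↦ h.2.1 rfl

lemma right_apply_self (h : T.IsElimination a b N₀ N₁) (x : Γ.Edge) : N₁ x (Γ.src b) = 0 :=
  not_imp_comm.1 (h.right_ne_zero x _) fun h ↦ h.2.1 rfl

lemma mul_mat_apply_eq_zero (h : T.IsElimination a b N₀ N₁) {x y : Γ.Edge}
    (hv : ¬ (Γ.Inc a.fst x ∧ Γ.Inc a.fst y)) : (N₀ * T.mat) x y = 0 := by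
  rw [h.mul_mat_apply]
  by_contra hne
  obtain ⟨hx, hxa, -⟩ := h.left_ne_zero x _ (left_ne_zero_of_mul hne)
  have hay : Γ.src a ≠ y := fun hay ↦ hv ⟨hx, hay ▸ Γ.inc_fst a⟩
  exact hv ⟨hx, (Γ.inc_of_mul_ne_zero (h.isMatrix_left.isHom _ _) (T.isHom_mat _ _) hne hxa hay
    (Γ.inc_fst a)).1 hx⟩

lemma mat_mul_apply_eq_zero (h : T.IsElimination a b N₀ N₁) (hab : a.fst = b.fst)
    {x y : Γ.Edge} (hv : ¬ (Γ.Inc a.fst x ∧ Γ.Inc a.fst y)) : (T.mat * N₁) x y = 0 := by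
  rw [h.mat_mul_apply]
  by_contra hne
  obtain ⟨hy, hyb, -⟩ := h.right_ne_zero _ y (right_ne_zero_of_mul hne)
  have hb : Γ.Inc a.fst (Γ.src b) := hab ▸ Γ.inc_fst b
  have hxb : x ≠ Γ.src b := fun hxb ↦ hv ⟨hxb ▸ hb, hy⟩
  exact hv ⟨(Γ.inc_of_mul_ne_zero (T.isHom_mat _ _) (h.isMatrix_right.isHom _ _) hne hxb hyb.symm
    hb).2 hy, hy⟩

/-- The part of the elimination that concerns the cycle at `a.fst`: there the vertices in `B`
are those of the pivot. -/
lemma commute_apply_of_inc (h : T.IsElimination a b N₀ N₁) {B : Set Γ.Edge} {x y : Γ.Edge}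
    (hx : Γ.Inc a.fst x) (hy : Γ.Inc a.fst y) (hxB : x ∈ B ↔ x = Γ.src a)
    (hyB : y ∈ B ↔ y = Γ.src b) [Decidable (x ∈ B)] [Decidable (y ∈ B)] :
    (if x ∈ B then T.mat x y else 0) + (N₀ * T.mat) x y =
      (if y ∈ B then T.mat x y else 0) + (T.mat * N₁) x y := by
  rw [h.mul_mat_apply, h.mat_mul_apply]
  by_cases hxa : x = Γ.src a
  · rw [if_pos (hxB.2 hxa), hxa, h.left_apply_self, zero_mul, add_zero]
    by_cases hyb : y = Γ.src b
    · rw [if_pos (hyB.2 hyb), hyb, h.right_apply_self, mul_zero, add_zero]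
    · rw [if_neg (mt hyB.1 hyb), zero_add, h.right_mul y hy hyb]
  · rw [if_neg (mt hxB.1 hxa), zero_add]
    by_cases hyb : y = Γ.src b
    · rw [if_pos (hyB.2 hyb), hyb, h.right_apply_self, mul_zero, add_zero, h.left_mul x hx hxa]
    · rw [if_neg (mt hyB.1 hyb), zero_add, ← h.right_mul y hy hyb, ← mul_assoc,
        h.left_mul x hx hxa]

end IsElimination

lemma mem_pivotBranch_congr (hab : a.fst = b.fst) {x y : Γ.Edge} (hxy : T.mat x y ≠ 0)
    (hv : ¬ (Γ.Inc a.fst x ∧ Γ.Inc a.fst y)) : x ∈ pivotBranch a b ↔ y ∈ pivotBranch a b := by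
  obtain ⟨u, hux, huy⟩ := T.exists_inc_of_mat_ne_zero hxy
  have hu : u ≠ a.fst := fun h ↦ hv (h ▸ ⟨hux, huy⟩)
  exact or_congr (Γ.branch_congr hux huy hu) (Γ.branch_congr hux huy (hab ▸ hu))

namespace IsClosestPair

variable {N₀ N₁ : Matrix Γ.Edge Γ.Edge (Γ.Alg K)}

lemma mem_pivotBranch_iff_left (hab : T.IsClosestPair a b) (hdisj : ∀ x ∈ T.I, x ∉ T.J)
    {x : Γ.Edge} (hx : Γ.Inc a.fst x) (hxI : x ∈ T.I) : x ∈ pivotBranch a b ↔ x = Γ.src a := by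
  obtain ⟨c, hc, rfl⟩ := Γ.inc_iff.1 hx
  rw [src_mem_pivotBranch_iff hab.fst_eq hc.symm]
  refine ⟨?_, fun h ↦ .inl (Γ.eq_of_src_eq h hc)⟩
  rintro (rfl | rfl)
  · rfl
  · exact absurd hab.right_mem (hdisj _ hxI)

lemma mem_pivotBranch_iff_right (hab : T.IsClosestPair a b) (hdisj : ∀ x ∈ T.I, x ∉ T.J)
    {y : Γ.Edge} (hy : Γ.Inc a.fst y) (hyJ : y ∈ T.J) : y ∈ pivotBranch a b ↔ y = Γ.src b := by
  obtain ⟨c, hc, rfl⟩ := Γ.inc_iff.1 hy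
  rw [src_mem_pivotBranch_iff hab.fst_eq hc.symm]
  refine ⟨?_, fun h ↦ .inr (Γ.eq_of_src_eq h (hc.trans hab.fst_eq))⟩
  rintro (rfl | rfl)
  · exact absurd hyJ (hdisj _ hab.left_mem)
  · rfl

/-- The idempotent endomorphism of `T` that an elimination at a closest pair makes out of the
projection to the summands on the two branches of the pivot. -/
lemma idemMatrix_add_mul_mat (hab : T.IsClosestPair a b) (hdisj : ∀ x ∈ T.I, x ∉ T.J)
    (h : T.IsElimination a b N₀ N₁) :
    (Γ.idemMatrix K (T.I ∩ pivotBranch a b) + N₀) * T.mat =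
      T.mat * (Γ.idemMatrix K (T.J ∩ pivotBranch a b) + N₁) := by
  classical
  ext x y
  rw [add_mul, mul_add, Matrix.add_apply, Matrix.add_apply,
    T.isMatrix_mat.idemMatrix_mul_apply, T.isMatrix_mat.mul_idemMatrix_apply]
  by_cases hmem : x ∈ T.I ∧ y ∈ T.J
  · simp only [Set.mem_inter_iff, Finset.mem_coe, hmem, true_and]
    by_cases hv : Γ.Inc a.fst x ∧ Γ.Inc a.fst y
    · exact h.commute_apply_of_inc hv.1 hv.2 (hab.mem_pivotBranch_iff_left hdisj hv.1 hmem.1)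
        (hab.mem_pivotBranch_iff_right hdisj hv.2 hmem.2)
    · rw [h.mul_mat_apply_eq_zero hv, h.mat_mul_apply_eq_zero hab.fst_eq hv]
      by_cases hxy : T.mat x y = 0
      · simp only [hxy, ite_self]
      · simp only [mem_pivotBranch_congr hab.fst_eq hxy hv]
  · simp only [T.isMatrix_mat.apply_eq_zero hmem,
      h.isMatrix_left.mul_apply_eq_zero T.isMatrix_mat hmem,
      T.isMatrix_mat.mul_apply_eq_zero h.isMatrix_right hmem, ite_self]

lemma isIdempotentElem_left (hab : T.IsClosestPair a b) (hdisj : ∀ x ∈ T.I, x ∉ T.J)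
    (h : T.IsElimination a b N₀ N₁) :
    IsIdempotentElem (Γ.idemMatrix K (T.I ∩ pivotBranch a b) + N₀) := by
  classical
  refine isIdempotentElem_add_of_mul_eq_zero_of_mul_eq_self (idemMatrix_mul_self _) ?_ ?_
  · ext x y
    rw [h.isMatrix_left.idemMatrix_mul_apply, Matrix.zero_apply, ite_eq_right_iff]
    rintro ⟨hxI, hxB⟩
    refine not_imp_comm.1 (h.left_ne_zero x y) fun ⟨hx, hxa, _⟩ ↦ ?_
    exact hxa ((hab.mem_pivotBranch_iff_left hdisj hx hxI).1 hxB)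
  · ext x y
    rw [h.isMatrix_left.mul_idemMatrix_apply, ite_eq_left_iff]
    refine fun hy ↦ (not_imp_comm.1 (h.left_ne_zero x y) fun ⟨_, _, hya⟩ ↦ hy ?_).symm
    exact hya ▸ ⟨hab.left_mem, (src_mem_pivotBranch_iff hab.fst_eq rfl).2 (.inl rfl)⟩

lemma isIdempotentElem_right (hab : T.IsClosestPair a b) (hdisj : ∀ x ∈ T.I, x ∉ T.J)
    (h : T.IsElimination a b N₀ N₁) :
    IsIdempotentElem (Γ.idemMatrix K (T.J ∩ pivotBranch a b) + N₁) := by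
  classical
  refine isIdempotentElem_add_of_mul_eq_self_of_mul_eq_zero (idemMatrix_mul_self _) ?_ ?_
  · ext x y
    rw [h.isMatrix_right.idemMatrix_mul_apply, ite_eq_left_iff]
    refine fun hx ↦ (not_imp_comm.1 (h.right_ne_zero x y) fun ⟨_, _, hxb⟩ ↦ hx ?_).symm
    exact hxb ▸ ⟨hab.right_mem, (src_mem_pivotBranch_iff hab.fst_eq hab.fst_eq).2 (.inr rfl)⟩
  · ext x y
    rw [h.isMatrix_right.mul_idemMatrix_apply, Matrix.zero_apply, ite_eq_right_iff]
    rintro ⟨hyJ, hyB⟩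
    refine not_imp_comm.1 (h.right_ne_zero x y) fun ⟨hy, hyb, _⟩ ↦ ?_
    exact hyb ((hab.mem_pivotBranch_iff_right hdisj hy hyJ).1 hyB)

/-- The idempotent of `idemMatrix_add_mul_mat` is not zero at `a`, and it vanishes at every other
marked vertex of the cycle. -/
lemma eq_or_eq (hab : T.IsClosestPair a b) (hT : T.IsMinimal)
    (hM : Indecomposable (ModuleCat.of (Γ.Alg K) T.Cok)) (hdisj : ∀ x ∈ T.I, x ∉ T.J)
    (hmat : T.mat (Γ.src a) (Γ.src b) ≠ 0) {c : Γ.Arrow} (hac : a.fst = c.fst)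
    (hc : Γ.src c ∈ T.marked) : c = a ∨ c = b := by
  rw [← src_mem_pivotBranch_iff hab.fst_eq hac]
  obtain ⟨N₀, N₁, h⟩ := hab.exists_isElimination hdisj hmat
  have hdiag₀ (x : Γ.Edge) : N₀ x x = 0 :=
    not_imp_comm.1 (h.left_ne_zero x x) fun hx ↦ hx.2.1 hx.2.2
  have hdiag₁ (x : Γ.Edge) : N₁ x x = 0 :=
    not_imp_comm.1 (h.right_ne_zero x x) fun hx ↦ hx.2.1 hx.2.2
  rcases hT.idempotent_matrix_trivial hM
    ((isMatrix_idemMatrix Set.inter_subset_left).add h.isMatrix_left)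
    ((isMatrix_idemMatrix Set.inter_subset_left).add h.isMatrix_right)
    (hab.isIdempotentElem_left hdisj h) (hab.isIdempotentElem_right hdisj h)
    (hab.idemMatrix_add_mul_mat hdisj h) with ⟨h₀, -⟩ | ⟨h₀, h₁⟩
  · have haa := congrFun (congrFun h₀ (Γ.src a)) (Γ.src a)
    rw [Matrix.add_apply, hdiag₀, add_zero] at haa
    exact absurd haa (idemMatrix_apply_self_ne_zero_iff.2
      ⟨hab.left_mem, (src_mem_pivotBranch_iff hab.fst_eq rfl).2 (.inl rfl)⟩)
  · rcases hc with hc | hc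
    · have hcc := congrFun (congrFun h₀ (Γ.src c)) (Γ.src c)
      rw [Matrix.add_apply, hdiag₀, add_zero] at hcc
      exact (idemMatrix_apply_self_ne_zero_iff.1
        (hcc ▸ idemMatrix_apply_self_ne_zero_iff (K := K).2 (Finset.mem_coe.2 hc))).2
    · have hcc := congrFun (congrFun h₁ (Γ.src c)) (Γ.src c)
      rw [Matrix.add_apply, hdiag₁, add_zero] at hcc
      exact (idemMatrix_apply_self_ne_zero_iff.1
        (hcc ▸ idemMatrix_apply_self_ne_zero_iff (K := K).2 (Finset.mem_coe.2 hc))).2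

end IsClosestPair

lemma exists_isClosestPair (T : TwoTermComplex Γ K) {c d : Γ.Arrow} (hcd : c.fst = d.fst)
    (hc : Γ.src c ∈ T.I) (hd : Γ.src d ∈ T.J) :
    ∃ a b : Γ.Arrow, a.fst = c.fst ∧ T.IsClosestPair a b := by
  let P : Set (Γ.Arrow × Γ.Arrow) :=
    {p | p.1.fst = c.fst ∧ p.2.fst = c.fst ∧ Γ.src p.1 ∈ T.I ∧ Γ.src p.2 ∈ T.J}
  have hP : P.Nonempty := ⟨(c, d), rfl, hcd.symm, hc, hd⟩
  -- A pair with the smallest gap is closest.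
  let gap (p : Γ.Arrow × Γ.Arrow) : ℕ := Γ.gap p.1 p.2
  obtain ⟨⟨a, b⟩, ⟨ha, hb, haI, hbJ⟩, hmin⟩ := exists_minimalFor_of_wellFoundedLT (· ∈ P) gap hP
  dsimp only at ha hb haI hbJ
  have hle (i j : Γ.Arrow) (hij : (i, j) ∈ P) : Γ.gap a b ≤ Γ.gap i j :=
    (le_total _ _).elim id fun h ↦ hmin hij h
  refine ⟨a, b, ha, ha.trans hb.symm, haI, hbJ, fun e hae he hea heb ↦ ?_⟩
  have hne : Γ.gap a e ≠ Γ.gap a b := fun h ↦ heb (Γ.gap_inj hae (ha.trans hb.symm) h)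
  have hec : e.fst = c.fst := hae.symm.trans ha
  rcases he with he | he
  · have hmin' := hle e b ⟨hec, hb, he, hbJ⟩
    have hgap := Γ.gap_add_gap hae (hec.trans hb.symm)
    have hpos := (Γ.gap_eq_zero hae).not.2 hea.symm
    have hper := Γ.gap_lt_per (hec.trans hb.symm)
    rw [← Γ.per_eq hae] at hper
    omega
  · have hmin' := hle a e ⟨ha, hec, haI, he⟩
    omega

section Rigid

variable [HasDerivedCategory.{w} (ModuleCat.{max u v} (Γ.Alg K))]

lemma exists_pair (T : TwoTermComplex Γ K) (hT : T.IsMinimal) (h : T.HomZero T 1)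
    (hM : Indecomposable (ModuleCat.of (Γ.Alg K) T.Cok)) {c d : Γ.Arrow} (hcd : c.fst = d.fst)
    (hc : Γ.src c ∈ T.I) (hd : Γ.src d ∈ T.J) :
    T.mat (Γ.src c) (Γ.src d) ≠ 0 ∧
      ∀ e : Γ.Arrow, e.fst = c.fst → Γ.src e ∈ T.marked → e = c ∨ e = d := by
  have hdisj : ∀ x ∈ T.I, x ∉ T.J := fun x hx ↦ T.disjoint_of_isMinimal hT h hx
  obtain ⟨a, b, ha, hab⟩ := T.exists_isClosestPair hcd hc hd
  have hmat := hab.mat_ne_zero hT h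
  have hall {e : Γ.Arrow} (he : a.fst = e.fst) (hmem : Γ.src e ∈ T.marked) : e = a ∨ e = b :=
    hab.eq_or_eq hT hM hdisj hmat he hmem
  obtain rfl : c = a :=
    (hall ha (.inl hc)).resolve_right fun h ↦ hdisj _ hc (h ▸ hab.right_mem)
  obtain rfl : d = b :=
    (hall (ha.trans hcd) (.inr hd)).resolve_left fun h ↦ hdisj _ hab.left_mem (h ▸ hd)
  exact ⟨hmat, fun e he ↦ hall he.symm⟩

theorem isZigzag (T : TwoTermComplex Γ K) (hT : T.IsMinimal) (h : T.HomZero T 1)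
    (hM : Indecomposable (ModuleCat.of (Γ.Alg K) T.Cok)) : Γ.IsZigzag T.I T.J where
  disjoint x hx := T.disjoint_of_isMinimal hT h hx
  unique_left a b hab ha hb := by
    by_cases hno : ∃ d : Γ.Arrow, a.fst = d.fst ∧ Γ.src d ∈ T.J
    · obtain ⟨d, hd, hdJ⟩ := hno
      refine (((T.exists_pair hT h hM hd ha hdJ).2 b hab.symm (.inl hb)).resolve_right ?_).symm
      rintro rfl
      exact T.disjoint_of_isMinimal hT h hb hdJ
    · exact T.eq_of_same_type hT hM hab (.inl ha) (.inl hb)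
        fun c d _ hd _ hdJ ↦ hno ⟨d, hd.symm, hdJ⟩
  unique_right a b hab ha hb := by
    by_cases hno : ∃ d : Γ.Arrow, d.fst = a.fst ∧ Γ.src d ∈ T.I
    · obtain ⟨d, hd, hdI⟩ := hno
      refine (Or.resolve_left
        ((T.exists_pair hT h hM hd hdI ha).2 b (hab.symm.trans hd.symm) (.inr hb)) ?_).symm
      rintro rfl
      exact T.disjoint_of_isMinimal hT h hdI hb
    · exact T.eq_of_same_type hT hM hab (.inr ha) (.inr hb)
        fun c d hc _ hcI _ ↦ hno ⟨c, hc, hcI⟩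
  reachable u hu w hw := T.reachable_marked hT hM hu hw

lemma mat_ne_zero (T : TwoTermComplex Γ K) (hT : T.IsMinimal) (h : T.HomZero T 1)
    (hM : Indecomposable (ModuleCat.of (Γ.Alg K) T.Cok)) {c d : Γ.Arrow} (hcd : c.fst = d.fst)
    (hc : Γ.src c ∈ T.I) (hd : Γ.src d ∈ T.J) : T.mat (Γ.src c) (Γ.src d) ≠ 0 :=
  (T.exists_pair hT h hM hcd hc hd).1

end Rigid

end TwoTermComplex
/-! ### The common part of two subtrees -/

namespace BrauerTree

variable {V : Type v} (Γ : BrauerTree V)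

lemma edgeGraph_le (M : Set Γ.Edge) : Γ.edgeGraph M ≤ Γ.graph := by
  rintro u w ⟨d, -, rfl, rfl⟩
  exact d.adj

lemma edgeGraph_adj {M : Set Γ.Edge} {d : Γ.Arrow} :
    (Γ.edgeGraph M).Adj d.fst d.snd ↔ Γ.src d ∈ M := by
  constructor
  · rintro ⟨d', h, hfst, hsnd⟩
    rwa [← SimpleGraph.Dart.ext d' d (Prod.ext hfst hsnd)]
  · exact fun h ↦ ⟨d, h, rfl, rfl⟩

lemma path_unique {u w : V} {p q : Γ.graph.Walk u w} (hp : p.IsPath) (hq : q.IsPath) : p = q :=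
  Subtype.mk.inj ((Γ.isTree.isAcyclic.subsingleton_path u w).elim ⟨p, hp⟩ ⟨q, hq⟩)

lemma src_mem_of_mem_path {M : Set Γ.Edge} {u w : V} (h : (Γ.edgeGraph M).Reachable u w)
    {p : Γ.graph.Walk u w} (hp : p.IsPath) {d : Γ.Arrow} (hd : d ∈ p.darts) : Γ.src d ∈ M := by
  classical
  obtain ⟨q⟩ := h
  have hq : (q.toPath.1.mapLe (Γ.edgeGraph_le M)).IsPath :=
    (SimpleGraph.Walk.isPath_mapLe _).2 q.toPath.2
  rw [Γ.path_unique hp hq] at hd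
  have hd' : d.edge ∈ (q.toPath.1.mapLe (Γ.edgeGraph_le M)).edges := List.mem_map.2 ⟨d, hd, rfl⟩
  rw [SimpleGraph.Walk.edges_mapLe_eq_edges] at hd'
  exact Γ.edgeGraph_adj.1 (SimpleGraph.Walk.edges_subset_edgeSet _ hd')

lemma reachable_of_src_mem {M : Set Γ.Edge} {u w : V} (p : Γ.graph.Walk u w)
    (hp : ∀ d ∈ p.darts, Γ.src d ∈ M) : (Γ.edgeGraph M).Reachable u w := by
  induction p with
  | nil => exact SimpleGraph.Reachable.refl _
  | cons h p ih =>
    have hadj : (Γ.edgeGraph M).Adj _ _ := Γ.edgeGraph_adj.2 (hp ⟨(_, _), h⟩ (by simp))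
    exact hadj.reachable.trans (ih fun d hd ↦ hp d (by simp [hd]))

/-- The set of edges `M` is connected. -/
def EdgeConnected (M : Set Γ.Edge) : Prop :=
  ∀ u ∈ Γ.ends M, ∀ w ∈ Γ.ends M, (Γ.edgeGraph M).Reachable u w

variable {Γ} {M N : Set Γ.Edge}

lemma EdgeConnected.reachable_inter (hM : Γ.EdgeConnected M) (hN : Γ.EdgeConnected N) {u w : V}
    (hu : u ∈ Γ.ends M ∩ Γ.ends N) (hw : w ∈ Γ.ends M ∩ Γ.ends N) :
    (Γ.edgeGraph (M ∩ N)).Reachable u w := by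
  obtain ⟨p, hp, -⟩ := Γ.isTree.existsUnique_path u w
  exact Γ.reachable_of_src_mem p fun d hd ↦
    ⟨Γ.src_mem_of_mem_path (hM u hu.1 w hw.1) hp hd,
      Γ.src_mem_of_mem_path (hN u hu.2 w hw.2) hp hd⟩

lemma EdgeConnected.src_mem (hM : Γ.EdgeConnected M) {d : Γ.Arrow} (hfst : d.fst ∈ Γ.ends M)
    (hsnd : d.snd ∈ Γ.ends M) : Γ.src d ∈ M := by
  have hp : (SimpleGraph.Walk.cons d.adj .nil : Γ.graph.Walk d.fst d.snd).IsPath := by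
    simp [SimpleGraph.Walk.cons_isPath_iff, d.fst_ne_snd]
  exact Γ.src_mem_of_mem_path (hM _ hfst _ hsnd) hp (by simp)

lemma EdgeConnected.mem_ends_of_adj (hM : Γ.EdgeConnected M) (hN : Γ.EdgeConnected N)
    {c : V} (hc : c ∈ Γ.ends M ∩ Γ.ends N) {d : Γ.Arrow} (hfst : d.fst ∈ Γ.ends M)
    (hsnd : d.snd ∈ Γ.ends N) (hsnd' : d.snd ∉ Γ.ends M) : d.fst ∈ Γ.ends N := by
  classical
  obtain ⟨p, hp, -⟩ := Γ.isTree.existsUnique_path d.fst c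
  have hsup : d.snd ∉ p.support := by
    intro hmem
    by_cases hnil : p.Nil
    · rw [SimpleGraph.Walk.nil_iff_support_eq.1 hnil] at hmem
      exact d.fst_ne_snd (List.mem_singleton.1 hmem).symm
    · rw [SimpleGraph.Walk.mem_support_iff_exists_mem_edges_of_not_nil hnil] at hmem
      obtain ⟨e, he, hme⟩ := hmem
      obtain ⟨d', hd', rfl⟩ := List.mem_map.1 he
      exact hsnd' ⟨Γ.src d', Γ.src_mem_of_mem_path (hM _ hfst _ hc.1) hp hd', hme⟩
  have hq : (SimpleGraph.Walk.cons d.adj.symm p).IsPath :=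
    (SimpleGraph.Walk.cons_isPath_iff _ _).2 ⟨hp, hsup⟩
  have hmem : d.symm ∈ (SimpleGraph.Walk.cons d.adj.symm p).darts := by
    rw [SimpleGraph.Walk.darts_cons]
    exact List.mem_cons_self
  exact ⟨_, Γ.src_mem_of_mem_path (hN _ hsnd _ hc.2) hq hmem, Γ.inc_src_iff.2 (.inr rfl)⟩

variable (M N) in
/-- The tree formed by the edges common to `M` and `N`. -/
def commonGraph : SimpleGraph ↥(Γ.ends M ∩ Γ.ends N) :=
  (Γ.edgeGraph (M ∩ N)).induce (Γ.ends M ∩ Γ.ends N)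

lemma EdgeConnected.isTree_commonGraph (hM : Γ.EdgeConnected M) (hN : Γ.EdgeConnected N)
    (hne : (Γ.ends M ∩ Γ.ends N).Nonempty) : (commonGraph M N).IsTree := by
  refine ⟨?_, (Γ.isTree.isAcyclic.anti (Γ.edgeGraph_le _)).induce _⟩
  have : Nonempty ↥(Γ.ends M ∩ Γ.ends N) := hne.to_subtype
  refine SimpleGraph.Connected.mk ?_
  rintro ⟨u, hu⟩ ⟨w, hw⟩
  obtain ⟨p⟩ := hM.reachable_inter hN hu hw
  induction p with
  | nil => exact SimpleGraph.Reachable.refl _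
  | cons h p ih =>
    rename_i a b c
    have hb : b ∈ Γ.ends M ∩ Γ.ends N := by
      obtain ⟨d, hd, rfl, rfl⟩ := h
      exact ⟨⟨_, hd.1, Γ.inc_src_iff.2 (.inr rfl)⟩, ⟨_, hd.2, Γ.inc_src_iff.2 (.inr rfl)⟩⟩
    have hadj : (commonGraph M N).Adj ⟨a, hu⟩ ⟨b, hb⟩ := h
    exact hadj.reachable.trans (ih hb hw)

lemma EdgeConnected.induction_common (hM : Γ.EdgeConnected M) (hN : Γ.EdgeConnected N)
    {P : V → Prop} {u : V} (hu : u ∈ Γ.ends M ∩ Γ.ends N) (h0 : P u)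
    (hstep : ∀ d : Γ.Arrow, Γ.src d ∈ M → Γ.src d ∈ N → P d.fst → P d.snd) :
    ∀ w ∈ Γ.ends M ∩ Γ.ends N, P w := by
  intro w hw
  obtain ⟨p⟩ := hM.reachable_inter hN hu hw
  clear hu hw
  induction p with
  | nil => exact h0
  | cons h p ih =>
    apply ih
    obtain ⟨d, hd, rfl, rfl⟩ := h
    exact hstep d hd.1 hd.2 h0

lemma exists_src_eq_of_commonGraph_adj {u w : ↥(Γ.ends M ∩ Γ.ends N)}
    (h : (commonGraph M N).Adj u w) : ∃ d : Γ.Arrow, Γ.src d ∈ M ∩ N ∧ d.fst = u ∧ d.snd = w :=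
  h

open Classical in
lemma EdgeConnected.card_lt [Finite V] (hM : Γ.EdgeConnected M) (hN : Γ.EdgeConnected N)
    (hne : (Γ.ends M ∩ Γ.ends N).Nonempty) :
    Nat.card ↥(M ∩ N) < Nat.card ↥(Γ.ends M ∩ Γ.ends N) := by
  have := Fintype.ofFinite V
  rw [Nat.card_eq_fintype_card, Nat.card_eq_fintype_card,
    ← (hM.isTree_commonGraph hN hne).card_edgeFinset, Nat.lt_succ_iff, SimpleGraph.edgeFinset_card]
  have hex (e : ↥(M ∩ N)) :
      ∃ e' : (commonGraph M N).edgeSet, Sym2.map Subtype.val e'.1 = e.1.1 := by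
    obtain ⟨e, he⟩ := e
    obtain ⟨d, rfl⟩ := Γ.exists_src_eq e
    have hends {v : V} (hv : Γ.Inc v (Γ.src d)) : v ∈ Γ.ends M ∩ Γ.ends N :=
      ⟨⟨_, he.1, hv⟩, ⟨_, he.2, hv⟩⟩
    exact ⟨⟨s(⟨d.fst, hends (Γ.inc_fst d)⟩, ⟨d.snd, hends (Γ.inc_src_iff.2 (.inr rfl))⟩),
      Γ.edgeGraph_adj.2 he⟩, rfl⟩
  choose g hg using hex
  refine Fintype.card_le_of_injective g fun e e' h ↦ ?_
  exact Subtype.ext (Subtype.ext (by rw [← hg e, ← hg e', h]))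

open Classical in
lemma degree_commonGraph_le [Fintype V] {β : Type*} [Fintype β] (u : ↥(Γ.ends M ∩ Γ.ends N))
    (f : Γ.Edge → β) (hf : ∀ d d' : Γ.Arrow, d.fst = u → d'.fst = u →
      Γ.src d ∈ M ∩ N → Γ.src d' ∈ M ∩ N → f (Γ.src d) = f (Γ.src d') → d = d') :
    (commonGraph M N).degree u ≤ Fintype.card β := by
  rw [← SimpleGraph.card_neighborSet_eq_degree]
  choose d hd hfst hsnd using fun w : (commonGraph M N).neighborSet u ↦
    exists_src_eq_of_commonGraph_adj w.2
  refine Fintype.card_le_of_injective (fun w ↦ f (Γ.src (d w))) fun w w' h ↦ ?_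
  refine Subtype.ext (Subtype.ext ?_)
  rw [← hsnd w, ← hsnd w', hf _ _ (hfst w) (hfst w') (hd w) (hd w') h]

end BrauerTree

/-- The handshaking lemma: the degrees of a tree with `n` vertices add up to `2 * n - 2`. -/
lemma card_le_two_of_degree_le_one {W : Type*} [Fintype W] {G : SimpleGraph W}
    [DecidableRel G.Adj] (hG : G.IsTree) (hdeg : ∀ u, G.degree u ≤ 2) {s : Finset W}
    (hs : ∀ u ∈ s, G.degree u ≤ 1) : s.card ≤ 2 := by
  classical
  have hle (u : W) : G.degree u + (if u ∈ s then 1 else 0) ≤ 2 := by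
    split_ifs with hu
    · exact Nat.succ_le_succ (hs u hu)
    · exact hdeg u
  have hsum := Finset.sum_le_sum fun u (_ : u ∈ Finset.univ) ↦ hle u
  rw [Finset.sum_add_distrib, G.sum_degrees_eq_twice_card_edges, Finset.sum_boole,
    Finset.filter_mem_eq_inter, Finset.univ_inter, Finset.sum_const, Finset.card_univ,
    ← hG.card_edgeFinset, smul_eq_mul, Nat.cast_id] at hsum
  omega

namespace BrauerTree

variable {V : Type v} [Finite V] {Γ : BrauerTree V} {M N : Set Γ.Edge}

lemma EdgeConnected.no_three_leaves (hM : Γ.EdgeConnected M) (hN : Γ.EdgeConnected N)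
    {I : Set Γ.Edge}
    (hI : ∀ d d' : Γ.Arrow, d.fst = d'.fst → Γ.src d ∈ M ∩ N → Γ.src d' ∈ M ∩ N →
      (Γ.src d ∈ I ↔ Γ.src d' ∈ I) → d = d')
    {s : Finset V} (hs : ∀ v ∈ s, v ∈ Γ.ends M ∩ Γ.ends N)
    (hleaf : ∀ v ∈ s, ∀ d d' : Γ.Arrow, d.fst = v → d'.fst = v → Γ.src d ∈ M ∩ N →
      Γ.src d' ∈ M ∩ N → d = d') : s.card ≤ 2 := by
  classical
  have := Fintype.ofFinite V
  rcases s.eq_empty_or_nonempty with rfl | ⟨v, hv⟩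
  · exact Nat.zero_le 2
  rw [← Finset.filter_true_of_mem hs, ← Finset.card_subtype]
  refine card_le_two_of_degree_le_one (hM.isTree_commonGraph hN ⟨v, hs v hv⟩)
    (fun u ↦ degree_commonGraph_le u (fun z ↦ decide (z ∈ I)) ?_)
    fun u hu ↦ degree_commonGraph_le u (fun _ ↦ ()) ?_
  · intro d d' hd hd' hmem hmem' h
    exact hI d d' (hd.trans hd'.symm) hmem hmem' (decide_eq_decide.1 h)
  · intro d d' hd hd' hmem hmem' _
    exact hleaf u (Finset.mem_subtype.1 hu) d d' hd hd' hmem hmem'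

end BrauerTree
/-! ### Morphisms of degree `-1` between alternating paths -/

namespace TwoTermComplex

variable {V : Type v} [Fintype V] {Γ : BrauerTree V} {K : Type u} [Field K]

/-- The path from the sink `y` of `S` to the source `x'` of `T` inside a cycle is annihilated by
the differentials of `S` and `T`, up to socle elements. -/
structure IsGoodPair (S T : TwoTermComplex Γ K) (y x' : Γ.Arrow) : Prop where
  fst_eq : y.fst = x'.fst
  sink_mem : Γ.src y ∈ S.J
  source_mem : Γ.src x' ∈ T.I
  left : ∀ x : Γ.Arrow, x.fst = y.fst → Γ.src x ∈ S.I →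
    x = x' ∨ Γ.per y ≤ Γ.gap x y + Γ.gap y x'
  right : ∀ y' : Γ.Arrow, x'.fst = y'.fst → Γ.src y' ∈ T.J →
    y' = y ∨ Γ.per y ≤ Γ.gap y x' + Γ.gap x' y'

/-- A nonzero morphism `S → T[-1]` may have a nonzero component on the cycle at `v`. -/
def Good (S T : TwoTermComplex Γ K) (v : V) : Prop :=
  ∃ y x' : Γ.Arrow, y.fst = v ∧ S.IsGoodPair T y x'

/-- The diagram of `T` is an alternating path, all of whose steps are actual components of the
differential. -/
structure IsString (T : TwoTermComplex Γ K) : Prop where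
  zigzag : Γ.IsZigzag T.I T.J
  mat_ne_zero : ∀ {c d : Γ.Arrow}, c.fst = d.fst → Γ.src c ∈ T.I → Γ.src d ∈ T.J →
    T.mat (Γ.src c) (Γ.src d) ≠ 0

/-- The vertices of the tree that are end points of marked edges of both complexes. -/
def meet (S T : TwoTermComplex Γ K) : Set V := Γ.ends S.marked ∩ Γ.ends T.marked

variable {S T : TwoTermComplex Γ K}

lemma mem_ends {a : Γ.Arrow} (h : Γ.src a ∈ S.marked) : a.fst ∈ Γ.ends S.marked :=
  ⟨_, h, Γ.inc_fst a⟩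

namespace IsString

lemma edgeConnected (hT : T.IsString) : Γ.EdgeConnected T.marked := hT.zigzag.reachable

lemma ne (hT : T.IsString) {x y : Γ.Edge} (hx : x ∈ T.I) (hy : y ∈ T.J) : x ≠ y :=
  fun hxy ↦ hT.zigzag.disjoint x hx (hxy ▸ hy)

lemma mat_eq_smul_path (hT : T.IsString) {x y : Γ.Arrow} (hxy : x.fst = y.fst)
    (hx : Γ.src x ∈ T.I) (hy : Γ.src y ∈ T.J) :
    ∃ s : K, s ≠ 0 ∧ T.mat (Γ.src x) (Γ.src y) = s • Γ.path K x y := by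
  obtain ⟨s, hs⟩ := Γ.isHom_eq_smul hxy (fun h ↦ hT.ne hx hy (congrArg Γ.src h))
    (T.isHom_mat _ _)
  refine ⟨s, ?_, hs⟩
  rintro rfl
  exact hT.mat_ne_zero hxy hx hy (by rw [hs, zero_smul])

lemma eq_zero_of_mat_mul_eq_zero (hS : S.IsString) {x y x' : Γ.Arrow} (hxy : x.fst = y.fst)
    (hyx' : y.fst = x'.fst) (hne : y ≠ x') (hx : Γ.src x ∈ S.I) (hy : Γ.src y ∈ S.J)
    {z : Γ.Alg K} (hz : Γ.IsHom K (Γ.src y) (Γ.src x') z)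
    (hpath : Γ.path K x y * Γ.path K y x' ≠ 0) (h : S.mat (Γ.src x) (Γ.src y) * z = 0) :
    z = 0 := by
  obtain ⟨s, hs, hmat⟩ := hS.mat_eq_smul_path hxy hx hy
  obtain ⟨t, rfl⟩ := Γ.isHom_eq_smul hyx' hne hz
  rw [hmat, smul_mul_smul_comm] at h
  rw [(mul_eq_zero.1 ((smul_eq_zero.1 h).resolve_right hpath)).resolve_left hs, zero_smul]

lemma eq_zero_of_mul_mat_eq_zero (hT : T.IsString) {y x' y' : Γ.Arrow} (hyx' : y.fst = x'.fst)
    (hxy' : x'.fst = y'.fst) (hne : y ≠ x') (hx' : Γ.src x' ∈ T.I) (hy' : Γ.src y' ∈ T.J)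
    {z : Γ.Alg K} (hz : Γ.IsHom K (Γ.src y) (Γ.src x') z)
    (hpath : Γ.path K y x' * Γ.path K x' y' ≠ 0) (h : z * T.mat (Γ.src x') (Γ.src y') = 0) :
    z = 0 := by
  obtain ⟨s, hs, hmat⟩ := hT.mat_eq_smul_path hxy' hx' hy'
  obtain ⟨t, rfl⟩ := Γ.isHom_eq_smul hyx' hne hz
  rw [hmat, smul_mul_smul_comm] at h
  rw [(mul_eq_zero.1 ((smul_eq_zero.1 h).resolve_right hpath)).resolve_right hs, zero_smul]

end IsString

section Annihilated

variable {M : Matrix Γ.Edge Γ.Edge (Γ.Alg K)}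

lemma apply_eq_zero_of_gap_add_gap_lt_left (hS : S.IsString) (hopp : ∀ x ∈ S.J, x ∉ T.I)
    (hM : Γ.IsMatrix S.J T.I M) (hSM : S.mat * M = 0) {x y x' : Γ.Arrow} (hxy : x.fst = y.fst)
    (hyx' : y.fst = x'.fst) (hx : Γ.src x ∈ S.I) (hy : Γ.src y ∈ S.J) (hx' : Γ.src x' ∈ T.I)
    (hne : x ≠ x') (hgap : Γ.gap x y + Γ.gap y x' < Γ.per y) : M (Γ.src y) (Γ.src x') = 0 := by
  have hyne : y ≠ x' := fun h ↦ hopp _ hy (h ▸ hx')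
  refine hS.eq_zero_of_mat_mul_eq_zero hxy hyx' hyne hx hy (hM.isHom _ _) ?_ ?_
  · rw [Γ.path_mul_path_of_le hxy hyx' (by rwa [Γ.per_eq hxy])]
    exact Γ.path_ne_zero (hxy.trans hyx')
  · rw [← Matrix.zero_apply (α := Γ.Alg K) (Γ.src x) (Γ.src x'), ← hSM, Matrix.mul_apply,
      Finset.sum_eq_single_of_mem _ (Finset.mem_univ (Γ.src y))]
    intro z _ hzy
    by_contra h
    have hz : z ∈ S.J := (hM.mem _ _ (right_ne_zero_of_mul h)).1
    obtain ⟨a, b, c, hab, hbc, ha, rfl, hc⟩ := Γ.exists_darts_of_mul_ne_zero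
      (hS.ne hx hz) (fun h ↦ hopp _ hz (h ▸ hx')) (S.isHom_mat _ _) (hM.isHom _ _) h
    obtain ⟨rfl, rfl⟩ := Γ.darts_unique (hxy.trans hyx') hne (hab.trans hbc) ha hc
    exact hzy (by rw [hS.zigzag.unique_right b y (hab.symm.trans hxy) hz hy])

lemma apply_eq_zero_of_gap_add_gap_lt_right (hT : T.IsString) (hopp : ∀ x ∈ S.J, x ∉ T.I)
    (hM : Γ.IsMatrix S.J T.I M) (hMT : M * T.mat = 0) {y x' y' : Γ.Arrow} (hyx' : y.fst = x'.fst)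
    (hxy' : x'.fst = y'.fst) (hy : Γ.src y ∈ S.J) (hx' : Γ.src x' ∈ T.I) (hy' : Γ.src y' ∈ T.J)
    (hne : y' ≠ y) (hgap : Γ.gap y x' + Γ.gap x' y' < Γ.per y) : M (Γ.src y) (Γ.src x') = 0 := by
  have hyne : y ≠ x' := fun h ↦ hopp _ hy (h ▸ hx')
  refine hT.eq_zero_of_mul_mat_eq_zero hyx' hxy' hyne hx' hy' (hM.isHom _ _) ?_ ?_
  · rw [Γ.path_mul_path_of_le hyx' hxy' hgap]
    exact Γ.path_ne_zero (hyx'.trans hxy')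
  · rw [← Matrix.zero_apply (α := Γ.Alg K) (Γ.src y) (Γ.src y'), ← hMT, Matrix.mul_apply,
      Finset.sum_eq_single_of_mem _ (Finset.mem_univ (Γ.src x'))]
    intro z _ hzx
    by_contra h
    have hz : z ∈ T.I := (hM.mem _ _ (left_ne_zero_of_mul h)).2
    obtain ⟨a, b, c, hab, hbc, ha, rfl, hc⟩ := Γ.exists_darts_of_mul_ne_zero
      (fun (h : Γ.src y = z) ↦ hopp _ hy (h ▸ hz)) (hT.ne hz hy') (hM.isHom _ _)
      (T.isHom_mat _ _) h
    obtain ⟨rfl, rfl⟩ := Γ.darts_unique (hyx'.trans hxy') hne.symm (hab.trans hbc) ha hc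
    exact hzx (by rw [hT.zigzag.unique_left b x' (hab.symm.trans hyx') hz hx'])

lemma apply_eq_zero_of_not_good (hS : S.IsString) (hT : T.IsString) (hopp : ∀ x ∈ S.J, x ∉ T.I)
    (hM : Γ.IsMatrix S.J T.I M) (hMT : M * T.mat = 0) (hSM : S.mat * M = 0) {y x' : Γ.Arrow}
    (hyx' : y.fst = x'.fst) (hv : ¬ S.Good T y.fst) : M (Γ.src y) (Γ.src x') = 0 := by
  by_contra h
  obtain ⟨hy, hx'⟩ := hM.mem _ _ h
  refine hv ⟨y, x', rfl, hyx', hy, hx', fun x hxy hx ↦ ?_, fun y' hxy' hy' ↦ ?_⟩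
  · by_contra! hlt
    exact h (apply_eq_zero_of_gap_add_gap_lt_left hS hopp hM hSM hxy hyx' hx hy hx' hlt.1 hlt.2)
  · by_contra! hlt
    exact h (apply_eq_zero_of_gap_add_gap_lt_right hT hopp hM hMT hyx' hxy' hy hx' hy' hlt.1 hlt.2)

lemma apply_eq_zero_of_mem_source (hS : S.IsString) (hopp : ∀ x ∈ S.J, x ∉ T.I)
    (hM : Γ.IsMatrix S.J T.I M) (hSM : S.mat * M = 0) {y x' : Γ.Arrow} (hyx' : y.fst = x'.fst)
    (hy : Γ.src y ∈ S.J) (hxS : Γ.src x' ∈ S.I) (hxT : Γ.src x' ∈ T.I)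
    (hfar : ∀ z : Γ.Arrow, z.fst = x'.snd → M (Γ.src z) (Γ.src x') = 0) :
    M (Γ.src y) (Γ.src x') = 0 := by
  have hne : y ≠ x' := fun h ↦ hopp _ hy (h ▸ hxT)
  refine hS.eq_zero_of_mat_mul_eq_zero hyx'.symm hyx' hne hxS hy (hM.isHom _ _) ?_ ?_
  · rw [Γ.path_mul_path_self hyx'.symm hne.symm]
    exact Γ.run_per_ne_zero K x'
  · rw [← Matrix.zero_apply (α := Γ.Alg K) (Γ.src x') (Γ.src x'), ← hSM, Matrix.mul_apply,
      Finset.sum_eq_single_of_mem _ (Finset.mem_univ (Γ.src y))]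
    intro z _ hzy
    by_contra h
    have h := right_ne_zero_of_mul h
    obtain ⟨a, b, hab, rfl, hb⟩ := Γ.exists_darts_of_isHom_ne_zero (hM.isHom _ _) h
    rcases Γ.src_eq_src_iff.1 hb with rfl | rfl
    · exact hzy (by rw [hS.zigzag.unique_right a y (hab.trans hyx'.symm) (hM.mem _ _ h).1 hy])
    · exact h (hfar a hab)

lemma apply_eq_zero_of_mem_sink (hT : T.IsString) (hopp : ∀ x ∈ S.J, x ∉ T.I)
    (hM : Γ.IsMatrix S.J T.I M) (hMT : M * T.mat = 0) {y x' : Γ.Arrow} (hyx' : y.fst = x'.fst)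
    (hx' : Γ.src x' ∈ T.I) (hyS : Γ.src y ∈ S.J) (hyT : Γ.src y ∈ T.J)
    (hfar : ∀ z : Γ.Arrow, z.fst = y.snd → M (Γ.src y) (Γ.src z) = 0) :
    M (Γ.src y) (Γ.src x') = 0 := by
  have hne : y ≠ x' := fun h ↦ hopp _ hyS (h ▸ hx')
  refine hT.eq_zero_of_mul_mat_eq_zero hyx' hyx'.symm hne hx' hyT (hM.isHom _ _) ?_ ?_
  · rw [Γ.path_mul_path_self hyx' hne]
    exact Γ.run_per_ne_zero K y
  · rw [← Matrix.zero_apply (α := Γ.Alg K) (Γ.src y) (Γ.src y), ← hMT, Matrix.mul_apply,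
      Finset.sum_eq_single_of_mem _ (Finset.mem_univ (Γ.src x'))]
    intro z _ hzx
    by_contra h
    have h := left_ne_zero_of_mul h
    obtain ⟨a, b, hab, ha, rfl⟩ := Γ.exists_darts_of_isHom_ne_zero (hM.isHom _ _) h
    rcases Γ.src_eq_src_iff.1 ha with rfl | rfl
    · exact hzx (by rw [hT.zigzag.unique_left b x' (hab.symm.trans hyx') (hM.mem _ _ h).2 hx'])
    · exact h (hfar b hab.symm)

/-- Vanishing spreads from the cycle at one end of a common marked edge to the cycle at the other
end. -/
lemma apply_eq_zero_of_forall_fst (hS : S.IsString) (hT : T.IsString) (hopp : ∀ x ∈ S.J, x ∉ T.I)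
    (hM : Γ.IsMatrix S.J T.I M) (hopp' : ∀ x ∈ S.I, x ∉ T.J) (hMT : M * T.mat = 0)
    (hSM : S.mat * M = 0) {d : Γ.Arrow} (hdS : Γ.src d ∈ S.marked) (hdT : Γ.src d ∈ T.marked)
    (hd : ∀ y x' : Γ.Arrow, y.fst = d.fst → x'.fst = d.fst → M (Γ.src y) (Γ.src x') = 0)
    {y x' : Γ.Arrow} (hy : y.fst = d.snd) (hx' : x'.fst = d.snd) : M (Γ.src y) (Γ.src x') = 0 := by
  by_contra h
  obtain ⟨hyJ, hxI⟩ := hM.mem _ _ h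
  have hsrc : Γ.src d.symm = Γ.src d := Γ.src_symm d
  rcases hdS with hdS | hdS <;> rcases hdT with hdT | hdT
  · obtain rfl : x' = d.symm := hT.zigzag.unique_left _ _ hx' hxI (hsrc ▸ hdT)
    refine h (apply_eq_zero_of_mem_source hS hopp hM hSM hy hyJ (hsrc ▸ hdS) hxI fun z hz ↦ ?_)
    rw [hsrc]
    exact hd z d hz rfl
  · exact hopp' _ hdS hdT
  · exact hopp _ hdS hdT
  · obtain rfl : y = d.symm := hS.zigzag.unique_right _ _ hy hyJ (hsrc ▸ hdS)
    refine h (apply_eq_zero_of_mem_sink hT hopp hM hMT hx'.symm hxI hyJ (hsrc ▸ hdT) fun z hz ↦ ?_)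
    rw [hsrc]
    exact hd d z rfl hz

end Annihilated

namespace IsGoodPair

variable {y x' : Γ.Arrow}

lemma ne (h : S.IsGoodPair T y x') (hopp : ∀ x ∈ S.J, x ∉ T.I) : y ≠ x' :=
  fun hyx ↦ hopp _ h.sink_mem (hyx ▸ h.source_mem)

lemma src_ne (h : S.IsGoodPair T y x') (hopp : ∀ x ∈ S.J, x ∉ T.I) : Γ.src y ≠ Γ.src x' :=
  fun hyx ↦ hopp _ h.sink_mem (hyx ▸ h.source_mem)

lemma path_mul_mat_eq_zero (h : S.IsGoodPair T y x') (hT : T.IsString) (hopp : ∀ x ∈ S.J, x ∉ T.I)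
    {z : Γ.Edge} (hz : z ≠ Γ.src y) : Γ.path K y x' * T.mat (Γ.src x') z = 0 := by
  by_contra h0
  have hzJ : z ∈ T.J := (T.isMatrix_mat.mem _ _ (right_ne_zero_of_mul h0)).2
  obtain ⟨a, b, c, hab, hbc, ha, hb, rfl⟩ := Γ.exists_darts_of_mul_ne_zero (h.src_ne hopp)
    (hT.ne h.source_mem hzJ) (Γ.isHom_path h.fst_eq) (T.isHom_mat _ _) h0
  obtain ⟨rfl, rfl⟩ := Γ.darts_unique h.fst_eq (h.ne hopp) hab ha hb
  have hne : c ≠ a := fun hca ↦ hz (congrArg Γ.src hca)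
  obtain ⟨s, -, hs⟩ := hT.mat_eq_smul_path hbc h.source_mem hzJ
  rw [hs, mul_smul_comm, Γ.path_mul_path_eq_zero hab hbc hne.symm
    ((h.right c hbc hzJ).resolve_left hne), smul_zero] at h0
  exact h0 rfl

lemma mat_mul_path_eq_zero (h : S.IsGoodPair T y x') (hS : S.IsString) (hopp : ∀ x ∈ S.J, x ∉ T.I)
    {z : Γ.Edge} (hz : z ≠ Γ.src x') : S.mat z (Γ.src y) * Γ.path K y x' = 0 := by
  by_contra h0
  have hzI : z ∈ S.I := (S.isMatrix_mat.mem _ _ (left_ne_zero_of_mul h0)).1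
  obtain ⟨a, b, c, hab, hbc, rfl, hb, hc⟩ := Γ.exists_darts_of_mul_ne_zero
    (hS.ne hzI h.sink_mem) (h.src_ne hopp) (S.isHom_mat _ _) (Γ.isHom_path h.fst_eq) h0
  obtain ⟨rfl, rfl⟩ := Γ.darts_unique h.fst_eq (h.ne hopp) hbc hb hc
  have hne : a ≠ c := fun hac ↦ hz (congrArg Γ.src hac)
  obtain ⟨s, -, hs⟩ := hS.mat_eq_smul_path hab hzI h.sink_mem
  rw [hs, smul_mul_assoc, Γ.path_mul_path_eq_zero hab hbc hne
    ((Γ.per_eq hab).trans_le ((h.left a hab hzI).resolve_left hne)), smul_zero] at h0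
  exact h0 rfl

open Classical in
lemma single_mul_mat (h : S.IsGoodPair T y x') (hT : T.IsString) (hopp : ∀ x ∈ S.J, x ∉ T.I) :
    Matrix.single (Γ.src y) (Γ.src x') (Γ.path K y x') * T.mat =
      Matrix.single (Γ.src y) (Γ.src y) (Γ.path K y x' * T.mat (Γ.src x') (Γ.src y)) := by
  ext a b
  by_cases ha : a = Γ.src y
  · subst ha
    rw [Matrix.single_mul_apply_same]
    by_cases hb : b = Γ.src y
    · rw [hb, Matrix.single_apply_same]
    · rw [h.path_mul_mat_eq_zero hT hopp hb, Matrix.single_apply_of_ne _ _ _ _ _ (hb ·.2.symm)]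
  · rw [Matrix.single_mul_apply_of_ne _ _ _ _ _ ha,
      Matrix.single_apply_of_ne _ _ _ _ _ (ha ·.1.symm)]

open Classical in
lemma mat_mul_single (h : S.IsGoodPair T y x') (hS : S.IsString) (hopp : ∀ x ∈ S.J, x ∉ T.I) :
    S.mat * Matrix.single (Γ.src y) (Γ.src x') (Γ.path K y x') =
      Matrix.single (Γ.src x') (Γ.src x') (S.mat (Γ.src x') (Γ.src y) * Γ.path K y x') := by
  ext a b
  by_cases hb : b = Γ.src x'
  · subst hb
    rw [Matrix.mul_single_apply_same]
    by_cases ha : a = Γ.src x'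
    · rw [ha, Matrix.single_apply_same]
    · rw [h.mat_mul_path_eq_zero hS hopp ha, Matrix.single_apply_of_ne _ _ _ _ _ (ha ·.1.symm)]
  · rw [Matrix.mul_single_apply_of_ne _ _ _ _ _ hb,
      Matrix.single_apply_of_ne _ _ _ _ _ (hb ·.2.symm)]

end IsGoodPair

open Classical in
variable (S) in
/-- The pair of matrices whose only nonzero entry is the socle element at `e`, in the first matrix
if `e` is a sink of `S` and in the second one otherwise. The orientation chosen for `e` does not
matter, see `socleMatrices_src`. -/
noncomputable def socleMatrices (e : Γ.Edge) :
    Matrix Γ.Edge Γ.Edge (Γ.Alg K) × Matrix Γ.Edge Γ.Edge (Γ.Alg K) :=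
  let d := (Γ.exists_src_eq e).choose
  let σ := Matrix.single e e (Γ.run K d (Γ.per d))
  if e ∈ S.J then (σ, 0) else (0, σ)

open Classical in
lemma socleMatrices_src (d : Γ.Arrow) : S.socleMatrices (Γ.src d) =
    if Γ.src d ∈ S.J then (Matrix.single (Γ.src d) (Γ.src d) (Γ.run K d (Γ.per d)), 0)
    else (0, Matrix.single (Γ.src d) (Γ.src d) (Γ.run K d (Γ.per d))) := by
  have hrun : Γ.run K (Γ.exists_src_eq (Γ.src d)).choose
      (Γ.per (Γ.exists_src_eq (Γ.src d)).choose) = Γ.run K d (Γ.per d) := by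
    rcases Γ.src_eq_src_iff.1 (Γ.exists_src_eq (Γ.src d)).choose_spec with h | h
    · rw [h]
    · rw [h, Γ.run_per_symm]
  rw [socleMatrices]
  simp only [hrun]

open Classical in
lemma IsGoodPair.single_mul_mat_mem_span {y x' : Γ.Arrow} (h : S.IsGoodPair T y x')
    (hT : T.IsString) (hopp : ∀ x ∈ S.J, x ∉ T.I) :
    (Matrix.single (Γ.src y) (Γ.src x') (Γ.path K y x') * T.mat, 0) ∈
      Submodule.span K (S.socleMatrices '' (S.marked ∩ T.marked)) := by
  rw [h.single_mul_mat hT hopp]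
  by_cases hy : Γ.src y ∈ T.J
  · have hmem : S.socleMatrices (Γ.src y) ∈ S.socleMatrices '' (S.marked ∩ T.marked) :=
      Set.mem_image_of_mem _ ⟨.inr h.sink_mem, .inr hy⟩
    obtain ⟨s, -, hs⟩ := hT.mat_eq_smul_path h.fst_eq.symm h.source_mem hy
    have hsocle : (Matrix.single (Γ.src y) (Γ.src y) (Γ.path K y x' * T.mat (Γ.src x') (Γ.src y)),
        0) = s • S.socleMatrices (Γ.src y) := by
      rw [hs, mul_smul_comm, Γ.path_mul_path_self h.fst_eq (h.ne hopp), socleMatrices_src,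
        if_pos h.sink_mem, Prod.smul_mk, smul_zero, Matrix.smul_single]
    rw [hsocle]
    exact Submodule.smul_mem _ s (Submodule.subset_span hmem)
  · rw [T.isMatrix_mat.apply_eq_zero (hy ·.2), mul_zero, Matrix.single_zero]
    exact Submodule.zero_mem _

open Classical in
lemma IsGoodPair.mat_mul_single_mem_span {y x' : Γ.Arrow} (h : S.IsGoodPair T y x')
    (hS : S.IsString) (hopp : ∀ x ∈ S.J, x ∉ T.I) :
    (0, S.mat * Matrix.single (Γ.src y) (Γ.src x') (Γ.path K y x')) ∈
      Submodule.span K (S.socleMatrices '' (S.marked ∩ T.marked)) := by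
  rw [h.mat_mul_single hS hopp]
  by_cases hx' : Γ.src x' ∈ S.I
  · have hmem : S.socleMatrices (Γ.src x') ∈ S.socleMatrices '' (S.marked ∩ T.marked) :=
      Set.mem_image_of_mem _ ⟨.inl hx', .inl h.source_mem⟩
    obtain ⟨s, -, hs⟩ := hS.mat_eq_smul_path h.fst_eq.symm hx' h.sink_mem
    have hsocle : (0, Matrix.single (Γ.src x') (Γ.src x')
        (S.mat (Γ.src x') (Γ.src y) * Γ.path K y x')) = s • S.socleMatrices (Γ.src x') := by
      rw [hs, smul_mul_assoc, Γ.path_mul_path_self h.fst_eq.symm (h.ne hopp).symm,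
        socleMatrices_src, if_neg (hS.zigzag.disjoint _ hx'), Prod.smul_mk, smul_zero,
        Matrix.smul_single]
    rw [hsocle]
    exact Submodule.smul_mem _ s (Submodule.subset_span hmem)
  · rw [S.isMatrix_mat.apply_eq_zero (hx' ·.1), zero_mul, Matrix.single_zero]
    exact Submodule.zero_mem _

open Classical in
/-- The good pairs give rise to more matrices than there are common edges, and hence to a nonzero
combination annihilated by the two differentials. -/
lemma exists_sum_smul_single (hS : S.IsString) (hT : T.IsString) (hopp : ∀ x ∈ S.J, x ∉ T.I)
    (hne : (S.meet T).Nonempty) {Y X : S.meet T → Γ.Arrow}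
    (hYX : ∀ v, S.IsGoodPair T (Y v) (X v)) :
    ∃ ψ : S.meet T → K, ψ ≠ 0 ∧
      (∑ v, ψ v • Matrix.single (Γ.src (Y v)) (Γ.src (X v)) (Γ.path K (Y v) (X v))) * T.mat = 0 ∧
      S.mat * ∑ v, ψ v • Matrix.single (Γ.src (Y v)) (Γ.src (X v)) (Γ.path K (Y v) (X v)) = 0 := by
  let N : S.meet T → Matrix Γ.Edge Γ.Edge (Γ.Alg K) := fun v ↦
    Matrix.single (Γ.src (Y v)) (Γ.src (X v)) (Γ.path K (Y v) (X v))
  have hspan : Set.range (fun v ↦ (N v * T.mat, S.mat * N v)) ≤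
      Submodule.span K (S.socleMatrices '' (S.marked ∩ T.marked)) := by
    rintro _ ⟨v, rfl⟩
    have hsum := Submodule.add_mem _ ((hYX v).single_mul_mat_mem_span hT hopp)
      ((hYX v).mat_mul_single_mem_span hS hopp)
    rwa [Prod.mk_add_mk, add_zero, zero_add] at hsum
  have hdep : ¬ LinearIndependent K fun v ↦ (N v * T.mat, S.mat * N v) := by
    intro hind
    have hcard := linearIndependent_le_span' _ hind _ hspan
    rw [Cardinal.mk_fintype, Nat.cast_le, Fintype.card_eq_nat_card, Fintype.card_eq_nat_card]
      at hcard
    exact (hS.edgeConnected.card_lt hT.edgeConnected hne).not_ge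
      (hcard.trans (Nat.card_le_card_of_surjective _ Set.imageFactorization_surjective))
  obtain ⟨ψ, hψ, v, hv⟩ := Fintype.not_linearIndependent_iff.1 hdep
  refine ⟨ψ, fun h ↦ hv (congrFun h v), ?_, ?_⟩
  · simpa only [N, Matrix.sum_mul, Matrix.smul_mul, Prod.fst_sum, Prod.smul_mk, Prod.fst_zero]
      using congrArg Prod.fst hψ
  · simpa only [N, Matrix.mul_sum, Matrix.mul_smul, Prod.snd_sum, Prod.smul_mk, Prod.snd_zero]
      using congrArg Prod.snd hψ

section

variable [HasDerivedCategory.{w} (ModuleCat.{max u v} (Γ.Alg K))]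

lemma homZero_of_not_good (hS : S.IsString) (hT : T.IsString) (hopp : ∀ x ∈ S.J, x ∉ T.I)
    (hopp' : ∀ x ∈ S.I, x ∉ T.J) {v : V} (hv : v ∈ S.meet T) (hg : ¬ S.Good T v) :
    S.HomZero T (-1) := by
  rw [homZero_neg_one_iff_matrix]
  intro M hM hMT hSM
  have hvanish := hS.edgeConnected.induction_common hT.edgeConnected
    (P := fun w ↦ ∀ y x' : Γ.Arrow, y.fst = w → x'.fst = w → M (Γ.src y) (Γ.src x') = 0) hv
    (fun y x' hy hx' ↦ apply_eq_zero_of_not_good hS hT hopp hM hMT hSM (hy.trans hx'.symm)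
      (hy ▸ hg))
    fun d hdS hdT hd y x' ↦ apply_eq_zero_of_forall_fst hS hT hopp hM hopp' hMT hSM hdS hdT hd
  ext y x : 2
  by_contra h
  obtain ⟨a, b, hab, rfl, rfl⟩ := Γ.exists_darts_of_isHom_ne_zero (hM.isHom y x) h
  obtain ⟨hy, hx⟩ := hM.mem _ _ h
  exact h (hvanish a.fst ⟨mem_ends (.inr hy), hab ▸ mem_ends (.inl hx)⟩ a b rfl hab.symm)

lemma not_homZero_of_good (hS : S.IsString) (hT : T.IsString) (hopp : ∀ x ∈ S.J, x ∉ T.I)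
    (hne : (S.meet T).Nonempty) (hg : ∀ v ∈ S.meet T, S.Good T v) : ¬ S.HomZero T (-1) := by
  classical
  rw [homZero_neg_one_iff_matrix]
  intro hall
  choose Y X hY hYX using fun v : S.meet T ↦ hg v v.2
  obtain ⟨ψ, hψ, hMT, hSM⟩ := exists_sum_smul_single hS hT hopp hne hYX
  refine hψ (funext fun v ↦ ?_)
  have hzero := congrFun (congrFun (hall _ ?_ hMT hSM) (Γ.src (Y v))) (Γ.src (X v))
  · rw [Matrix.sum_apply, Finset.sum_eq_single_of_mem v (Finset.mem_univ v)] at hzero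
    · rw [Matrix.smul_apply, Matrix.single_apply_same] at hzero
      exact (smul_eq_zero.1 hzero).resolve_right (Γ.path_ne_zero (hYX v).fst_eq)
    · intro w _ hwv
      rw [Matrix.smul_apply, Matrix.single_apply_of_ne, smul_zero]
      rintro ⟨hy, hx⟩
      have hYw := (Γ.darts_unique (hYX v).fst_eq ((hYX v).ne hopp) (hYX w).fst_eq hy hx).1
      exact hwv (Subtype.ext (by rw [← hY w, hYw, hY v]))
  · refine Finset.sum_induction _ (Γ.IsMatrix S.J T.I) (fun _ _ ↦ IsMatrix.add)
      ⟨fun x y ↦ Γ.isHom_zero x y, fun _ _ h ↦ absurd rfl h⟩ fun v _ ↦ ?_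
    rw [Matrix.smul_single]
    exact isMatrix_single (hYX v).sink_mem (hYX v).source_mem ((Γ.isHom_path (hYX v).fst_eq).smul _)

lemma homZero_iff_exists_not_good (hS : S.IsString) (hT : T.IsString) (hopp : ∀ x ∈ S.J, x ∉ T.I)
    (hopp' : ∀ x ∈ S.I, x ∉ T.J) (hne : (S.meet T).Nonempty) :
    S.HomZero T (-1) ↔ ∃ v ∈ S.meet T, ¬ S.Good T v := by
  refine ⟨fun h ↦ ?_, fun ⟨v, hv, hg⟩ ↦ homZero_of_not_good hS hT hopp hopp' hv hg⟩
  by_contra! hgood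
  exact not_homZero_of_good hS hT hopp hne hgood h

end

end TwoTermComplex
/-! ### Diagrams and restrictions of alternating paths -/

namespace BrauerTree

variable {V : Type v} [Finite V] {Γ : BrauerTree V}

lemma onPath_iff {a b d : Γ.Arrow} (hab : a.fst = b.fst) (hne : a ≠ b) :
    Γ.OnPath (Γ.src a) (Γ.src b) d ↔ a.fst = d.fst ∧ Γ.gap a d < Γ.gap a b := by
  constructor
  · rintro ⟨d₀, r, ha, hb, hfirst, k, hk, rfl⟩
    obtain ⟨rfl, -⟩ := Γ.darts_unique hab hne (Γ.iterate_next_fst d₀ r).symm ha hb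
    refine ⟨(Γ.iterate_next_fst d₀ k).symm, ?_⟩
    have hr : r ≤ Γ.gap d₀ b := by
      by_contra! hlt
      exact hfirst _ hlt (by rw [Γ.iterate_gap hab])
    rw [Γ.gap_iterate]
    exact (Nat.mod_le _ _).trans_lt (hk.trans_le hr)
  · rintro ⟨had, hlt⟩
    refine ⟨a, Γ.gap a b, rfl, by rw [Γ.iterate_gap hab], fun k hk h ↦ hk.not_ge ?_, Γ.gap a d, hlt,
      (Γ.iterate_gap had).symm⟩
    rw [← Γ.eq_of_src_eq h (by rw [Γ.iterate_next_fst, hab]), Γ.gap_iterate]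
    exact Nat.mod_le _ _

/-- The arcs from `x` to `y` and from `x'` to `y'` have the common arrow `d`. They are not nested
if and only if one of them starts on the other one and stops outside of it. -/
lemma not_overlap_iff_nested {x y x' y' d : Γ.Arrow} (hd : x.fst = d.fst) (hd' : x'.fst = d.fst)
    (hxy : x.fst = y.fst) (hxy' : x'.fst = y'.fst) (hne_source : x ≠ x') (hne_sink : y ≠ y')
    (hne : x ≠ y') (hne' : x' ≠ y) (hlt : Γ.gap x d < Γ.gap x y)
    (hlt' : Γ.gap x' d < Γ.gap x' y') :
    (¬ (Γ.per y ≤ Γ.gap x y + Γ.gap y x' ∧ Γ.per y ≤ Γ.gap y x' + Γ.gap x' y') ∧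
      ¬ (Γ.per y' ≤ Γ.gap x' y' + Γ.gap y' x ∧ Γ.per y' ≤ Γ.gap y' x + Γ.gap x y)) ↔
      (Γ.gap x' x + Γ.gap x y ≤ Γ.gap x' y' ∨ Γ.gap x x' + Γ.gap x' y' ≤ Γ.gap x y) := by
  have hxx' : x.fst = x'.fst := hd.trans hd'.symm
  have hx_y' : x.fst = y'.fst := hxx'.trans hxy'
  have hper_y := Γ.per_eq hxy
  have hper_y' := Γ.per_eq hx_y'
  have hper_x' := Γ.per_eq hxx'
  have hy_lt := Γ.gap_lt_per hxy
  have hx'_lt := Γ.gap_lt_per hxx'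
  have hy'_lt := Γ.gap_lt_per hx_y'
  have hyx'_lt := Γ.gap_lt_per (hxy.symm.trans hxx')
  have hx'y'_lt := Γ.gap_lt_per hxy'
  have hx'd_lt := Γ.gap_lt_per hd'
  have hx'_pos := (Γ.gap_eq_zero hxx').not.2 hne_source
  have hy'_pos := (Γ.gap_eq_zero hx_y').not.2 hne
  have hx'_ne : Γ.gap x y ≠ Γ.gap x x' := fun h ↦ hne' (Γ.gap_inj hxy hxx' h).symm
  have hy'_ne : Γ.gap x y ≠ Γ.gap x y' := fun h ↦ hne_sink (Γ.gap_inj hxy hx_y' h)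
  have hx'y'_ne : Γ.gap x x' ≠ Γ.gap x y' := by
    intro h
    obtain rfl := Γ.gap_inj hxx' hx_y' h
    rw [Γ.gap_self] at hlt'
    exact Nat.not_lt_zero _ hlt'
  have hyx' := Γ.gap_add_gap hxy (hxy.symm.trans hxx')
  have hx'y' := Γ.gap_add_gap hxx' hxy'
  have hx'd := Γ.gap_add_gap hxx' hd'
  have hsource := Γ.gap_add_gap_self hxx' hne_source
  have hsink := Γ.gap_add_gap_self hx_y' hne
  omega

end BrauerTree

namespace TwoTermComplex

variable {V : Type v} [Fintype V] {Γ : BrauerTree V} {K : Type u} [Field K]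
variable {S T : TwoTermComplex Γ K}

/-- The arrow `x` starts at a source of the diagram of `S` and belongs to the cycle at `v`. -/
def SourceAt (S : TwoTermComplex Γ K) (v : V) (x : Γ.Arrow) : Prop := x.fst = v ∧ Γ.src x ∈ S.I

/-- The arrow `y` starts at a sink of the diagram of `S` and belongs to the cycle at `v`. -/
def SinkAt (S : TwoTermComplex Γ K) (v : V) (y : Γ.Arrow) : Prop := y.fst = v ∧ Γ.src y ∈ S.J

namespace IsString

variable {v : V} {a b d : Γ.Arrow}

lemma source_unique (hS : S.IsString) (ha : S.SourceAt v a) (hb : S.SourceAt v b) : a = b :=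
  hS.zigzag.unique_left a b (ha.1.trans hb.1.symm) ha.2 hb.2

lemma sink_unique (hS : S.IsString) (ha : S.SinkAt v a) (hb : S.SinkAt v b) : a = b :=
  hS.zigzag.unique_right a b (ha.1.trans hb.1.symm) ha.2 hb.2

lemma source_ne_sink (hS : S.IsString) (ha : S.SourceAt v a) (hb : S.SinkAt v b) : a ≠ b :=
  fun h ↦ hS.ne ha.2 hb.2 (congrArg Γ.src h)

lemma mem_diagramArrows (hS : S.IsString) : d ∈ S.diagramArrows ↔
    ∃ a b : Γ.Arrow, S.SourceAt d.fst a ∧ S.SinkAt d.fst b ∧ Γ.gap a d < Γ.gap a b := by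
  constructor
  · rintro ⟨⟨i, hi⟩, ⟨j, hj⟩, hij, hon⟩
    rw [comp_ne_zero_iff] at hij
    obtain ⟨a, b, hab, rfl, rfl⟩ := Γ.exists_darts_of_isHom_ne_zero (S.isHom_mat _ _) hij
    obtain ⟨had, hlt⟩ :=
      (BrauerTree.onPath_iff hab fun h ↦ hS.ne hi hj (congrArg Γ.src h)).1 hon
    exact ⟨a, b, ⟨had, hi⟩, ⟨hab.symm.trans had, hj⟩, hlt⟩
  · rintro ⟨a, b, ha, hb, hlt⟩
    have hab : a.fst = b.fst := ha.1.trans hb.1.symm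
    exact ⟨⟨_, ha.2⟩, ⟨_, hb.2⟩, (comp_ne_zero_iff ..).2 (hS.mat_ne_zero hab ha.2 hb.2),
      (BrauerTree.onPath_iff hab (hS.source_ne_sink ha hb)).2 ⟨ha.1, hlt⟩⟩

lemma mem_diagramArrows_iff (hS : S.IsString) (ha : S.SourceAt v a) (hb : S.SinkAt v b)
    (hd : d.fst = v) : d ∈ S.diagramArrows ↔ Γ.gap a d < Γ.gap a b := by
  subst hd
  rw [hS.mem_diagramArrows]
  constructor
  · rintro ⟨a', b', ha', hb', hlt⟩
    rwa [hS.source_unique ha ha', hS.sink_unique hb hb']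
  · exact fun h ↦ ⟨a, b, ha, hb, h⟩

lemma source_mem_diagramArrows (hS : S.IsString) (ha : S.SourceAt v a) (hb : S.SinkAt v b) :
    a ∈ S.diagramArrows := by
  rw [hS.mem_diagramArrows_iff ha hb ha.1, Γ.gap_self]
  exact Nat.pos_of_ne_zero ((Γ.gap_eq_zero (ha.1.trans hb.1.symm)).not.2 (hS.source_ne_sink ha hb))

lemma prev_sink_mem_diagramArrows (hS : S.IsString) (ha : S.SourceAt v a)
    (hb : S.SinkAt v (Γ.next d)) : d ∈ S.diagramArrows := by
  have hdv : d.fst = v := by rw [← hb.1, Γ.next_fst]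
  rw [hS.mem_diagramArrows_iff ha hb hdv,
    Γ.gap_next (ha.1.trans hdv.symm) (hS.source_ne_sink ha hb).symm]
  exact Nat.lt_succ_self _

lemma next_mem_or (hS : S.IsString) (hd : d ∈ S.diagramArrows) :
    Γ.next d ∈ S.diagramArrows ∨ Γ.src (Γ.next d) ∈ S.J := by
  obtain ⟨a, b, ha, hb, hlt⟩ := hS.mem_diagramArrows.1 hd
  have hab : a.fst = b.fst := ha.1.trans hb.1.symm
  refine or_iff_not_imp_right.2 fun hsink ↦ ?_
  have hna : Γ.next d ≠ a := by
    intro h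
    have := Γ.gap_of_next_eq h
    have := Γ.gap_lt_per hab
    omega
  rw [hS.mem_diagramArrows_iff ha hb (Γ.next_fst d)]
  refine lt_of_le_of_ne (by rw [Γ.gap_next ha.1 hna]; exact hlt) fun h ↦ hsink ?_
  rw [Γ.gap_inj (ha.1.trans (Γ.next_fst d).symm) hab h]
  exact hb.2

lemma mem_or_of_next_mem (hS : S.IsString) (hd : Γ.next d ∈ S.diagramArrows) :
    d ∈ S.diagramArrows ∨ Γ.src (Γ.next d) ∈ S.I := by
  obtain ⟨a, b, ha, hb, hlt⟩ := hS.mem_diagramArrows.1 hd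
  rw [Γ.next_fst] at ha hb
  refine or_iff_not_imp_right.2 fun hsource ↦ ?_
  rw [Γ.gap_next ha.1 fun h ↦ hsource (h ▸ ha.2)] at hlt
  exact (hS.mem_diagramArrows_iff ha hb rfl).2 ((Nat.lt_succ_self _).trans hlt)

lemma src_notMem_right (hS : S.IsString) (hd : d ∈ S.diagramArrows) : Γ.src d ∉ S.J := by
  intro h
  obtain ⟨a, b, -, hb, hlt⟩ := hS.mem_diagramArrows.1 hd
  rw [hS.sink_unique hb ⟨rfl, h⟩] at hlt
  exact lt_irrefl _ hlt

lemma tgt_notMem_left (hS : S.IsString) (hd : d ∈ S.diagramArrows) : Γ.tgt d ∉ S.I := by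
  intro h
  obtain ⟨a, b, ha, hb, hlt⟩ := hS.mem_diagramArrows.1 hd
  have := Γ.gap_of_next_eq (hS.source_unique (v := d.fst) ⟨Γ.next_fst d, h⟩ ha)
  have := Γ.gap_lt_per (ha.1.trans hb.1.symm)
  omega

lemma next_ne (hS : S.IsString) (hd : d ∈ S.diagramArrows) : Γ.next d ≠ d := by
  intro h
  obtain ⟨a, b, ha, hb, hlt⟩ := hS.mem_diagramArrows.1 hd
  have hper : Γ.per d = 1 := Function.minimalPeriod_eq_one_iff_isFixedPt.2 h
  have := Γ.gap_lt_per (ha.1.trans hb.1.symm)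
  rw [Γ.per_eq ha.1] at this
  omega

lemma fst_mem_ends (hS : S.IsString) (hd : d ∈ S.diagramArrows) : d.fst ∈ Γ.ends S.marked := by
  obtain ⟨a, -, ha, -⟩ := hS.mem_diagramArrows.1 hd
  exact ha.1 ▸ mem_ends (.inl ha.2)

lemma exists_mem_diagramArrows_of_mem_marked (hS : S.IsString) (ha : S.SourceAt v a)
    (hb : S.SinkAt v b) {z : Γ.Arrow} (hzv : z.fst = v) (hz : Γ.src z ∈ S.marked) :
    ∃ d ∈ S.diagramArrows, d.fst = v ∧ (Γ.src d = Γ.src z ∨ Γ.tgt d = Γ.src z) := by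
  rcases hz with hz | hz
  · rw [hS.source_unique ⟨hzv, hz⟩ ha]
    exact ⟨a, hS.source_mem_diagramArrows ha hb, ha.1, .inl rfl⟩
  · obtain ⟨d, rfl⟩ := Γ.next.surjective z
    exact ⟨d, hS.prev_sink_mem_diagramArrows ha ⟨hzv, hz⟩, (Γ.next_fst d).symm.trans hzv, .inr rfl⟩

end IsString

lemma exists_isACycle_iff {x : Γ.Edge} : (∃ l, Γ.IsACycle K l ∧
    (∃ d ∈ l, Γ.src d ∈ T.marked) ∧ ∃ d ∈ l, Γ.src d = x) ↔
      ∃ v ∈ Γ.ends T.marked, Γ.Inc v x := by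
  constructor
  · rintro ⟨l, hl, ⟨d, hd, hdT⟩, d', hd', rfl⟩
    exact ⟨d.fst, mem_ends hdT, hl.fst_eq hd hd' ▸ Γ.inc_fst d'⟩
  · rintro ⟨v, ⟨z, hz, hvz⟩, hvx⟩
    obtain ⟨d, rfl, rfl⟩ := Γ.inc_iff.1 hvz
    obtain ⟨d', hd', rfl⟩ := Γ.inc_iff.1 hvx
    exact ⟨_, Γ.isACycle_cycle d, ⟨d, Γ.mem_cycle_iff.2 rfl, hz⟩, d', Γ.mem_cycle_iff.2 hd', rfl⟩

lemma exists_isACycle_arrow_iff {a : Γ.Arrow} : (∃ l, Γ.IsACycle K l ∧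
    (∃ d ∈ l, Γ.src d ∈ T.marked) ∧ a ∈ l) ↔ a.fst ∈ Γ.ends T.marked := by
  constructor
  · rintro ⟨l, hl, ⟨d, hd, hdT⟩, ha⟩
    rw [hl.fst_eq ha hd]
    exact mem_ends hdT
  · rintro ⟨z, hz, hvz⟩
    obtain ⟨d, hd, rfl⟩ := Γ.inc_iff.1 hvz
    exact ⟨_, Γ.isACycle_cycle d, ⟨d, Γ.mem_cycle_iff.2 rfl, hz⟩, Γ.mem_cycle_iff.2 hd.symm⟩

/-- On the cycle at `v`, the diagram of `S` is contained in the diagram of `T`. -/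
def SubAt (S T : TwoTermComplex Γ K) (v : V) : Prop :=
  ∀ d : Γ.Arrow, d.fst = v → d ∈ S.diagramArrows → d ∈ T.diagramArrows

/-- The two diagrams share a marked vertex on the cycle at `v`, or the diagram of `S` has arrows
on this cycle. -/
def TouchesAt (S T : TwoTermComplex Γ K) (v : V) : Prop :=
  (∃ d : Γ.Arrow, d.fst = v ∧ Γ.src d ∈ S.marked ∩ T.marked) ∨
    ∃ a b : Γ.Arrow, S.SourceAt v a ∧ S.SinkAt v b

lemma IsString.src_mem_verts_of_subAt (hS : S.IsString) {z : Γ.Arrow} (hz : Γ.src z ∈ S.marked)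
    (hsub : S.SubAt T z.fst) (htouch : S.TouchesAt T z.fst) : Γ.src z ∈ T.diagram.verts := by
  have hboth {a b : Γ.Arrow} (ha : S.SourceAt z.fst a) (hb : S.SinkAt z.fst b) :
      Γ.src z ∈ T.diagram.verts := by
    obtain ⟨d, hd, hdv, hdz⟩ := hS.exists_mem_diagramArrows_of_mem_marked ha hb rfl hz
    exact .inr ⟨d, hsub d hdv hd, hdz⟩
  rcases htouch with ⟨d, hd, hdS, hdT⟩ | ⟨a, b, ha, hb⟩
  · by_cases hzd : z = d
    · exact hzd ▸ .inl hdT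
    · rcases hz with hz | hz <;> rcases hdS with hdS | hdS
      · exact absurd (hS.source_unique (v := z.fst) ⟨rfl, hz⟩ ⟨hd, hdS⟩) hzd
      · exact hboth ⟨rfl, hz⟩ ⟨hd, hdS⟩
      · exact hboth ⟨hd, hdS⟩ ⟨rfl, hz⟩
      · exact absurd (hS.sink_unique (v := z.fst) ⟨rfl, hz⟩ ⟨hd, hdS⟩) hzd
  · exact hboth ha hb

lemma mem_verts_and_exists_inc (hS : S.IsString) (hT : T.IsString) (hne : (S.meet T).Nonempty)
    (htouch : ∀ v ∈ S.meet T, S.TouchesAt T v) (hsub : ∀ v ∈ S.meet T, S.SubAt T v)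
    {x : Γ.Edge} {t : V} (hx : x ∈ S.diagram.verts) (ht : t ∈ Γ.ends T.marked) (htx : Γ.Inc t x) :
    x ∈ T.diagram.verts ∧ ∃ v ∈ Γ.ends S.marked, Γ.Inc v x := by
  have hmarked {x : Γ.Edge} (hx : x ∈ S.marked) (htx : Γ.Inc t x) :
      x ∈ T.diagram.verts ∧ ∃ v ∈ Γ.ends S.marked, Γ.Inc v x := by
    have htS : t ∈ Γ.ends S.marked := ⟨x, hx, htx⟩
    refine ⟨?_, t, htS, htx⟩
    obtain ⟨z, rfl, rfl⟩ := Γ.inc_iff.1 htx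
    exact hS.src_mem_verts_of_subAt hx (hsub _ ⟨htS, ht⟩) (htouch _ ⟨htS, ht⟩)
  rcases hx with hx | ⟨d, hd, hdx⟩
  · exact hmarked hx htx
  · have hinc : Γ.Inc d.fst x := by
      rcases hdx with rfl | rfl
      · exact Γ.inc_fst d
      · exact Γ.inc_tgt d
    have hdS := hS.fst_mem_ends hd
    by_cases hdT : d.fst ∈ Γ.ends T.marked
    · exact ⟨.inr ⟨d, hsub _ ⟨hdS, hdT⟩ d rfl hd, hdx⟩, d.fst, hdS, hinc⟩
    · obtain ⟨e, rfl, he, rfl⟩ := Γ.inc_eq_of_ne hinc htx fun h ↦ hdT (h ▸ ht)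
      rw [← he] at hdS hdT
      by_cases htS : e.snd ∈ Γ.ends S.marked
      · exact hmarked (hS.edgeConnected.src_mem hdS htS) htx
      · obtain ⟨c, hc⟩ := hne
        exact absurd (hS.edgeConnected.mem_ends_of_adj hT.edgeConnected hc hdS ht htS) hdT

lemma contained_iff (hS : S.IsString) (hT : T.IsString) (hne : (S.meet T).Nonempty)
    (htouch : ∀ v ∈ S.meet T, S.TouchesAt T v) :
    (S.restriction T).Contained (T.restriction S) ↔ ∀ v ∈ S.meet T, S.SubAt T v := by
  constructor
  · rintro ⟨-, h⟩ v hv d hd hdS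
    exact (h ⟨hdS, exists_isACycle_arrow_iff.2 (hd ▸ hv.2)⟩).1
  · intro hsub
    constructor
    · rintro x ⟨hx, hl⟩
      obtain ⟨t, ht, htx⟩ := exists_isACycle_iff.1 hl
      exact (mem_verts_and_exists_inc hS hT hne htouch hsub hx ht htx).imp_right
        exists_isACycle_iff.2
    · rintro d ⟨hd, hl⟩
      have hdS := hS.fst_mem_ends hd
      exact ⟨hsub _ ⟨hdS, exists_isACycle_arrow_iff.1 hl⟩ d rfl hd,
        exists_isACycle_arrow_iff.2 hdS⟩

section Comparison

variable {v : V} {x y x' y' : Γ.Arrow}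

lemma subAt_iff (hS : S.IsString) (hT : T.IsString) (hx : S.SourceAt v x) (hy : S.SinkAt v y)
    (hx' : T.SourceAt v x') (hy' : T.SinkAt v y') :
    S.SubAt T v ↔ Γ.gap x' x + Γ.gap x y ≤ Γ.gap x' y' := by
  have hxx' : x'.fst = x.fst := hx'.1.trans hx.1.symm
  constructor
  · intro h
    have hmem := h x hx.1 (hS.source_mem_diagramArrows hx hy)
    rw [hT.mem_diagramArrows_iff hx' hy' hx.1] at hmem
    have hxy' : x.fst = y'.fst := hx.1.trans hy'.1.symm
    have hsum := Γ.gap_add_gap hxx' hxy'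
    have hper := Γ.gap_lt_per hxy'
    rw [← Γ.per_eq hxx'] at hper
    by_contra hlt
    have hy'S : y' ∈ S.diagramArrows := by
      rw [hS.mem_diagramArrows_iff hx hy hy'.1]
      omega
    exact hT.src_notMem_right (h y' hy'.1 hy'S) hy'.2
  · intro h d hd hdS
    rw [hS.mem_diagramArrows_iff hx hy hd] at hdS
    rw [hT.mem_diagramArrows_iff hx' hy' hd]
    have hsum := Γ.gap_add_gap hxx' (hx.1.trans hd.symm)
    omega

lemma subAt_of_no_source (hS : S.IsString) (h : ∀ x, ¬ S.SourceAt v x) : S.SubAt T v := by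
  rintro d rfl hd
  obtain ⟨a, -, ha, -⟩ := hS.mem_diagramArrows.1 hd
  exact absurd ha (h a)

lemma subAt_of_no_sink (hS : S.IsString) (h : ∀ x, ¬ S.SinkAt v x) : S.SubAt T v := by
  rintro d rfl hd
  obtain ⟨-, b, -, hb, -⟩ := hS.mem_diagramArrows.1 hd
  exact absurd hb (h b)

lemma SubAt.exists_sourceAt_and_sinkAt (hS : S.IsString) (hT : T.IsString) (h : S.SubAt T v)
    (hx : S.SourceAt v x) (hy : S.SinkAt v y) : ∃ a b, T.SourceAt v a ∧ T.SinkAt v b := by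
  obtain ⟨a, b, ha, hb, -⟩ :=
    hT.mem_diagramArrows.1 (h x hx.1 (hS.source_mem_diagramArrows hx hy))
  exact ⟨a, b, hx.1 ▸ ha, hx.1 ▸ hb⟩

lemma good_iff_isGoodPair (hS : S.IsString) (hT : T.IsString) (hy : S.SinkAt v y)
    (hx' : T.SourceAt v x') : S.Good T v ↔ S.IsGoodPair T y x' := by
  refine ⟨?_, fun h ↦ ⟨y, x', hy.1, h⟩⟩
  rintro ⟨y₁, x₁, rfl, h⟩
  rwa [hS.sink_unique hy ⟨rfl, h.sink_mem⟩, hT.source_unique hx' ⟨h.fst_eq.symm, h.source_mem⟩]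

lemma good_iff (hS : S.IsString) (hT : T.IsString) (hx : S.SourceAt v x) (hy : S.SinkAt v y)
    (hx' : T.SourceAt v x') (hy' : T.SinkAt v y') :
    S.Good T v ↔ (x = x' ∨ Γ.per y ≤ Γ.gap x y + Γ.gap y x') ∧
      (y' = y ∨ Γ.per y ≤ Γ.gap y x' + Γ.gap x' y') := by
  rw [good_iff_isGoodPair hS hT hy hx']
  refine ⟨fun h ↦ ⟨h.left x (hx.1.trans hy.1.symm) hx.2, h.right y' (hx'.1.trans hy'.1.symm) hy'.2⟩,
    fun ⟨hl, hr⟩ ↦ ⟨hy.1.trans hx'.1.symm, hy.2, hx'.2, fun z hz hzS ↦ ?_, fun z hz hzT ↦ ?_⟩⟩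
  · rwa [hS.source_unique ⟨hz.trans hy.1, hzS⟩ hx]
  · rwa [hT.sink_unique ⟨hz.symm.trans hx'.1, hzT⟩ hy']

lemma not_good_of_no_sink (h : ∀ y, ¬ S.SinkAt v y) : ¬ S.Good T v := by
  rintro ⟨y, x, hy, hgood⟩
  exact h y ⟨hy, hgood.sink_mem⟩

lemma not_good_of_no_source (h : ∀ x, ¬ T.SourceAt v x) : ¬ S.Good T v := by
  rintro ⟨y, x, hy, hgood⟩
  exact h x ⟨hgood.fst_eq.symm.trans hy, hgood.source_mem⟩

lemma not_good_iff_subAt (hS : S.IsString) (hT : T.IsString)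
    (hno : ∀ d : Γ.Arrow, Γ.src d ∈ S.marked → Γ.src d ∉ T.marked)
    {d : Γ.Arrow} (hdS : d ∈ S.diagramArrows) (hdT : d ∈ T.diagramArrows) :
    (¬ S.Good T d.fst ∧ ¬ T.Good S d.fst) ↔ (S.SubAt T d.fst ∨ T.SubAt S d.fst) := by
  obtain ⟨x, y, hx, hy, hlt⟩ := hS.mem_diagramArrows.1 hdS
  obtain ⟨x', y', hx', hy', hlt'⟩ := hT.mem_diagramArrows.1 hdT
  have hne {a b : Γ.Arrow} (ha : Γ.src a ∈ S.marked) (hb : Γ.src b ∈ T.marked) : a ≠ b :=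
    fun h ↦ hno _ ha (h ▸ hb)
  have hxx' := hne (.inl hx.2) (.inl hx'.2)
  have hyy' := hne (.inr hy.2) (.inr hy'.2)
  rw [subAt_iff hS hT hx hy hx' hy', subAt_iff hT hS hx' hy' hx hy, good_iff hS hT hx hy hx' hy',
    good_iff hT hS hx' hy' hx hy]
  simp only [hxx', hxx'.symm, hyy', hyy'.symm, false_or]
  exact BrauerTree.not_overlap_iff_nested hx.1 hx'.1 (hx.1.trans hy.1.symm)
    (hx'.1.trans hy'.1.symm) hxx' hyy' (hne (.inl hx.2) (.inr hy'.2))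
    (hne (.inr hy.2) (.inl hx'.2)).symm hlt hlt'

end Comparison

/-! ### The ends of the common part -/

/-- The common part of the two diagrams ends at `v` in a sink. -/
def IsSinkEndAt (S T : TwoTermComplex Γ K) (v : V) : Prop :=
  (∃ x y y', S.SourceAt v x ∧ T.SourceAt v x ∧ S.SinkAt v y ∧ T.SinkAt v y' ∧ y ≠ y') ∨
    ∃ y, S.SinkAt v y ∧ T.SinkAt v y ∧ ((∀ x, ¬ S.SourceAt v x) ∨ ∀ x, ¬ T.SourceAt v x)

/-- The common part of the two diagrams ends at `v` in a source. -/
def IsSourceEndAt (S T : TwoTermComplex Γ K) (v : V) : Prop :=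
  (∃ y x x', S.SinkAt v y ∧ T.SinkAt v y ∧ S.SourceAt v x ∧ T.SourceAt v x' ∧ x ≠ x') ∨
    ∃ x, S.SourceAt v x ∧ T.SourceAt v x ∧ ((∀ y, ¬ S.SinkAt v y) ∨ ∀ y, ¬ T.SinkAt v y)

/-- The two diagrams have the same nonempty intersection with the cycle at `v`. -/
def AgreeAt (S T : TwoTermComplex Γ K) (v : V) : Prop :=
  ∃ x y, S.SourceAt v x ∧ T.SourceAt v x ∧ S.SinkAt v y ∧ T.SinkAt v y

variable {v : V}

lemma IsSinkEndAt.symm (h : S.IsSinkEndAt T v) : T.IsSinkEndAt S v := by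
  rcases h with ⟨x, y, y', hxS, hxT, hy, hy', hne⟩ | ⟨y, hyS, hyT, hno⟩
  · exact .inl ⟨x, y', y, hxT, hxS, hy', hy, hne.symm⟩
  · exact .inr ⟨y, hyT, hyS, hno.symm⟩

lemma IsSourceEndAt.symm (h : S.IsSourceEndAt T v) : T.IsSourceEndAt S v := by
  rcases h with ⟨y, x, x', hyS, hyT, hx, hx', hne⟩ | ⟨x, hxS, hxT, hno⟩
  · exact .inl ⟨y, x', x, hyT, hyS, hx', hx, hne.symm⟩
  · exact .inr ⟨x, hxT, hxS, hno.symm⟩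

lemma AgreeAt.symm (h : S.AgreeAt T v) : T.AgreeAt S v := by
  obtain ⟨x, y, hxS, hxT, hyS, hyT⟩ := h
  exact ⟨x, y, hxT, hxS, hyT, hyS⟩

lemma IsSinkEndAt.not_isSourceEndAt (hS : S.IsString) (hT : T.IsString)
    (h : S.IsSinkEndAt T v) : ¬ S.IsSourceEndAt T v := by
  rcases h with ⟨x, y, y', -, -, hy, hy', hne⟩ | ⟨y, -, -, hno | hno⟩
  · rintro (⟨z, -, -, hzS, hzT, -⟩ | ⟨-, -, -, hno | hno⟩)
    · exact hne ((hS.sink_unique hy hzS).trans (hT.sink_unique hzT hy'))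
    · exact hno _ hy
    · exact hno _ hy'
  · rintro (⟨-, z, -, -, -, hz, -⟩ | ⟨z, hz, -⟩) <;> exact hno _ hz
  · rintro (⟨-, -, z, -, -, -, hz, -⟩ | ⟨z, -, hz, -⟩) <;> exact hno _ hz

lemma AgreeAt.not_isSinkEndAt (hS : S.IsString) (hT : T.IsString) (h : S.AgreeAt T v) :
    ¬ S.IsSinkEndAt T v := by
  obtain ⟨x, y, hxS, hxT, hyS, hyT⟩ := h
  rintro (⟨-, z, z', -, -, hz, hz', hne⟩ | ⟨-, -, -, hno | hno⟩)
  · exact hne ((hS.sink_unique hz hyS).trans (hT.sink_unique hyT hz'))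
  · exact hno _ hxS
  · exact hno _ hxT

lemma AgreeAt.not_isSourceEndAt (hS : S.IsString) (hT : T.IsString) (h : S.AgreeAt T v) :
    ¬ S.IsSourceEndAt T v := by
  obtain ⟨x, y, hxS, hxT, hyS, hyT⟩ := h
  rintro (⟨-, z, z', -, -, hz, hz', hne⟩ | ⟨-, -, -, hno | hno⟩)
  · exact hne ((hS.source_unique hz hxS).trans (hT.source_unique hxT hz'))
  · exact hno _ hyS
  · exact hno _ hyT

lemma AgreeAt.subAt (hS : S.IsString) (hT : T.IsString) (h : S.AgreeAt T v) : S.SubAt T v := by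
  obtain ⟨x, y, hxS, hxT, hyS, hyT⟩ := h
  rw [subAt_iff hS hT hxS hyS hxT hyT, Γ.gap_self, zero_add]

lemma AgreeAt.good (hS : S.IsString) (hT : T.IsString) (h : S.AgreeAt T v) : S.Good T v := by
  obtain ⟨x, y, hxS, hxT, hyS, hyT⟩ := h
  exact (good_iff hS hT hxS hyS hxT hyT).2 ⟨.inl rfl, .inl rfl⟩

lemma IsSinkEndAt.good_iff_not_subAt (hS : S.IsString) (hT : T.IsString)
    (h : S.IsSinkEndAt T v) : S.Good T v ↔ ¬ T.SubAt S v := by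
  rcases h with ⟨x, y, y', hxS, hxT, hy, hy', hne⟩ | ⟨y, hyS, hyT, hno⟩
  · have hxy : x.fst = y.fst := hxS.1.trans hy.1.symm
    have hgap : Γ.gap x y ≠ Γ.gap x y' := fun h ↦ hne (Γ.gap_inj hxy (hxT.1.trans hy'.1.symm) h)
    have hper := Γ.gap_add_gap_self hxy.symm (hS.source_ne_sink hxS hy).symm
    rw [good_iff hS hT hxS hy hxT hy', subAt_iff hT hS hxT hy' hxS hy, Γ.gap_self, zero_add]
    simp only [hne.symm, true_or, true_and, false_or]
    omega
  · by_cases hsource : ∃ x', T.SourceAt v x'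
    · obtain ⟨x', hx'⟩ := hsource
      have hnoS := hno.resolve_right fun h ↦ h x' hx'
      refine iff_of_true ⟨y, x', hyS.1, hyS.1.trans hx'.1.symm, hyS.2, hx'.2,
        fun x hx hxS ↦ absurd ⟨hx.trans hyS.1, hxS⟩ (hnoS x),
        fun z hz hzT ↦ .inl (hT.sink_unique ⟨hz.symm.trans hx'.1, hzT⟩ hyT)⟩ fun hsub ↦ ?_
      obtain ⟨a, -, ha, -⟩ := hsub.exists_sourceAt_and_sinkAt hT hS hx' hyT
      exact hnoS a ha
    · have hnoT := not_exists.1 hsource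
      exact iff_of_false (not_good_of_no_source hnoT) (not_not.2 (subAt_of_no_source hT hnoT))

lemma IsSourceEndAt.good_iff_not_subAt (hS : S.IsString) (hT : T.IsString)
    (h : S.IsSourceEndAt T v) : S.Good T v ↔ ¬ S.SubAt T v := by
  rcases h with ⟨y, x, x', hyS, hyT, hx, hx', hne⟩ | ⟨x, hxS, hxT, hno⟩
  · have hx'y : x'.fst = y.fst := hx'.1.trans hyT.1.symm
    have hxx' : x'.fst = x.fst := hx'.1.trans hx.1.symm
    have hpos := (Γ.gap_eq_zero hxx').not.2 hne.symm
    have hlt := Γ.gap_lt_per hxx'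
    have hper := Γ.gap_add_gap_self hx'y.symm (hT.source_ne_sink hx' hyT).symm
    have hsum := Γ.gap_add_gap hxx' (hx.1.trans hyS.1.symm)
    have hper_x := Γ.per_eq hxx'
    rw [good_iff hS hT hx hyS hx' hyT, subAt_iff hS hT hx hyS hx' hyT]
    simp only [hne, true_or, and_true, false_or]
    omega
  · by_cases hsink : ∃ y, S.SinkAt v y
    · obtain ⟨y, hy⟩ := hsink
      have hnoT := hno.resolve_left fun h ↦ h y hy
      refine iff_of_true ⟨y, x, hy.1, hy.1.trans hxT.1.symm, hy.2, hxT.2,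
        fun z hz hzS ↦ .inl (hS.source_unique ⟨hz.trans hy.1, hzS⟩ hxS),
        fun z hz hzT ↦ absurd ⟨hz.symm.trans hxT.1, hzT⟩ (hnoT z)⟩ fun hsub ↦ ?_
      obtain ⟨-, b, -, hb⟩ := hsub.exists_sourceAt_and_sinkAt hS hT hxS hy
      exact hnoT b hb
    · have hnoS := not_exists.1 hsink
      exact iff_of_false (not_good_of_no_sink hnoS) (not_not.2 (subAt_of_no_sink hS hnoS))

lemma IsSinkEndAt.subAt_or_subAt (hS : S.IsString) (hT : T.IsString) (h : S.IsSinkEndAt T v) :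
    S.SubAt T v ∨ T.SubAt S v := by
  rcases h with ⟨x, y, y', hxS, hxT, hy, hy', -⟩ | ⟨-, -, -, hno⟩
  · rw [subAt_iff hS hT hxS hy hxT hy', subAt_iff hT hS hxT hy' hxS hy, Γ.gap_self, zero_add,
      zero_add]
    exact le_total _ _
  · exact hno.imp (subAt_of_no_source hS) (subAt_of_no_source hT)

lemma IsSourceEndAt.subAt_or_subAt (hS : S.IsString) (hT : T.IsString)
    (h : S.IsSourceEndAt T v) : S.SubAt T v ∨ T.SubAt S v := by
  rcases h with ⟨y, x, x', hyS, hyT, hx, hx', -⟩ | ⟨-, -, -, hno⟩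
  · have hxx' : x'.fst = x.fst := hx'.1.trans hx.1.symm
    have hsum := Γ.gap_add_gap hxx' (hx.1.trans hyS.1.symm)
    have hsum' := Γ.gap_add_gap hxx'.symm (hx'.1.trans hyT.1.symm)
    have hlt := Γ.gap_lt_per hxx'
    have hlt' := Γ.gap_lt_per hxx'.symm
    have hper := Γ.per_eq hxx'
    rw [subAt_iff hS hT hx hyS hx' hyT, subAt_iff hT hS hx' hyT hx hyS]
    omega
  · exact hno.imp (subAt_of_no_sink hS) (subAt_of_no_sink hT)

end TwoTermComplex
/-! ### Two diagrams with a connected intersection -/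

namespace BrauerTree.Part

variable {V : Type v} {Γ : BrauerTree V}

lemma inter_comm (D D' : Γ.Part) : D.inter D' = D'.inter D :=
  Part.ext (Set.inter_comm _ _) (Set.inter_comm _ _)

lemma Connected.exists_arrow {D : Γ.Part} (hD : D.Connected) {d : Γ.Arrow} (hd : d ∈ D.arrows)
    (hsrc : Γ.src d ∈ D.verts) {x : Γ.Edge} (hx : x ∈ D.verts) :
    ∃ d ∈ D.arrows, Γ.src d = x ∨ Γ.tgt d = x := by
  by_contra! hisolated
  have hclosed {a b : Γ.Edge}
      (h : Relation.EqvGen (fun a b ↦ ∃ d ∈ D.arrows, Γ.src d = a ∧ Γ.tgt d = b) a b) :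
      a = x ↔ b = x := by
    induction h with
    | rel a b h =>
      obtain ⟨d, hd, rfl, rfl⟩ := h
      exact iff_of_false (hisolated d hd).1 (hisolated d hd).2
    | refl => exact Iff.rfl
    | symm _ _ _ ih => exact ih.symm
    | trans _ _ _ _ _ ih ih' => exact ih.trans ih'
  exact (hisolated d hd).1 ((hclosed (hD.2 x hx _ hsrc)).1 rfl)

end BrauerTree.Part

namespace TwoTermComplex

variable {V : Type v} [Fintype V] {Γ : BrauerTree V} {K : Type u} [Field K]
variable {S T : TwoTermComplex Γ K}

lemma meet_comm (S T : TwoTermComplex Γ K) : S.meet T = T.meet S := Set.inter_comm _ _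

lemma right_notMem_left (hS : S.IsString) (hT : T.IsString)
    (hconn : (S.diagram.inter T.diagram).Connected) {d : Γ.Arrow} (hdS : d ∈ S.diagramArrows)
    (hdT : d ∈ T.diagramArrows) : ∀ x ∈ S.J, x ∉ T.I := by
  intro x hxS hxT
  obtain ⟨e, he, rfl | rfl⟩ := hconn.exists_arrow (d := d) ⟨hdS, hdT⟩
    ⟨.inr ⟨d, hdS, .inl rfl⟩, .inr ⟨d, hdT, .inl rfl⟩⟩ (x := x) ⟨.inl (.inr hxS), .inl (.inl hxT)⟩
  · exact hS.src_notMem_right he.1 hxS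
  · exact hT.tgt_notMem_left he.2 hxT

lemma meet_eq_singleton (hS : S.IsString) (hT : T.IsString)
    (hno : ∀ d : Γ.Arrow, Γ.src d ∈ S.marked → Γ.src d ∉ T.marked) {v : V}
    (hv : v ∈ S.meet T) : S.meet T = {v} :=
  Set.eq_singleton_iff_unique_mem.2 ⟨hv, hS.edgeConnected.induction_common hT.edgeConnected hv rfl
    fun d hdS hdT ↦ absurd hdT (hno d hdS)⟩

lemma exists_common_marked (hS : S.IsString) (hT : T.IsString) {z : Γ.Arrow}
    (hzS : Γ.src z ∈ S.marked) (hzT : Γ.src z ∈ T.marked) :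
    ∀ v ∈ S.meet T, ∃ d : Γ.Arrow, d.fst = v ∧ Γ.src d ∈ S.marked ∩ T.marked :=
  hS.edgeConnected.induction_common hT.edgeConnected (u := z.fst) ⟨mem_ends hzS, mem_ends hzT⟩
    ⟨z, rfl, hzS, hzT⟩
    fun d hdS hdT _ ↦ ⟨d.symm, rfl, by rw [Γ.src_symm]; exact ⟨hdS, hdT⟩⟩

lemma sourceAt_or_sinkAt (hopp : ∀ x ∈ S.J, x ∉ T.I) (hopp' : ∀ x ∈ T.J, x ∉ S.I) {v : V}
    {c : Γ.Arrow} (hcv : c.fst = v) (hc : Γ.src c ∈ S.marked ∩ T.marked) :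
    (S.SourceAt v c ∧ T.SourceAt v c) ∨ (S.SinkAt v c ∧ T.SinkAt v c) := by
  obtain ⟨hcS | hcS, hcT | hcT⟩ := hc
  · exact .inl ⟨⟨hcv, hcS⟩, hcv, hcT⟩
  · exact absurd hcS (hopp' _ hcT)
  · exact absurd hcT (hopp _ hcS)
  · exact .inr ⟨⟨hcv, hcS⟩, hcv, hcT⟩

section Ends

variable {d : Γ.Arrow}

lemma isSinkEndAt_of_tgt_mem_inter (hS : S.IsString) (hT : T.IsString)
    (huniq : ∀ d' ∈ S.diagramArrows ∩ T.diagramArrows, Γ.tgt d' = Γ.tgt d → d' = d)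
    (hJS : Γ.tgt d ∈ S.J) (hJT : Γ.tgt d ∈ T.J) :
    S.IsSinkEndAt T (Γ.next d).symm.fst := by
  obtain ⟨d', hd'⟩ := Γ.next.surjective (Γ.next d).symm
  have htgt : Γ.tgt d' = Γ.tgt d := by rw [BrauerTree.tgt, hd', Γ.src_symm]; rfl
  have hsinkS : S.SinkAt (Γ.next d).symm.fst (Γ.next d') :=
    ⟨by rw [hd'], show Γ.tgt d' ∈ S.J by rwa [htgt]⟩
  have hsinkT : T.SinkAt (Γ.next d).symm.fst (Γ.next d') :=
    ⟨by rw [hd'], show Γ.tgt d' ∈ T.J by rwa [htgt]⟩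
  refine .inr ⟨_, hsinkS, hsinkT, ?_⟩
  by_contra! ⟨⟨x, hx⟩, x', hx'⟩
  have heq : d' = d := huniq d' ⟨hS.prev_sink_mem_diagramArrows hx hsinkS,
    hT.prev_sink_mem_diagramArrows hx' hsinkT⟩ htgt
  exact Γ.ne_symm _ (heq ▸ hd')

lemma isSinkEndAt_of_tgt_mem_left (hS : S.IsString) (hT : T.IsString)
    (hcom : ∃ c, (S.SourceAt d.fst c ∧ T.SourceAt d.fst c) ∨
      (S.SinkAt d.fst c ∧ T.SinkAt d.fst c))
    (hdT : d ∈ T.diagramArrows) (hJS : Γ.tgt d ∈ S.J) (hJT : Γ.tgt d ∉ T.J) :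
    S.IsSinkEndAt T d.fst := by
  obtain ⟨c, ⟨hcS, hcT⟩ | ⟨hcS, hcT⟩⟩ := hcom
  · obtain ⟨-, y, -, hy, -⟩ := hT.mem_diagramArrows.1 hdT
    refine .inl ⟨c, Γ.next d, y, hcS, hcT, ⟨Γ.next_fst d, hJS⟩, hy, ?_⟩
    rintro rfl
    exact hJT hy.2
  · rw [hS.sink_unique hcS ⟨Γ.next_fst d, hJS⟩] at hcT
    exact absurd hcT.2 hJT

lemma exists_isSinkEndAt (hS : S.IsString) (hT : T.IsString)
    (hcom : ∀ v ∈ S.meet T, ∃ c, (S.SourceAt v c ∧ T.SourceAt v c) ∨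
      (S.SinkAt v c ∧ T.SinkAt v c))
    {x : Γ.Edge} (hx : (S.diagram.inter T.diagram).IsSinkEnd x) :
    ∃ v ∈ S.meet T, S.IsSinkEndAt T v := by
  obtain ⟨d, ⟨hdS, hdT⟩, rfl, huniq⟩ := hx
  have hmeet : d.fst ∈ S.meet T := ⟨hS.fst_mem_ends hdS, hT.fst_mem_ends hdT⟩
  obtain ⟨c, hc⟩ := hcom _ hmeet
  by_cases hJS : Γ.tgt d ∈ S.J <;> by_cases hJT : Γ.tgt d ∈ T.J
  · have hsrc : Γ.src (Γ.next d).symm = Γ.tgt d := Γ.src_symm _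
    exact ⟨_, ⟨mem_ends (.inr (hsrc ▸ hJS)), mem_ends (.inr (hsrc ▸ hJT))⟩,
      isSinkEndAt_of_tgt_mem_inter hS hT (fun d' hd' h ↦ huniq d' hd' (.inr h)) hJS hJT⟩
  · exact ⟨_, hmeet, isSinkEndAt_of_tgt_mem_left hS hT ⟨c, hc⟩ hdT hJS hJT⟩
  · exact ⟨_, hmeet,
      (isSinkEndAt_of_tgt_mem_left hT hS ⟨c, hc.imp .symm .symm⟩ hdS hJT hJS).symm⟩
  · exact absurd (huniq _ ⟨(hS.next_mem_or hdS).resolve_right hJS,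
      (hT.next_mem_or hdT).resolve_right hJT⟩ (.inl rfl)) (hS.next_ne hdS)

lemma isSourceEndAt_of_src_mem_inter (hS : S.IsString) (hT : T.IsString)
    (huniq : ∀ d' ∈ S.diagramArrows ∩ T.diagramArrows, Γ.src d' = Γ.src d → d' = d)
    (hIS : Γ.src d ∈ S.I) (hIT : Γ.src d ∈ T.I) : S.IsSourceEndAt T d.symm.fst := by
  have hsrc : Γ.src d.symm = Γ.src d := Γ.src_symm d
  have hsourceS : S.SourceAt d.symm.fst d.symm := ⟨rfl, hsrc ▸ hIS⟩
  have hsourceT : T.SourceAt d.symm.fst d.symm := ⟨rfl, hsrc ▸ hIT⟩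
  refine .inr ⟨_, hsourceS, hsourceT, ?_⟩
  by_contra! ⟨⟨y, hy⟩, y', hy'⟩
  exact Γ.ne_symm d (huniq d.symm ⟨hS.source_mem_diagramArrows hsourceS hy,
    hT.source_mem_diagramArrows hsourceT hy'⟩ hsrc).symm

lemma isSourceEndAt_of_src_mem_left (hS : S.IsString) (hT : T.IsString)
    (hcom : ∃ c, (S.SourceAt d.fst c ∧ T.SourceAt d.fst c) ∨
      (S.SinkAt d.fst c ∧ T.SinkAt d.fst c))
    (hdT : d ∈ T.diagramArrows) (hIS : Γ.src d ∈ S.I) (hIT : Γ.src d ∉ T.I) :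
    S.IsSourceEndAt T d.fst := by
  obtain ⟨c, ⟨hcS, hcT⟩ | ⟨hcS, hcT⟩⟩ := hcom
  · rw [hS.source_unique hcS ⟨rfl, hIS⟩] at hcT
    exact absurd hcT.2 hIT
  · obtain ⟨x, -, hx, -⟩ := hT.mem_diagramArrows.1 hdT
    exact .inl ⟨c, d, x, hcS, hcT, ⟨rfl, hIS⟩, hx, fun h ↦ hIT (h ▸ hx.2)⟩

lemma exists_isSourceEndAt (hS : S.IsString) (hT : T.IsString)
    (hcom : ∀ v ∈ S.meet T, ∃ c, (S.SourceAt v c ∧ T.SourceAt v c) ∨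
      (S.SinkAt v c ∧ T.SinkAt v c))
    {x : Γ.Edge} (hx : (S.diagram.inter T.diagram).IsSourceEnd x) :
    ∃ v ∈ S.meet T, S.IsSourceEndAt T v := by
  obtain ⟨d, ⟨hdS, hdT⟩, rfl, huniq⟩ := hx
  have hmeet : d.fst ∈ S.meet T := ⟨hS.fst_mem_ends hdS, hT.fst_mem_ends hdT⟩
  obtain ⟨c, hc⟩ := hcom _ hmeet
  by_cases hIS : Γ.src d ∈ S.I <;> by_cases hIT : Γ.src d ∈ T.I
  · have hsrc : Γ.src d.symm = Γ.src d := Γ.src_symm d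
    exact ⟨_, ⟨mem_ends (.inl (hsrc ▸ hIS)), mem_ends (.inl (hsrc ▸ hIT))⟩,
      isSourceEndAt_of_src_mem_inter hS hT (fun d' hd' h ↦ huniq d' hd' (.inl h)) hIS hIT⟩
  · exact ⟨_, hmeet, isSourceEndAt_of_src_mem_left hS hT ⟨c, hc⟩ hdT hIS hIT⟩
  · exact ⟨_, hmeet,
      (isSourceEndAt_of_src_mem_left hT hS ⟨c, hc.imp .symm .symm⟩ hdS hIT hIS).symm⟩
  · obtain ⟨d', rfl⟩ := Γ.next.surjective d
    have hd'S := (hS.mem_or_of_next_mem hdS).resolve_right hIS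
    have hd'T := (hT.mem_or_of_next_mem hdT).resolve_right hIT
    exact absurd (huniq d' ⟨hd'S, hd'T⟩ (.inr rfl)).symm (hS.next_ne hd'S)

end Ends

lemma eq_of_not_agreeAt (hS : S.IsString) (hopp : ∀ x ∈ S.J, x ∉ T.I)
    (hopp' : ∀ x ∈ T.J, x ∉ S.I) {v : V} (hv : ¬ S.AgreeAt T v) {d d' : Γ.Arrow} (hd : d.fst = v)
    (hd' : d'.fst = v) (hmem : Γ.src d ∈ S.marked ∩ T.marked)
    (hmem' : Γ.src d' ∈ S.marked ∩ T.marked) : d = d' := by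
  rcases sourceAt_or_sinkAt hopp hopp' hd hmem with h | h <;>
    rcases sourceAt_or_sinkAt hopp hopp' hd' hmem' with h' | h'
  · exact hS.source_unique h.1 h'.1
  · exact absurd ⟨d, d', h.1, h.2, h'.1, h'.2⟩ hv
  · exact absurd ⟨d', d, h'.1, h'.2, h.1, h.2⟩ hv
  · exact hS.sink_unique h.1 h'.1

/-- The vertices at which the diagrams do not agree are leaves of the tree formed by the common
edges, which has no vertices of degree three. -/
lemma agreeAt_or_eq_or_eq (hS : S.IsString) (hT : T.IsString) (hopp : ∀ x ∈ S.J, x ∉ T.I)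
    (hopp' : ∀ x ∈ T.J, x ∉ S.I) {s r v : V} (hs : s ∈ S.meet T) (hr : r ∈ S.meet T)
    (hsink : S.IsSinkEndAt T s) (hsource : S.IsSourceEndAt T r) (hv : v ∈ S.meet T) :
    S.AgreeAt T v ∨ v = s ∨ v = r := by
  classical
  by_contra! ⟨hagree, hvs, hvr⟩
  have hsr : s ≠ r := fun h ↦ hsink.not_isSourceEndAt hS hT (h ▸ hsource)
  have hmeet : ∀ u ∈ ({s, r, v} : Finset V), u ∈ S.meet T := by
    simp [hs, hr, hv]
  have hdisagree : ∀ u ∈ ({s, r, v} : Finset V), ¬ S.AgreeAt T u := by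
    simp only [Finset.mem_insert, Finset.mem_singleton, forall_eq_or_imp, forall_eq]
    exact ⟨fun h ↦ h.not_isSinkEndAt hS hT hsink, fun h ↦ h.not_isSourceEndAt hS hT hsource, hagree⟩
  have hcard := hS.edgeConnected.no_three_leaves hT.edgeConnected (I := {x | x ∈ S.I})
    (fun d d' hfst hd hd' hside ↦ by
      by_cases hdI : Γ.src d ∈ S.I
      · exact hS.source_unique (v := d.fst) ⟨rfl, hdI⟩ ⟨hfst.symm, hside.1 hdI⟩
      · exact hS.sink_unique (v := d.fst) ⟨rfl, hd.1.resolve_left hdI⟩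
          ⟨hfst.symm, hd'.1.resolve_left fun h ↦ hdI (hside.2 h)⟩)
    hmeet fun u hu d d' ↦ eq_of_not_agreeAt hS hopp hopp' (hdisagree u hu)
  rw [Finset.card_eq_three.2 ⟨s, r, v, hsr, hvs.symm, hvr.symm, rfl⟩] at hcard
  exact absurd hcard (by decide)

lemma forall_meet_iff {s r : V} (hs : s ∈ S.meet T) (hr : r ∈ S.meet T)
    (hends : ∀ v ∈ S.meet T, S.AgreeAt T v ∨ v = s ∨ v = r) {P : V → Prop}
    (hP : ∀ v, S.AgreeAt T v → P v) : (∀ v ∈ S.meet T, P v) ↔ P s ∧ P r := by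
  refine ⟨fun h ↦ ⟨h s hs, h r hr⟩, fun ⟨hPs, hPr⟩ v hv ↦ ?_⟩
  rcases hends v hv with h | rfl | rfl
  · exact hP v h
  · exact hPs
  · exact hPr

lemma exists_meet_not_iff {s r : V} (hs : s ∈ S.meet T) (hr : r ∈ S.meet T)
    (hends : ∀ v ∈ S.meet T, S.AgreeAt T v ∨ v = s ∨ v = r) {P : V → Prop}
    (hP : ∀ v, S.AgreeAt T v → P v) : (∃ v ∈ S.meet T, ¬ P v) ↔ ¬ P s ∨ ¬ P r := by
  simpa only [not_forall, exists_prop, not_and_or] using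
    not_congr (forall_meet_iff hs hr hends hP)

lemma exists_not_good_iff_contained_of_disjoint (hS : S.IsString) (hT : T.IsString)
    (hno : ∀ d : Γ.Arrow, Γ.src d ∈ S.marked → Γ.src d ∉ T.marked) {d : Γ.Arrow}
    (hdS : d ∈ S.diagramArrows) (hdT : d ∈ T.diagramArrows) :
    ((∃ v ∈ S.meet T, ¬ S.Good T v) ∧ ∃ v ∈ T.meet S, ¬ T.Good S v) ↔
      ((S.restriction T).Contained (T.restriction S) ∨
        (T.restriction S).Contained (S.restriction T)) := by
  have hmeet : d.fst ∈ S.meet T := ⟨hS.fst_mem_ends hdS, hT.fst_mem_ends hdT⟩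
  have hsingle := meet_eq_singleton hS hT hno hmeet
  obtain ⟨x, y, hx, hy, -⟩ := hS.mem_diagramArrows.1 hdS
  obtain ⟨x', y', hx', hy', -⟩ := hT.mem_diagramArrows.1 hdT
  have htouchS : ∀ v ∈ S.meet T, S.TouchesAt T v := by
    rw [hsingle]
    rintro _ rfl
    exact .inr ⟨x, y, hx, hy⟩
  have htouchT : ∀ v ∈ T.meet S, T.TouchesAt S v := by
    rw [meet_comm, hsingle]
    rintro _ rfl
    exact .inr ⟨x', y', hx', hy'⟩
  rw [contained_iff hS hT ⟨_, hmeet⟩ htouchS,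
    contained_iff hT hS (meet_comm S T ▸ ⟨_, hmeet⟩) htouchT, meet_comm T S, hsingle]
  simpa only [Set.mem_singleton_iff, exists_eq_left, forall_eq]
    using not_good_iff_subAt hS hT hno hdS hdT

lemma exists_not_good_iff_contained_of_common_marked (hS : S.IsString) (hT : T.IsString)
    (hopp : ∀ x ∈ S.J, x ∉ T.I) (hopp' : ∀ x ∈ T.J, x ∉ S.I) {z : Γ.Arrow}
    (hzS : Γ.src z ∈ S.marked) (hzT : Γ.src z ∈ T.marked)
    {x y : Γ.Edge} (hx : (S.diagram.inter T.diagram).IsSinkEnd x)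
    (hy : (S.diagram.inter T.diagram).IsSourceEnd y) :
    ((∃ v ∈ S.meet T, ¬ S.Good T v) ∧ ∃ v ∈ T.meet S, ¬ T.Good S v) ↔
      ((S.restriction T).Contained (T.restriction S) ∨
        (T.restriction S).Contained (S.restriction T)) := by
  have hmark := exists_common_marked hS hT hzS hzT
  have hmark' := exists_common_marked hT hS hzT hzS
  have hcom : ∀ v ∈ S.meet T, ∃ c, (S.SourceAt v c ∧ T.SourceAt v c) ∨
      (S.SinkAt v c ∧ T.SinkAt v c) := fun v hv ↦
    (hmark v hv).imp fun c hc ↦ sourceAt_or_sinkAt hopp hopp' hc.1 hc.2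
  obtain ⟨s, hs, hsink⟩ := exists_isSinkEndAt hS hT hcom hx
  obtain ⟨r, hr, hsource⟩ := exists_isSourceEndAt hS hT hcom hy
  have hends := fun v ↦ agreeAt_or_eq_or_eq hS hT hopp hopp' hs hr hsink hsource (v := v)
  rw [contained_iff hS hT ⟨s, hs⟩ fun v hv ↦ .inl (hmark v hv),
    contained_iff hT hS (meet_comm S T ▸ ⟨s, hs⟩) fun v hv ↦ .inl (hmark' v hv), meet_comm T S,
    forall_meet_iff hs hr hends fun v h ↦ h.subAt hS hT,
    forall_meet_iff hs hr hends fun v h ↦ h.symm.subAt hT hS]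
  have hgood := exists_meet_not_iff hs hr hends fun v h ↦ h.good hS hT
  have hgood' := exists_meet_not_iff hs hr hends fun v h ↦ h.symm.good hT hS
  rw [hsink.good_iff_not_subAt hS hT, hsource.good_iff_not_subAt hS hT] at hgood
  rw [hsink.symm.good_iff_not_subAt hT hS, hsource.symm.good_iff_not_subAt hT hS] at hgood'
  have hnested := hsink.subAt_or_subAt hS hT
  have hnested' := hsource.subAt_or_subAt hS hT
  rw [hgood, hgood']
  tauto

variable [HasDerivedCategory.{w} (ModuleCat.{max u v} (Γ.Alg K))]

lemma isString_of_homZero (hmin : T.IsMinimal)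
    (hcok : Indecomposable (ModuleCat.of (Γ.Alg K) T.Cok)) (h : T.HomZero T 1) : T.IsString :=
  ⟨T.isZigzag hmin h hcok, T.mat_ne_zero hmin h hcok⟩

theorem homZero_and_homZero_iff_contained (hS : S.IsString) (hT : T.IsString)
    (hconn : (S.diagram.inter T.diagram).Connected)
    {x y : Γ.Edge} (hx : (S.diagram.inter T.diagram).IsSinkEnd x)
    (hy : (S.diagram.inter T.diagram).IsSourceEnd y) :
    (S.HomZero T (-1) ∧ T.HomZero S (-1)) ↔
      ((S.restriction T).Contained (T.restriction S) ∨
        (T.restriction S).Contained (S.restriction T)) := by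
  obtain ⟨d, ⟨hdS, hdT⟩, -⟩ := id hx
  have hopp := right_notMem_left hS hT hconn hdS hdT
  have hopp' := right_notMem_left hT hS (BrauerTree.Part.inter_comm S.diagram _ ▸ hconn) hdT hdS
  have hmeet : (S.meet T).Nonempty := ⟨d.fst, hS.fst_mem_ends hdS, hT.fst_mem_ends hdT⟩
  rw [homZero_iff_exists_not_good hS hT hopp (fun x hxS hxT ↦ hopp' x hxT hxS) hmeet,
    homZero_iff_exists_not_good hT hS hopp' (fun x hxT hxS ↦ hopp x hxS hxT)
      (meet_comm S T ▸ hmeet)]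
  by_cases hno : ∀ d : Γ.Arrow, Γ.src d ∈ S.marked → Γ.src d ∉ T.marked
  · exact exists_not_good_iff_contained_of_disjoint hS hT hno hdS hdT
  · push Not at hno
    obtain ⟨z, hzS, hzT⟩ := hno
    exact exists_not_good_iff_contained_of_common_marked hS hT hopp hopp' hzS hzT hx hy

end TwoTermComplex

theorem hom_vanishes_iff_nested_restrictions_sink_source_general
    {K : Type u} [Field K] {V : Type v} [Fintype V] (Γ : BrauerTree V)
    [HasDerivedCategory.{w} (ModuleCat.{max u v} (Γ.Alg K))]
    (Ti Tj : TwoTermComplex Γ K)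
    (hi : Ti.HomZero Ti 1) (hj : Tj.HomZero Tj 1) (hmini : Ti.IsMinimal) (hminj : Tj.IsMinimal)
    (hcoki : Indecomposable (ModuleCat.of (Γ.Alg K) Ti.Cok))
    (hcokj : Indecomposable (ModuleCat.of (Γ.Alg K) Tj.Cok))
    (hconn : (Ti.diagram.inter Tj.diagram).Connected)
    (hends : ∃ x y, (Ti.diagram.inter Tj.diagram).IsSinkEnd x ∧
      (Ti.diagram.inter Tj.diagram).IsSourceEnd y) :
    (Ti.HomZero Tj (-1) ∧ Tj.HomZero Ti (-1)) ↔
      ((Ti.restriction Tj).Contained (Tj.restriction Ti) ∨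
        (Tj.restriction Ti).Contained (Ti.restriction Tj)) := by
  obtain ⟨x, y, hx, hy⟩ := hends
  exact TwoTermComplex.homZero_and_homZero_iff_contained
    (TwoTermComplex.isString_of_homZero hmini hcoki hi)
    (TwoTermComplex.isString_of_homZero hminj hcokj hj) hconn hx hy

theorem hom_vanishes_iff_nested_restrictions_sink_source
    {K : Type u} [Field K] [IsAlgClosed K] {V : Type v} [Fintype V] (Γ : BrauerTree V)
    [HasDerivedCategory.{w} (ModuleCat.{max u v} (Γ.Alg K))]
    (Ti Tj : TwoTermComplex Γ K)
    (hi : Ti.IsIndecPartialTilting) (hj : Tj.IsIndecPartialTilting)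
    (hpi : Ti.IsPresentation) (hpj : Tj.IsPresentation)
    (hconn : (Ti.diagram.inter Tj.diagram).Connected)
    (hmore : (Ti.diagram.inter Tj.diagram).verts.Nontrivial)
    (hends : ∃ x y, (Ti.diagram.inter Tj.diagram).IsSinkEnd x ∧
      (Ti.diagram.inter Tj.diagram).IsSourceEnd y) :
    (Ti.HomZero Tj (-1) ∧ Tj.HomZero Ti (-1)) ↔
      ((Ti.restriction Tj).Contained (Tj.restriction Ti) ∨
        (Tj.restriction Ti).Contained (Ti.restriction Tj)) :=
  hom_vanishes_iff_nested_restrictions_sink_source_general Γ Ti Tj (hi.2 1 one_ne_zero)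
    (hj.2 1 one_ne_zero) hpi.1 hpj.1 hpi.2.1 hpj.2.1 hconn hends
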